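/- arXiv:0705.0821 — 2 statements merged into one kernel-verified Lean document; each statement's English description precedes it below -/
import Mathlib

section
/- Suppose n = 2m+1 ≥ 3 and p divides m+2. An F-linear derivation γ : K(n) → K(n) of the contact algebra is inner (i.e. γ = ad z for some z ∈ K(n)) if and only if the coefficient of the monomial x^{τ−ε_n} in the expansion of γ(1) with respect to the monomial basis {x^a : a ≠ τ} of K(n) is zero. -/
/-!
Write `n = 2m + 1` and let `τ` be the top exponent. Since `p ∣ m + 2`, the algebra `K(n)` consists
of the elements of `A(n)` without `x^τ`-term, and `ad x^τ` is an outer derivation of it. As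
`[z, 1] = -2 D_n(z)`, the coefficient of `x^{τ - ε_n}` in `[z, 1]` is a nonzero multiple of the
`x^τ`-coefficient of `z`. So for `z ∈ K(n)` it vanishes, which is the direct implication
(`coeffT_eq_zero_of_inner`).

For the converse, `γ` is changed by inner derivations until it vanishes.

* `exists_normalise_one`: the Leibniz rule on `[1, x_i] = 0` and `[1, x_n] = 2` shows that
  `γ(1)` has no monomial with `x_n`-exponent `p - 1`, so `γ(1) = [z, 1]` for some `z`, by
  integrating in `x_n`. The hypothesis on the coefficient of `x^{τ - ε_n}` says that `z ∈ K(n)`.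
* `exists_normalise_xv`: if `γ(1) = 0`, then the `γ(x_i)`, `i < n`, do not involve `x_n`, and the
  relations among the `[x_i, x_j]` say that `σ(i) γ(x_{i'})`, `i < n`, is a closed family.
  By the Poincaré lemma for truncated polynomials (`poincare`) it is a gradient; the obstruction,
  namely exponents `p - 1` in the variable of integration, is ruled out with `[x_i, x_n] = x_i`.
* `exists_normalise_xlast`: if `γ` kills `1` and all `x_i` with `i < n`, then `γ(x_n)` is a
  constant, removed by a multiple of `ad 1`.

It remains to see that a derivation `γ` killing `1` and all variables vanishes on every `x^a`,
`a ≠ τ` (`map_xpow_eq_zero`), by induction on the weight `∑_{i<n} a_i + 2 a_n`. Brackets with `1`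
and `x_i` show that `γ(x^a) = c` is a constant, and the bracket with `x_n` that the weight of `a`
annihilates `c` (`KillsBelow.const`). So only weights divisible by `p` matter. There, constants
being killed by `ad (x_i x_j)`, the map `γ` vanishes on every `[x_i x_j, x^b]`. These brackets
reach every monomial of such a weight (`KillsBelow.unbalanced`, `KillsBelow.mixed`) except
constants and the one with `a_i = p - 1` for all `i < n`, whose weight forces `a_n = p - 2`. That
last monomial, `x^{τ - ε_n}`, is reached by brackets with `x_i x_n` (`KillsBelow.top`).
-/

set_option maxHeartbeats 1000000
set_option synthInstance.maxHeartbeats 400000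

open scoped BigOperators
noncomputable section

variable (F : Type*) [Field F] (p n : ℕ)

/-- The ideal `(X_1^p, …, X_n^p)` of the polynomial ring. -/
def truncIdeal : Ideal (MvPolynomial (Fin n) F) :=
  Ideal.span (Set.range fun i : Fin n => MvPolynomial.X i ^ p)

/-- The truncated polynomial algebra `A(n) = F[x_1,…,x_n]/(x_1^p,…,x_n^p)`. -/
abbrev TruncP := MvPolynomial (Fin n) F ⧸ truncIdeal F p n

/-- The monomial `x^a` in `A(n)`. -/
def xpow (a : Fin n → ℕ) : TruncP F p n :=
  Ideal.Quotient.mk _ (MvPolynomial.monomial (Finsupp.equivFunOnFinite.symm a) 1)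

/-- Lift an `F`-linear map killing the truncation ideal to the quotient. -/
def liftF {N : Type*} [AddCommGroup N] [Module F N]
    (f : MvPolynomial (Fin n) F →ₗ[F] N)
    (h : (truncIdeal F p n).restrictScalars F ≤ LinearMap.ker f) :
    TruncP F p n →ₗ[F] N :=
  (Submodule.liftQ ((truncIdeal F p n).restrictScalars F) f h) ∘ₗ
    (Submodule.Quotient.restrictScalarsEquiv F (truncIdeal F p n)).symm.toLinearMap

lemma liftF_mk {N : Type*} [AddCommGroup N] [Module F N]
    (f : MvPolynomial (Fin n) F →ₗ[F] N)
    (h : (truncIdeal F p n).restrictScalars F ≤ LinearMap.ker f)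
    (x : MvPolynomial (Fin n) F) :
    liftF F p n f h (Ideal.Quotient.mk _ x) = f x := by
  simp only [liftF, LinearMap.coe_comp, Function.comp_apply, LinearEquiv.coe_coe]
  have : (Ideal.Quotient.mk (truncIdeal F p n)) x = Submodule.Quotient.mk x := rfl
  rw [this, Submodule.Quotient.restrictScalarsEquiv_symm_mk, Submodule.liftQ_apply]

lemma truncIdeal_pderiv_mem [CharP F p] (j : Fin n) {f : MvPolynomial (Fin n) F}
    (hf : f ∈ truncIdeal F p n) :
    Ideal.Quotient.mk (truncIdeal F p n) (MvPolynomial.pderiv j f) = 0 := by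
  classical
  let K : Ideal (MvPolynomial (Fin n) F) :=
    { carrier := {g | Ideal.Quotient.mk (truncIdeal F p n) (MvPolynomial.pderiv j g) = 0 ∧
        Ideal.Quotient.mk (truncIdeal F p n) g = 0},
      add_mem' := by
        rintro a b ⟨ha1, ha2⟩ ⟨hb1, hb2⟩
        refine ⟨?_, ?_⟩
        · rw [map_add, map_add, ha1, hb1, add_zero]
        · rw [map_add, ha2, hb2, add_zero]
      zero_mem' := ⟨by rw [map_zero, map_zero], by rw [map_zero]⟩
      smul_mem' := by
        rintro c x ⟨hx1, hx2⟩
        refine ⟨?_, ?_⟩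
        · have hL : MvPolynomial.pderiv j (c * x)
              = c * MvPolynomial.pderiv j x + x * MvPolynomial.pderiv j c := by
            have := (MvPolynomial.pderiv j).leibniz c x
            simpa [smul_eq_mul, mul_comm] using this
          rw [smul_eq_mul, hL]
          rw [map_add, map_mul, map_mul, hx1, hx2, mul_zero, zero_mul, add_zero]
        · rw [smul_eq_mul, map_mul, hx2, mul_zero] }
  have hle : truncIdeal F p n ≤ K := by
    rw [truncIdeal, Ideal.span_le]
    rintro _ ⟨i, rfl⟩
    refine ⟨?_, ?_⟩
    · have hgen : MvPolynomial.pderiv j (MvPolynomial.X (R := F) i ^ p) = 0 := by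
        rw [MvPolynomial.X_pow_eq_monomial, MvPolynomial.pderiv_monomial]
        rcases eq_or_ne i j with h | h
        · subst h
          simp [Finsupp.single_apply, CharP.cast_eq_zero F p]
        · simp [Finsupp.single_apply, h]
      rw [hgen, map_zero]
    · exact Ideal.Quotient.eq_zero_iff_mem.mpr (Ideal.subset_span ⟨i, rfl⟩)
  exact (hle hf).1

lemma truncIdeal_support {f : MvPolynomial (Fin n) F} (hf : f ∈ truncIdeal F p n) :
    ∀ d ∈ f.support, ∃ i, p ≤ d i := by
  classical
  let K : Ideal (MvPolynomial (Fin n) F) :=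
    { carrier := {g | ∀ d ∈ g.support, ∃ i, p ≤ d i},
      add_mem' := by
        intro a b ha hb d hd
        rcases Finset.mem_union.mp (MvPolynomial.support_add hd) with h | h
        · exact ha d h
        · exact hb d h
      zero_mem' := by simp
      smul_mem' := by
        intro c x hx d hd
        rw [smul_eq_mul] at hd
        obtain ⟨d1, hd1, d2, hd2, rfl⟩ := Finset.mem_add.mp (MvPolynomial.support_mul c x hd)
        obtain ⟨i, hi⟩ := hx d2 hd2
        exact ⟨i, le_trans hi (by simp)⟩ }
  have hle : truncIdeal F p n ≤ K := by
    rw [truncIdeal, Ideal.span_le]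
    rintro _ ⟨i, rfl⟩ d hd
    simp only [MvPolynomial.X_pow_eq_monomial] at hd
    rw [MvPolynomial.support_monomial] at hd
    simp only [one_ne_zero, if_false] at hd
    rcases Finset.mem_singleton.mp hd with rfl
    exact ⟨i, by simp⟩
  exact hle hf

/-- The coefficient of `x^a` (for `a` componentwise `< p`) of an element of `A(n)`,
as a linear functional. For `a` not in the box this is defined to be `0`. -/
def coeffT (a : Fin n → ℕ) : TruncP F p n →ₗ[F] F :=
  if h : ∀ i, a i < p then
    liftF F p n
      { toFun := fun f => f.coeff (Finsupp.equivFunOnFinite.symm a),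
        map_add' := fun f g => MvPolynomial.coeff_add _ f g,
        map_smul' := fun c f => MvPolynomial.coeff_smul _ c f }
      (by
        intro f hf
        have hf' : f ∈ truncIdeal F p n := hf
        simp only [LinearMap.mem_ker, LinearMap.coe_mk, AddHom.coe_mk]
        by_contra hne
        have hmem : Finsupp.equivFunOnFinite.symm a ∈ f.support :=
          MvPolynomial.mem_support_iff.mpr hne
        obtain ⟨i, hi⟩ := truncIdeal_support F p n hf' _ hmem
        have heq : (Finsupp.equivFunOnFinite.symm a) i = a i := rfl
        have h2 := h i
        rw [heq] at hi
        omega)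
  else 0

/-- The Jacobson–Witt algebra `W(n) = Der_F A(n)`. -/
abbrev Witt := Derivation F (TruncP F p n) (TruncP F p n)

def DjL [CharP F p] (j : Fin n) : TruncP F p n →ₗ[F] TruncP F p n :=
  liftF F p n
    ((Ideal.Quotient.mkₐ F (truncIdeal F p n)).toLinearMap ∘ₗ (MvPolynomial.pderiv j).toLinearMap)
    (by
      intro f hf
      have hf' : f ∈ truncIdeal F p n := hf
      simp only [LinearMap.mem_ker, LinearMap.coe_comp, Function.comp_apply,
        AlgHom.toLinearMap_apply, Ideal.Quotient.mkₐ_eq_mk, Derivation.coeFn_coe]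
      exact truncIdeal_pderiv_mem F p n j hf')

lemma DjL_mk [CharP F p] (j : Fin n) (f : MvPolynomial (Fin n) F) :
    DjL F p n j (Ideal.Quotient.mk _ f) = Ideal.Quotient.mk _ (MvPolynomial.pderiv j f) := by
  rw [DjL, liftF_mk]
  simp

/-- The partial derivative `D_j = ∂/∂x_j`, as a derivation of `A(n)`. -/
def Dj [CharP F p] (j : Fin n) : Witt F p n where
  toLinearMap := DjL F p n j
  map_one_eq_zero' := by
    have h1 : (1 : TruncP F p n) = Ideal.Quotient.mk _ (1 : MvPolynomial (Fin n) F) :=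
      (map_one _).symm
    rw [LinearMap.coe_mk] at *
    show DjL F p n j 1 = 0
    rw [h1, DjL_mk]
    simp
  leibniz' := by
    intro a b
    obtain ⟨x, rfl⟩ := Ideal.Quotient.mk_surjective a
    obtain ⟨y, rfl⟩ := Ideal.Quotient.mk_surjective b
    show DjL F p n j _ = _ • DjL F p n j _ + _ • DjL F p n j _
    rw [← map_mul, DjL_mk, DjL_mk, DjL_mk, smul_eq_mul, smul_eq_mul, ← map_mul, ← map_mul,
      ← map_add]
    congr 1
    have := (MvPolynomial.pderiv j).leibniz x y
    simpa [smul_eq_mul] using this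
section Cochains

variable (F : Type*) [Field F] {L : Type*} [AddCommGroup L] [Module F L]

/-- A map of two arguments which is `F`-linear in each argument. -/
def IsBilinear (ψ : L → L → L) : Prop :=
  (∀ x, IsLinearMap F (ψ x)) ∧ ∀ y, IsLinearMap F fun x => ψ x y

/-- A 2-cochain with adjoint coefficients: an alternating `F`-bilinear map. -/
def IsCochain (ψ : L → L → L) : Prop :=
  IsBilinear F ψ ∧ ∀ x, ψ x x = 0

/-- A 2-cocycle with adjoint coefficients, for the bracket `B`. -/
def IsCocycle (B : L → L → L) (ψ : L → L → L) : Prop :=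
  IsCochain F ψ ∧ ∀ x y z,
    B x (ψ y z) - B y (ψ x z) + B z (ψ x y)
      - ψ (B x y) z + ψ (B x z) y - ψ (B y z) x = 0

/-- A 2-coboundary with adjoint coefficients, for the bracket `B`. -/
def IsCoboundary (B : L → L → L) (ψ : L → L → L) : Prop :=
  ∃ φ : L →ₗ[F] L, ∀ x y, ψ x y = B x (φ y) - B y (φ x) - φ (B x y)

/-- A 2-cocycle of a subspace `V` (closed under the bracket `B` of the ambient space),
with adjoint coefficients.  The cochain is recorded as an everywhere-defined bilinear
map preserving `V`; only its restriction to `V` is relevant. -/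
def IsCocycleOn (V : Submodule F L) (B : L → L → L) (ψ : L → L → L) : Prop :=
  IsBilinear F ψ ∧ (∀ x ∈ V, ∀ y ∈ V, ψ x y ∈ V) ∧ (∀ x ∈ V, ψ x x = 0) ∧
    ∀ x ∈ V, ∀ y ∈ V, ∀ z ∈ V,
      B x (ψ y z) - B y (ψ x z) + B z (ψ x y)
        - ψ (B x y) z + ψ (B x z) y - ψ (B y z) x = 0

/-- A 2-coboundary of a subspace `V`, with adjoint coefficients. -/
def IsCoboundaryOn (V : Submodule F L) (B : L → L → L) (ψ : L → L → L) : Prop :=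
  ∃ φ : L →ₗ[F] L, (∀ x ∈ V, φ x ∈ V) ∧
    ∀ x ∈ V, ∀ y ∈ V, ψ x y = B x (φ y) - B y (φ x) - φ (B x y)

/-- A derivation of a subspace `V` closed under the bracket `B`:
an `F`-linear map preserving `V` and satisfying the Leibniz rule on `V`. -/
def IsDerivationOn (V : Submodule F L) (B : L → L → L) (γ : L →ₗ[F] L) : Prop :=
  (∀ x ∈ V, γ x ∈ V) ∧ ∀ x ∈ V, ∀ y ∈ V, γ (B x y) = B (γ x) y + B x (γ y)

/-- An inner derivation of a subspace `V`: a map agreeing on `V` with `ad z = B z ·`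
for some `z ∈ V`. -/
def IsInnerOn (V : Submodule F L) (B : L → L → L) (δ : L → L) : Prop :=
  ∃ z ∈ V, ∀ y ∈ V, δ y = B z y

/-- An inner derivation: `δ = ad z = B z ·` for some `z`. -/
def IsInner (B : L → L → L) (δ : L → L) : Prop := ∃ z, ∀ y, δ y = B z y

/-- The squaring `Sq(γ)(x,y) = ∑_{i=1}^{p-1} [γ^i(x), γ^{p-i}(y)]/(i!·(p-i)!)`
of an operator `γ`, relative to the bracket `B`. -/
def Squaring (p : ℕ) (B : L → L → L) (γ : L → L) : L → L → L := fun x y =>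
  ∑ i ∈ Finset.Ioo 0 p,
    (((Nat.factorial i * Nat.factorial (p - i) : ℕ) : F))⁻¹ • B (γ^[i] x) (γ^[p - i] y)

/-- `Sq(z) := Sq(ad z)` for an element `z`. -/
def SqE (p : ℕ) (B : L → L → L) (z : L) : L → L → L :=
  Squaring F p B (fun y => B z y)

/-- The Hochschild operator
`H_ψ(x)(y) = ∑_{j=0}^{p-1} (ad x)^j (ψ(x, (ad x)^{p-1-j}(y))) − ψ(x^{[p]}, y)`,
for the bracket `B`, the 2-cochain `ψ`, and the chosen `p`-th power `xp` of `x`. -/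
def HOp (p : ℕ) (B : L → L → L) (ψ : L → L → L) (x xp : L) : L → L := fun y =>
  (∑ j ∈ Finset.range p, (fun z => B x z)^[j] (ψ x ((fun z => B x z)^[p - 1 - j] y)))
    - ψ xp y

end Cochains

section Symplectic

variable (F : Type*) [Field F] (m : ℕ)

/-- The sign `σ(j)` for `1 ≤ j ≤ 2m`: `1` if `j ≤ m` and `−1` if `j > m`. -/
def sg (j : Fin (2 * m)) : F := if (j : ℕ) < m then 1 else -1

/-- The conjugate index `j' = j ± m`. -/
def cj (j : Fin (2 * m)) : Fin (2 * m) :=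
  if h : (j : ℕ) < m then ⟨(j : ℕ) + m, by omega⟩
  else ⟨(j : ℕ) - m, by have := j.isLt; omega⟩

end Symplectic

section Contact

variable (F : Type*) [Field F] (p m : ℕ) [CharP F p]

/-- The operator `D_H(f)(g) = ∑_{j=1}^{2m} σ(j)·D_j(f)·D_{j'}(g)` on `A(2m+1)`. -/
def DHK (f g : TruncP F p (2 * m + 1)) : TruncP F p (2 * m + 1) :=
  ∑ j : Fin (2 * m),
    sg F m j • (Dj F p (2 * m + 1) j.castSucc f * Dj F p (2 * m + 1) (cj m j).castSucc g)

/-- The Euler-type operator `E(g) = ∑_{i=1}^{2m} x_i D_i(g) + 2 x_n D_n(g) − 2g`,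
so that `E(x^b) = deg(x^b)·x^b` for the contact grading. -/
def EulK (g : TruncP F p (2 * m + 1)) : TruncP F p (2 * m + 1) :=
  (∑ j : Fin (2 * m),
      xpow F p (2 * m + 1) (Pi.single j.castSucc 1) * Dj F p (2 * m + 1) j.castSucc g)
    + (2 : TruncP F p (2 * m + 1)) *
        (xpow F p (2 * m + 1) (Pi.single (Fin.last (2 * m)) 1) *
          Dj F p (2 * m + 1) (Fin.last (2 * m)) g)
    - (2 : TruncP F p (2 * m + 1)) * g

/-- The contact bracket on `K'(n) = A(n)`, `n = 2m+1`:
`[f,g] = D_H(f)(g) + D_n(f)·E(g) − D_n(g)·E(f)`, which on monomials is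
`[x^a, x^b] = D_H(x^a)(x^b) + (a_n·deg(x^b) − b_n·deg(x^a))·x^{a+b−ε_n}`. -/
def Kbr (f g : TruncP F p (2 * m + 1)) : TruncP F p (2 * m + 1) :=
  DHK F p m f g
    + Dj F p (2 * m + 1) (Fin.last (2 * m)) f * EulK F p m g
    - Dj F p (2 * m + 1) (Fin.last (2 * m)) g * EulK F p m f

/-- The contact algebra `K(n) = [K'(n), K'(n)]`: all of `K'(n)` if `p ∤ (m+2)`, and
the span of the monomials `x^a`, `a ≠ τ`, if `p ∣ (m+2)`. -/
def Ksub : Submodule F (TruncP F p (2 * m + 1)) :=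
  if p ∣ (m + 2) then
    Submodule.span F
      {f | ∃ a : Fin (2 * m + 1) → ℕ,
        (∀ i, a i < p) ∧ a ≠ (fun _ => p - 1) ∧ f = xpow F p (2 * m + 1) a}
  else ⊤

open scoped Classical in
/-- The `[p]`-th power of the monomial `x^a` in `K(n)`: `x^a` itself if
`x^a = x_i x_{i'}` (`1 ≤ i ≤ m`) or `x^a = x_n`, and `0` otherwise. -/
noncomputable def KpPow (a : Fin (2 * m + 1) → ℕ) : TruncP F p (2 * m + 1) :=
  if (∃ i : Fin (2 * m), (i : ℕ) < m ∧
        a = Pi.single i.castSucc 1 + Pi.single (cj m i).castSucc 1)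
      ∨ a = Pi.single (Fin.last (2 * m)) 1
  then xpow F p (2 * m + 1) a else 0

end Contact

namespace ContactAux

/-! ### Coefficients, derivatives and the Poincaré lemma in `A(n)` -/

section Coefficients

variable {F : Type*} [Field F] {p n : ℕ}

lemma coeffT_mk {a : Fin n → ℕ} (ha : ∀ i, a i < p) (q : MvPolynomial (Fin n) F) :
    coeffT F p n a (Ideal.Quotient.mk _ q) = q.coeff (Finsupp.equivFunOnFinite.symm a) := by
  rw [coeffT, dif_pos ha, liftF_mk]
  rfl

lemma coeffT_of_not {a : Fin n → ℕ} (ha : ¬ ∀ i, a i < p) (f : TruncP F p n) :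
    coeffT F p n a f = 0 := by
  rw [coeffT, dif_neg ha]
  rfl

lemma symm_add (a b : Fin n → ℕ) :
    Finsupp.equivFunOnFinite.symm (a + b)
      = Finsupp.equivFunOnFinite.symm a + Finsupp.equivFunOnFinite.symm b := by
  ext i
  simp

lemma symm_single (i : Fin n) (k : ℕ) :
    Finsupp.equivFunOnFinite.symm (Pi.single i k : Fin n → ℕ) = Finsupp.single i k := by
  ext j
  simp [Finsupp.single_apply]

lemma xpow_mul (a b : Fin n → ℕ) : xpow F p n a * xpow F p n b = xpow F p n (a + b) := by
  rw [xpow, xpow, xpow, ← map_mul, MvPolynomial.monomial_mul, symm_add, one_mul]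

lemma xpow_zero : xpow F p n 0 = 1 := by
  rw [xpow, ← map_one (Ideal.Quotient.mk (truncIdeal F p n))]
  rw [show Finsupp.equivFunOnFinite.symm (0 : Fin n → ℕ) = 0 by ext; simp]
  rfl

lemma monomial_mem_truncIdeal {d : Fin n →₀ ℕ} {i : Fin n} (hi : p ≤ d i) (c : F) :
    MvPolynomial.monomial d c ∈ truncIdeal F p n := by
  have h : MvPolynomial.monomial d c
      = MvPolynomial.monomial (d - Finsupp.single i p) c * MvPolynomial.X i ^ p := by
    rw [MvPolynomial.X_pow_eq_monomial, MvPolynomial.monomial_mul, mul_one,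
      tsub_add_cancel_of_le (by simpa using hi)]
  rw [h]
  exact Ideal.mul_mem_left _ _ (Ideal.subset_span ⟨i, rfl⟩)

lemma xpow_eq_zero {a : Fin n → ℕ} {i : Fin n} (hi : p ≤ a i) : xpow F p n a = 0 :=
  Ideal.Quotient.eq_zero_iff_mem.mpr (monomial_mem_truncIdeal (by simpa using hi) 1)

lemma coeffT_xpow {a b : Fin n → ℕ} (ha : ∀ i, a i < p) :
    coeffT F p n a (xpow F p n b) = if b = a then 1 else 0 := by
  classical
  rw [xpow, coeffT_mk ha, MvPolynomial.coeff_monomial]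
  simp

/-- An element of `A(n)` is determined by its coefficients in the box. -/
lemma ext_coeffT {f g : TruncP F p n}
    (h : ∀ a : Fin n → ℕ, (∀ i, a i < p) → coeffT F p n a f = coeffT F p n a g) : f = g := by
  rw [← sub_eq_zero]
  obtain ⟨q, hq⟩ := Ideal.Quotient.mk_surjective (f - g)
  have h0 : ∀ a : Fin n → ℕ, (∀ i, a i < p) → q.coeff (Finsupp.equivFunOnFinite.symm a) = 0 := by
    intro a ha
    rw [← coeffT_mk ha, hq, map_sub, h a ha, sub_self]
  rw [← hq, Ideal.Quotient.eq_zero_iff_mem, q.as_sum]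
  refine Ideal.sum_mem _ fun d hd => ?_
  by_cases hb : ∀ i, d i < p
  · have := h0 (Finsupp.equivFunOnFinite d) hb
    rw [Equiv.symm_apply_apply] at this
    exact absurd this (MvPolynomial.mem_support_iff.mp hd)
  · push Not at hb
    obtain ⟨i, hi⟩ := hb
    exact monomial_mem_truncIdeal hi _

lemma coeffT_X_mul {a : Fin n → ℕ} (ha : ∀ i, a i < p) (i : Fin n) (f : TruncP F p n) :
    coeffT F p n a (xpow F p n (Pi.single i 1) * f)
      = if a i = 0 then 0 else coeffT F p n (a - Pi.single i 1) f := by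
  classical
  obtain ⟨q, rfl⟩ := Ideal.Quotient.mk_surjective f
  have hb : ∀ j, (a - Pi.single i 1 : Fin n → ℕ) j < p := fun j =>
    lt_of_le_of_lt (Nat.sub_le _ _) (ha j)
  rw [xpow, symm_single, ← map_mul, coeffT_mk ha, coeffT_mk hb]
  have : (MvPolynomial.monomial (Finsupp.single i 1) (1 : F)) = MvPolynomial.X i := rfl
  rw [this, MvPolynomial.coeff_X_mul']
  have e : Finsupp.equivFunOnFinite.symm (a - Pi.single i 1)
      = Finsupp.equivFunOnFinite.symm a - Finsupp.single i 1 := by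
    ext j
    simp [Finsupp.single_apply, Pi.single_apply, eq_comm]
  rw [e]
  by_cases h : a i = 0 <;> simp [h]

/-- Every family of coefficients indexed by the box is realised by an element of `A(n)`. -/
lemma exists_coeffT (c : (Fin n → ℕ) → F) :
    ∃ f : TruncP F p n, ∀ a : Fin n → ℕ, (∀ i, a i < p) → coeffT F p n a f = c a := by
  classical
  refine ⟨∑ a ∈ Fintype.piFinset (fun _ : Fin n => Finset.range p), c a • xpow F p n a, ?_⟩
  intro a ha
  rw [map_sum, Finset.sum_eq_single a]
  · rw [map_smul, coeffT_xpow ha, if_pos rfl, smul_eq_mul, mul_one]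
  · intro b _ hb
    rw [map_smul, coeffT_xpow ha, if_neg hb, smul_zero]
  · intro h
    exact absurd (by simpa using ha) h

variable [CharP F p]

/-- The coefficient formula for `D_i`. It holds for all `a`: when `a i = p - 1` both sides
vanish because `a i + 1 = 0` in `F`. -/
lemma coeffT_Dj (a : Fin n → ℕ) (i : Fin n) (f : TruncP F p n) :
    coeffT F p n a (Dj F p n i f) = ((a i : F) + 1) * coeffT F p n (a + Pi.single i 1) f := by
  by_cases hb : ∀ j, (a + Pi.single i 1 : Fin n → ℕ) j < p
  · have ha : ∀ j, a j < p := fun j => lt_of_le_of_lt (Nat.le_add_right _ _) (hb j)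
    obtain ⟨q, rfl⟩ := Ideal.Quotient.mk_surjective f
    change coeffT F p n a (DjL F p n i _) = _
    rw [DjL_mk, coeffT_mk ha, coeffT_mk hb, MvPolynomial.coeff_pderiv, symm_add, symm_single,
      mul_comm]
    rfl
  · rw [coeffT_of_not hb, mul_zero]
    by_cases ha : ∀ j, a j < p
    · have hi : a i + 1 = p := by
        push Not at hb
        obtain ⟨j, hj⟩ := hb
        have h1 := ha j
        by_cases hji : j = i
        · subst hji
          simp at hj
          omega
        · simp [hji] at hj
          omega
      obtain ⟨q, rfl⟩ := Ideal.Quotient.mk_surjective f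
      change coeffT F p n a (DjL F p n i _) = _
      rw [DjL_mk, coeffT_mk ha, MvPolynomial.coeff_pderiv]
      have : ((Finsupp.equivFunOnFinite.symm a i : ℕ) : F) + 1 = 0 := by
        have : ((a i + 1 : ℕ) : F) = 0 := by rw [hi, CharP.cast_eq_zero]
        simpa using this
      rw [this, mul_zero]
    · rw [coeffT_of_not ha]

lemma Dj_comm (i j : Fin n) (f : TruncP F p n) :
    Dj F p n i (Dj F p n j f) = Dj F p n j (Dj F p n i f) := by
  refine ext_coeffT fun a _ => ?_
  simp only [coeffT_Dj, add_right_comm a]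
  by_cases h : i = j
  · subst h
    ring
  · simp [h, Ne.symm h]
    ring

lemma Dj_xpow (i : Fin n) (a : Fin n → ℕ) :
    Dj F p n i (xpow F p n a) = (a i : F) • xpow F p n (a - Pi.single i 1) := by
  have e : Finsupp.equivFunOnFinite.symm a - Finsupp.single i 1
      = Finsupp.equivFunOnFinite.symm (a - Pi.single i 1) := by
    ext j
    simp [Finsupp.single_apply, Pi.single_apply, eq_comm]
  change DjL F p n i _ = (a i : F) • Ideal.Quotient.mkₐ F (truncIdeal F p n) _
  rw [xpow, DjL_mk, MvPolynomial.pderiv_monomial, ← map_smul, MvPolynomial.smul_monomial, e,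
    one_mul, smul_eq_mul, mul_one]
  rfl

lemma coeffT_X_mul_Dj {a : Fin n → ℕ} (ha : ∀ i, a i < p) (i : Fin n) (f : TruncP F p n) :
    coeffT F p n a (xpow F p n (Pi.single i 1) * Dj F p n i f) = (a i : F) * coeffT F p n a f := by
  rw [coeffT_X_mul ha, coeffT_Dj]
  split_ifs with h
  · simp [h]
  · have e : a - Pi.single i 1 + Pi.single i 1 = a := by
      ext j
      by_cases hj : j = i
      · subst hj
        simp
        omega
      · simp [hj]
    rw [e]
    congr 1
    simp only [Pi.sub_apply, Pi.single_eq_same]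
    rw [← Nat.cast_add_one, Nat.sub_add_cancel (Nat.one_le_iff_ne_zero.mpr h)]

/-- Poincaré lemma on the truncated algebra: a closed family `g` is a gradient as soon as no
`g i` contains a monomial with `x_i`-exponent `p - 1`. -/
lemma poincare (hp : p.Prime) (g : Fin n → TruncP F p n)
    (hcl : ∀ i j, Dj F p n i (g j) = Dj F p n j (g i))
    (htop : ∀ i, ∀ a : Fin n → ℕ, a i = p - 1 → coeffT F p n a (g i) = 0) :
    ∃ z : TruncP F p n, (∀ i, Dj F p n i z = g i) := by
  classical
  obtain ⟨z, hz⟩ := exists_coeffT (F := F) (p := p) (n := n) fun a =>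
    if h : ∃ i, a i ≠ 0 then ((a h.choose : ℕ) : F)⁻¹ *
      coeffT F p n (a - Pi.single h.choose 1) (g h.choose) else 0
  refine ⟨z, fun i => ext_coeffT fun a ha => ?_⟩
  rw [coeffT_Dj]
  by_cases hi : a i = p - 1
  · have : (a i : F) + 1 = 0 := by
      have : ((a i + 1 : ℕ) : F) = 0 := by
        rw [hi, Nat.sub_add_cancel hp.one_le, CharP.cast_eq_zero]
      simpa using this
    rw [this, zero_mul, htop i a hi]
  · have hb : ∀ j, (a + Pi.single i 1 : Fin n → ℕ) j < p := by
      intro j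
      have := ha j
      by_cases hj : j = i
      · subst hj
        simp
        omega
      · simpa [hj] using this
    have hex : ∃ j, (a + Pi.single i 1 : Fin n → ℕ) j ≠ 0 := ⟨i, by simp⟩
    rw [hz _ hb, dif_pos hex]
    -- the index `j` along which the coefficient of `z` is defined is arbitrary
    generalize hex.choose = j, hex.choose_spec = hj
    have cast_ne : ∀ k : ℕ, k ≠ 0 → k < p → (k : F) ≠ 0 := by
      intro k hk hkp h
      rw [CharP.cast_eq_zero_iff F p] at h
      exact absurd (Nat.le_of_dvd (Nat.pos_of_ne_zero hk) h) (by omega)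
    have hne := cast_ne _ hj (hb j)
    by_cases hji : j = i
    · subst hji
      have e : a + Pi.single j 1 - Pi.single j 1 = a := by simp
      rw [e]
      simp only [Pi.add_apply, Pi.single_eq_same, Nat.cast_add, Nat.cast_one] at hne ⊢
      rw [← mul_assoc, mul_inv_cancel₀ hne, one_mul]
    · simp only [Pi.add_apply, Pi.single_eq_of_ne hji, add_zero] at hne hj ⊢
      -- compare the coefficients of `D_i (g j) = D_j (g i)` at `a - ε_j`
      have key := congrArg (coeffT F p n (a - Pi.single j 1)) (hcl i j)
      rw [coeffT_Dj, coeffT_Dj] at key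
      have e1 : a - Pi.single j 1 + Pi.single j 1 = a := by
        ext k
        by_cases hk : k = j
        · subst hk
          simp
          omega
        · simp [hk]
      have e2 : a - Pi.single j 1 + Pi.single i 1 = a + Pi.single i 1 - Pi.single j 1 := by
        ext k
        by_cases hk : k = j
        · subst hk
          simp [hji]
        · simp [hk]
      have e3 : (((a - Pi.single j 1 : Fin n → ℕ) j : ℕ) : F) + 1 = a j := by
        rw [← Nat.cast_add_one]
        congr 1
        simp
        omega
      rw [e1, e2, e3] at key
      simp only [Pi.sub_apply, Pi.single_eq_of_ne (Ne.symm hji), tsub_zero] at key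
      rw [mul_left_comm, key, ← mul_assoc, inv_mul_cancel₀ hne, one_mul]

/-- `A(n)` carries two `F`-module instances which agree only after unfolding: one as a quotient
module, one from its algebra structure. This lemma and the next two pass from one to the other. -/
lemma Dj_smul (i : Fin n) (c : F) (f : TruncP F p n) :
    Dj F p n i (c • f) = c • Dj F p n i f := (Dj F p n i).map_smul c f

omit [CharP F p] in
lemma smul_mulT (c : F) (f g : TruncP F p n) : c • f * g = c • (f * g) :=
  Algebra.smul_mul_assoc c f g

omit [CharP F p] in
lemma mul_smulT (c : F) (f g : TruncP F p n) : f * c • g = c • (f * g) :=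
  Algebra.mul_smul_comm c f g

end Coefficients

/-! ### The contact bracket and its Jacobi identity -/

section Bracket

variable {F : Type*} [Field F] {p m : ℕ}

lemma castSucc_ne_last' (j : Fin (2 * m)) : j.castSucc ≠ Fin.last (2 * m) :=
  (Fin.castSucc_lt_last j).ne

lemma cj_cj (j : Fin (2 * m)) : cj m (cj m j) = j := by
  ext
  by_cases h : (j : ℕ) < m
  · simp [cj, h]
  · have h1 : (j : ℕ) - m < m := by
      have := j.isLt
      omega
    simp [cj, h, h1]
    omega

lemma cj_ne (j : Fin (2 * m)) : cj m j ≠ j := by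
  intro h
  have := congrArg Fin.val h
  have := j.isLt
  unfold cj at *
  split_ifs at * <;> simp_all <;> omega

lemma sg_cj (j : Fin (2 * m)) : sg F m (cj m j) = - sg F m j := by
  have := j.isLt
  unfold sg cj
  split_ifs <;> simp_all <;> omega

lemma sg_mul_sg (j : Fin (2 * m)) : sg F m j * sg F m j = 1 := by
  unfold sg
  split_ifs <;> simp

lemma sg_ne_zero (j : Fin (2 * m)) : sg F m j ≠ 0 := fun h => by
  simpa [h] using sg_mul_sg (F := F) j

/-- The index swap `j ↦ j'` as a permutation. -/
def cjEquiv (m : ℕ) : Equiv.Perm (Fin (2 * m)) where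
  toFun := cj m
  invFun := cj m
  left_inv := cj_cj
  right_inv := cj_cj

/-- The contact degree of `x^a`, read in `F`. -/
def dg (F : Type*) [Field F] (a : Fin (2 * m + 1) → ℕ) : F :=
  (∑ j : Fin (2 * m), (a j.castSucc : F)) + 2 * a (Fin.last (2 * m)) - 2

lemma dg_add_castSucc (a : Fin (2 * m + 1) → ℕ) (j : Fin (2 * m)) :
    dg F (a + Pi.single j.castSucc 1) = dg F a + 1 := by
  have h : ∀ k : Fin (2 * m), (Pi.single j.castSucc 1 : Fin (2 * m + 1) → ℕ) k.castSucc
      = if k = j then 1 else 0 := by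
    intro k
    simp [Pi.single_apply]
  simp [dg, h, Finset.sum_add_distrib]
  ring

lemma dg_add_last (a : Fin (2 * m + 1) → ℕ) :
    dg F (a + Pi.single (Fin.last (2 * m)) 1) = dg F a + 2 := by
  simp [dg]
  ring

variable [CharP F p]

lemma coeffT_EulK (a : Fin (2 * m + 1) → ℕ) (f : TruncP F p (2 * m + 1)) :
    coeffT F p (2 * m + 1) a (EulK F p m f) = dg F a * coeffT F p (2 * m + 1) a f := by
  by_cases ha : ∀ i, a i < p
  · have h2 : ∀ g : TruncP F p (2 * m + 1),
        coeffT F p (2 * m + 1) a ((2 : TruncP F p (2 * m + 1)) * g)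
          = 2 * coeffT F p (2 * m + 1) a g := by
      intro g
      rw [two_mul g, map_add, two_mul (coeffT F p (2 * m + 1) a g)]
    rw [EulK, map_sub, map_add, map_sum, h2, h2, coeffT_X_mul_Dj ha]
    simp only [coeffT_X_mul_Dj ha]
    rw [dg, ← Finset.sum_mul]
    ring
  · rw [coeffT_of_not ha, coeffT_of_not ha, mul_zero]

lemma EulK_add (f g : TruncP F p (2 * m + 1)) :
    EulK F p m (f + g) = EulK F p m f + EulK F p m g := by
  refine ext_coeffT fun a _ => ?_
  simp only [map_add, coeffT_EulK]
  ring

lemma EulK_smul (c : F) (f : TruncP F p (2 * m + 1)) :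
    EulK F p m (c • f) = c • EulK F p m f := by
  refine ext_coeffT fun a _ => ?_
  simp only [map_smul, coeffT_EulK, smul_eq_mul]
  ring

/-- `EulK` as a linear map. -/
def EulL (F : Type*) [Field F] (p m : ℕ) [CharP F p] :
    TruncP F p (2 * m + 1) →ₗ[F] TruncP F p (2 * m + 1) where
  toFun := EulK F p m
  map_add' := EulK_add
  map_smul' := EulK_smul

lemma EulK_sub (f g : TruncP F p (2 * m + 1)) :
    EulK F p m (f - g) = EulK F p m f - EulK F p m g := map_sub (EulL F p m) f g

lemma EulK_xpow (a : Fin (2 * m + 1) → ℕ) :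
    EulK F p m (xpow F p (2 * m + 1) a) = dg F a • xpow F p (2 * m + 1) a := by
  refine ext_coeffT fun b hb => ?_
  rw [coeffT_EulK, map_smul, coeffT_xpow hb, smul_eq_mul]
  split_ifs with h
  · rw [h]
  · simp

/-- `E + 2` is a derivation of the commutative algebra `A(n)`. -/
lemma EulK_mul (f g : TruncP F p (2 * m + 1)) :
    EulK F p m (f * g) = EulK F p m f * g + f * EulK F p m g + 2 * (f * g) := by
  simp only [EulK, Derivation.leibniz, smul_eq_mul, mul_add, Finset.sum_add_distrib]
  have h1 : ∑ x : Fin (2 * m), xpow F p (2 * m + 1) (Pi.single x.castSucc 1)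
        * (f * Dj F p (2 * m + 1) x.castSucc g)
      = f * ∑ x : Fin (2 * m), xpow F p (2 * m + 1) (Pi.single x.castSucc 1)
        * Dj F p (2 * m + 1) x.castSucc g := by
    rw [Finset.mul_sum]
    exact Finset.sum_congr rfl fun _ _ => by ring
  have h2 : ∑ x : Fin (2 * m), xpow F p (2 * m + 1) (Pi.single x.castSucc 1)
        * (g * Dj F p (2 * m + 1) x.castSucc f)
      = g * ∑ x : Fin (2 * m), xpow F p (2 * m + 1) (Pi.single x.castSucc 1)
        * Dj F p (2 * m + 1) x.castSucc f := by
    rw [Finset.mul_sum]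
    exact Finset.sum_congr rfl fun _ _ => by ring
  rw [h1, h2]
  ring

lemma Dj_EulK (j : Fin (2 * m)) (f : TruncP F p (2 * m + 1)) :
    Dj F p (2 * m + 1) j.castSucc (EulK F p m f)
      = EulK F p m (Dj F p (2 * m + 1) j.castSucc f) + Dj F p (2 * m + 1) j.castSucc f := by
  refine ext_coeffT fun a _ => ?_
  simp only [map_add, coeffT_EulK, coeffT_Dj, dg_add_castSucc]
  ring

lemma Dn_EulK (f : TruncP F p (2 * m + 1)) :
    Dj F p (2 * m + 1) (Fin.last (2 * m)) (EulK F p m f)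
      = EulK F p m (Dj F p (2 * m + 1) (Fin.last (2 * m)) f)
        + 2 * Dj F p (2 * m + 1) (Fin.last (2 * m)) f := by
  refine ext_coeffT fun a _ => ?_
  simp only [two_mul, map_add, coeffT_EulK, coeffT_Dj, dg_add_last]
  ring

lemma DHK_antisymm (f g : TruncP F p (2 * m + 1)) : DHK F p m f g = - DHK F p m g f := by
  rw [DHK, DHK, ← Finset.sum_neg_distrib, ← Equiv.sum_comp (cjEquiv m)]
  refine Finset.sum_congr rfl fun j _ => ?_
  change sg F m (cj m j) • (_ * Dj F p (2 * m + 1) (cj m (cj m j)).castSucc g) = _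
  rw [cj_cj, sg_cj, neg_smul, mul_comm (Dj F p (2 * m + 1) j.castSucc g)]
  rfl

/-- `DHK f` as a linear map. -/
def DHL (f : TruncP F p (2 * m + 1)) : TruncP F p (2 * m + 1) →ₗ[F] TruncP F p (2 * m + 1) where
  toFun := DHK F p m f
  map_add' := fun g h => by
    simp only [DHK, map_add, mul_add, smul_add, Finset.sum_add_distrib]
  map_smul' := fun c g => by
    simp only [DHK, Dj_smul, Finset.smul_sum, mul_smulT, RingHom.id_apply]
    exact Finset.sum_congr rfl fun j _ => smul_comm _ _ _

lemma DHK_add_right (f g h : TruncP F p (2 * m + 1)) :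
    DHK F p m f (g + h) = DHK F p m f g + DHK F p m f h := map_add (DHL f) g h

lemma DHK_sub_right (f g h : TruncP F p (2 * m + 1)) :
    DHK F p m f (g - h) = DHK F p m f g - DHK F p m f h := map_sub (DHL f) g h

lemma DHK_add_left (f g h : TruncP F p (2 * m + 1)) :
    DHK F p m (f + g) h = DHK F p m f h + DHK F p m g h := by
  rw [DHK_antisymm, DHK_add_right, DHK_antisymm h, DHK_antisymm h]
  ring

lemma DHK_sub_left (f g h : TruncP F p (2 * m + 1)) :
    DHK F p m (f - g) h = DHK F p m f h - DHK F p m g h := by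
  rw [DHK_antisymm, DHK_sub_right, DHK_antisymm h, DHK_antisymm h]
  ring

lemma DHK_mul_right (f g h : TruncP F p (2 * m + 1)) :
    DHK F p m f (g * h) = DHK F p m f g * h + g * DHK F p m f h := by
  simp only [DHK, Derivation.leibniz, smul_eq_mul, Finset.sum_mul, Finset.mul_sum,
    ← Finset.sum_add_distrib, smul_mulT, mul_smulT, ← smul_add]
  refine Finset.sum_congr rfl fun j _ => ?_
  congr 1
  ring

lemma DHK_mul_left (f g h : TruncP F p (2 * m + 1)) :
    DHK F p m (f * g) h = DHK F p m f h * g + f * DHK F p m g h := by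
  rw [DHK_antisymm, DHK_mul_right, DHK_antisymm h, DHK_antisymm h]
  ring

lemma Dj_DHK (i : Fin (2 * m + 1)) (f g : TruncP F p (2 * m + 1)) :
    Dj F p (2 * m + 1) i (DHK F p m f g)
      = DHK F p m (Dj F p (2 * m + 1) i f) g + DHK F p m f (Dj F p (2 * m + 1) i g) := by
  simp only [DHK, map_sum, Dj_smul, Derivation.leibniz, smul_eq_mul,
    ← Finset.sum_add_distrib, ← smul_add, Dj_comm i]
  refine Finset.sum_congr rfl fun j _ => ?_
  congr 1
  ring

lemma EulK_DHK (f g : TruncP F p (2 * m + 1)) :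
    EulK F p m (DHK F p m f g) = DHK F p m (EulK F p m f) g + DHK F p m f (EulK F p m g) := by
  have h : EulK F p m (DHK F p m f g) = ∑ j : Fin (2 * m), sg F m j • EulK F p m
      (Dj F p (2 * m + 1) j.castSucc f * Dj F p (2 * m + 1) (cj m j).castSucc g) := by
    change EulL F p m _ = _
    simp only [DHK, map_sum, map_smul]
    rfl
  rw [h]
  simp only [DHK, ← Finset.sum_add_distrib, ← smul_add, EulK_mul, Dj_EulK]
  refine Finset.sum_congr rfl fun j _ => ?_
  congr 1
  ring

/-- The Jacobi identity for the constant Poisson bracket. After expanding both sides only second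
derivatives of `f` survive, and those cancel by the symmetry of `D_j D_k f`. -/
lemma DHK_jacobi (f g h : TruncP F p (2 * m + 1)) :
    DHK F p m f (DHK F p m g h)
      = DHK F p m (DHK F p m f g) h + DHK F p m g (DHK F p m f h) := by
  have e1 : DHK F p m f (DHK F p m g h) = ∑ j : Fin (2 * m), sg F m j •
      (Dj F p (2 * m + 1) j.castSucc f *
        (DHK F p m (Dj F p (2 * m + 1) (cj m j).castSucc g) h
          + DHK F p m g (Dj F p (2 * m + 1) (cj m j).castSucc h))) := by
    rw [DHK]
    simp only [Dj_DHK]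
  have e2 : ∀ u v : TruncP F p (2 * m + 1), DHK F p m u (DHK F p m f v)
      = ∑ j : Fin (2 * m), sg F m j •
      (Dj F p (2 * m + 1) j.castSucc f * DHK F p m u (Dj F p (2 * m + 1) (cj m j).castSucc v)
      - Dj F p (2 * m + 1) (cj m j).castSucc v *
          DHK F p m (Dj F p (2 * m + 1) j.castSucc f) u) := by
    intro u v
    change DHL u (DHK F p m f v) = _
    rw [DHK, map_sum]
    simp only [map_smul]
    refine Finset.sum_congr rfl fun j _ => ?_
    congr 1
    change DHK F p m u _ = _
    rw [DHK_mul_right, DHK_antisymm u]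
    ring
  have e3 : ∀ u v : TruncP F p (2 * m + 1), ∑ j : Fin (2 * m), sg F m j •
      (Dj F p (2 * m + 1) (cj m j).castSucc v *
          DHK F p m (Dj F p (2 * m + 1) j.castSucc f) u)
      = ∑ j : Fin (2 * m), ∑ k : Fin (2 * m), (sg F m j * sg F m k) •
        (Dj F p (2 * m + 1) k.castSucc (Dj F p (2 * m + 1) j.castSucc f) *
          (Dj F p (2 * m + 1) (cj m j).castSucc v * Dj F p (2 * m + 1) (cj m k).castSucc u)) := by
    intro u v
    refine Finset.sum_congr rfl fun j _ => ?_
    rw [DHK, Finset.mul_sum, Finset.smul_sum]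
    refine Finset.sum_congr rfl fun k _ => ?_
    rw [mul_smul, mul_smulT]
    congr 2
    ring
  have e4 : ∑ j : Fin (2 * m), sg F m j •
      (Dj F p (2 * m + 1) (cj m j).castSucc h *
          DHK F p m (Dj F p (2 * m + 1) j.castSucc f) g)
      = ∑ j : Fin (2 * m), sg F m j •
      (Dj F p (2 * m + 1) (cj m j).castSucc g *
          DHK F p m (Dj F p (2 * m + 1) j.castSucc f) h) := by
    rw [e3, e3, Finset.sum_comm]
    refine Finset.sum_congr rfl fun j _ => Finset.sum_congr rfl fun k _ => ?_
    rw [Dj_comm, mul_comm (sg F m k)]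
    congr 1
    ring
  have e5 : ∑ j : Fin (2 * m), sg F m j • (Dj F p (2 * m + 1) j.castSucc f *
        (DHK F p m (Dj F p (2 * m + 1) (cj m j).castSucc g) h))
      = - ∑ j : Fin (2 * m), sg F m j • (Dj F p (2 * m + 1) j.castSucc f *
        (DHK F p m h (Dj F p (2 * m + 1) (cj m j).castSucc g))) := by
    rw [← Finset.sum_neg_distrib]
    refine Finset.sum_congr rfl fun j _ => ?_
    rw [DHK_antisymm _ h, mul_neg (Dj F p (2 * m + 1) j.castSucc f), smul_neg]
  rw [DHK_antisymm (DHK F p m f g) h, e2, e2, e1]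
  simp only [mul_add, smul_add, smul_sub, Finset.sum_add_distrib, Finset.sum_sub_distrib]
  rw [e4, e5]
  ring

lemma DHK_Dj_left (i : Fin (2 * m + 1)) (f g : TruncP F p (2 * m + 1)) :
    DHK F p m (Dj F p (2 * m + 1) i f) g = - DHK F p m g (Dj F p (2 * m + 1) i f) :=
  DHK_antisymm _ _

lemma DHK_EulK_left (f g : TruncP F p (2 * m + 1)) :
    DHK F p m (EulK F p m f) g = - DHK F p m g (EulK F p m f) :=
  DHK_antisymm _ _

lemma Kbr_antisymm (f g : TruncP F p (2 * m + 1)) : Kbr F p m f g = - Kbr F p m g f := by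
  rw [Kbr, Kbr, DHK_antisymm]
  ring

/-- The Jacobi identity in Leibniz form: `ad f` is a derivation of `K'(n)`. -/
lemma Kbr_jacobi (f g h : TruncP F p (2 * m + 1)) :
    Kbr F p m f (Kbr F p m g h)
      = Kbr F p m (Kbr F p m f g) h + Kbr F p m g (Kbr F p m f h) := by
  have hj := DHK_jacobi f g h
  simp only [Kbr, DHK_add_right, DHK_sub_right, DHK_add_left, DHK_sub_left, DHK_mul_right,
    DHK_mul_left, EulK_add, EulK_sub, EulK_mul, EulK_DHK, map_add, map_sub, Derivation.leibniz,
    smul_eq_mul, Dj_DHK, Dn_EulK, DHK_Dj_left, DHK_EulK_left]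
  linear_combination hj

/-- The adjoint map `ad z` as a linear map. -/
def adK (z : TruncP F p (2 * m + 1)) : TruncP F p (2 * m + 1) →ₗ[F] TruncP F p (2 * m + 1) where
  toFun := Kbr F p m z
  map_add' := fun g h => by
    simp only [Kbr, DHK_add_right, map_add, EulK_add]
    ring
  map_smul' := fun c g => by
    have : DHK F p m z (c • g) = c • DHK F p m z g := map_smul (DHL z) c g
    simp only [Kbr, this, Dj_smul, EulK_smul, smul_mulT, mul_smulT, RingHom.id_apply,
      smul_sub, smul_add]

lemma Kbr_sub_right (f g h : TruncP F p (2 * m + 1)) :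
    Kbr F p m f (g - h) = Kbr F p m f g - Kbr F p m f h := map_sub (adK f) g h

lemma Kbr_sub_left (f g h : TruncP F p (2 * m + 1)) :
    Kbr F p m (f - g) h = Kbr F p m f h - Kbr F p m g h := by
  rw [Kbr_antisymm, Kbr_sub_right, Kbr_antisymm h, Kbr_antisymm h]
  ring

lemma Kbr_add_left (f g h : TruncP F p (2 * m + 1)) :
    Kbr F p m (f + g) h = Kbr F p m f h + Kbr F p m g h := by
  rw [Kbr_antisymm, Kbr_antisymm f, Kbr_antisymm g, ← neg_add]
  exact congrArg Neg.neg (map_add (adK h) f g)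

lemma Kbr_smul_right (c : F) (f g : TruncP F p (2 * m + 1)) :
    Kbr F p m f (c • g) = c • Kbr F p m f g := map_smul (adK f) c g

lemma Kbr_smul_left (c : F) (f g : TruncP F p (2 * m + 1)) :
    Kbr F p m (c • f) g = c • Kbr F p m f g := by
  rw [Kbr_antisymm, Kbr_smul_right, Kbr_antisymm f, smul_neg]

lemma Kbr_zero_right (f : TruncP F p (2 * m + 1)) : Kbr F p m f 0 = 0 := map_zero (adK f)

lemma Kbr_zero_left (f : TruncP F p (2 * m + 1)) : Kbr F p m 0 f = 0 := by
  rw [Kbr_antisymm, Kbr_zero_right, neg_zero]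

end Bracket

/-! ### Integration, brackets with monomials of low degree, and membership in `K(n)` -/

section Coefficients

variable {F : Type*} [Field F] {p n : ℕ} [CharP F p]

omit [Field F] [CharP F p] in
lemma sub_single_add {a : Fin n → ℕ} {k : Fin n} (h : a k ≠ 0) :
    a - Pi.single k 1 + Pi.single k 1 = a := by
  ext j
  by_cases hj : j = k
  · subst hj
    simp
    omega
  · simp [hj]

omit [Field F] [CharP F p] in
lemma sub_single_lt {a : Fin n → ℕ} (ha : ∀ i, a i < p) (k : Fin n) (i : Fin n) :
    (a - Pi.single k 1 : Fin n → ℕ) i < p := lt_of_le_of_lt (Nat.sub_le _ _) (ha i)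

lemma cast_ne_zero' {k : ℕ} (hk : k ≠ 0) (hkp : k < p) : (k : F) ≠ 0 := fun h => by
  rw [CharP.cast_eq_zero_iff F p] at h
  exact absurd (Nat.le_of_dvd (Nat.pos_of_ne_zero hk) h) (by omega)

lemma cast_pred_add_one (hp : p.Prime) : ((p - 1 : ℕ) : F) + 1 = 0 := by
  rw [← Nat.cast_add_one, Nat.sub_add_cancel hp.one_le, CharP.cast_eq_zero]

lemma coeffT_sub_Dj {a : Fin n → ℕ} {k : Fin n} (h : a k ≠ 0) (f : TruncP F p n) :
    coeffT F p n (a - Pi.single k 1) (Dj F p n k f) = (a k : F) * coeffT F p n a f := by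
  rw [coeffT_Dj, sub_single_add h]
  congr 1
  simp only [Pi.sub_apply, Pi.single_eq_same]
  rw [← Nat.cast_add_one, Nat.sub_add_cancel (Nat.one_le_iff_ne_zero.mpr h)]

lemma coeffT_Dj_top (hp : p.Prime) {a : Fin n → ℕ} {k : Fin n} (h : a k = p - 1)
    (f : TruncP F p n) : coeffT F p n a (Dj F p n k f) = 0 := by
  rw [coeffT_Dj, h, cast_pred_add_one hp, zero_mul]

lemma coeffT_eq_zero_of_Dj {a : Fin n → ℕ} (ha : ∀ i, a i < p) {k : Fin n} (h : a k ≠ 0)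
    {f : TruncP F p n} (hf : coeffT F p n (a - Pi.single k 1) (Dj F p n k f) = 0) :
    coeffT F p n a f = 0 := by
  rw [coeffT_sub_Dj h] at hf
  exact (mul_eq_zero.mp hf).resolve_left (cast_ne_zero' h (ha k))

lemma eq_const_of_Dj {f : TruncP F p n} (h : ∀ i, Dj F p n i f = 0) :
    ∃ c : F, f = c • (1 : TruncP F p n) := by
  refine ⟨coeffT F p n 0 f, ext_coeffT fun a ha => ?_⟩
  rw [← xpow_zero, map_smul, coeffT_xpow ha, smul_eq_mul]
  split_ifs with h0
  · rw [← h0, mul_one]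
  · rw [mul_zero]
    obtain ⟨k, hk⟩ := Function.ne_iff.mp (Ne.symm h0)
    exact coeffT_eq_zero_of_Dj ha hk (by rw [h, map_zero])

/-- Integration in the single variable `x_i`. -/
lemma exists_antideriv (hp : p.Prime) (i : Fin n) (g : TruncP F p n)
    (htop : ∀ a : Fin n → ℕ, (∀ i, a i < p) → a i = p - 1 → coeffT F p n a g = 0) :
    ∃ z : TruncP F p n, Dj F p n i z = g := by
  obtain ⟨z, hz⟩ := exists_coeffT (F := F) (p := p) (n := n) fun a =>
    (a i : F)⁻¹ * coeffT F p n (a - Pi.single i 1) g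
  refine ⟨z, ext_coeffT fun a ha => ?_⟩
  by_cases hi : a i = p - 1
  · rw [coeffT_Dj_top hp hi, htop a ha hi]
  · have hb : ∀ j, (a + Pi.single i 1 : Fin n → ℕ) j < p := by
      intro j
      have := ha j
      by_cases hj : j = i
      · subst hj
        simp
        omega
      · simpa [hj] using this
    have hne : ((a i : F) + 1) ≠ 0 := by
      rw [← Nat.cast_add_one]
      exact cast_ne_zero' (Nat.succ_ne_zero _) (by have := ha i; omega)
    rw [coeffT_Dj, hz _ hb, add_tsub_cancel_right]
    simp only [Pi.add_apply, Pi.single_eq_same, Nat.cast_add, Nat.cast_one]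
    rw [← mul_assoc, mul_inv_cancel₀ hne, one_mul]

end Coefficients

section LowDegree

variable {F : Type*} [Field F] {p m : ℕ} [CharP F p]

/-- The coordinate `x_i` of `A(2m+1)`. -/
abbrev xv (F : Type*) [Field F] (p m : ℕ) (i : Fin (2 * m + 1)) : TruncP F p (2 * m + 1) :=
  xpow F p (2 * m + 1) (Pi.single i 1)

lemma Dj_xv (i j : Fin (2 * m + 1)) :
    Dj F p (2 * m + 1) i (xv F p m j) = if i = j then 1 else 0 := by
  rw [xv, Dj_xpow]
  split_ifs with h
  · subst h
    simp [xpow_zero]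
  · simp [h]

lemma dg_zero : dg F (0 : Fin (2 * m + 1) → ℕ) = -2 := by
  simp [dg]

lemma EulK_one : EulK F p m 1 = (-2 : F) • (1 : TruncP F p (2 * m + 1)) := by
  rw [← xpow_zero, EulK_xpow, dg_zero]

lemma EulK_xv (i : Fin (2 * m)) : EulK F p m (xv F p m i.castSucc) = - xv F p m i.castSucc := by
  rw [xv, EulK_xpow, ← zero_add (Pi.single i.castSucc 1), dg_add_castSucc, dg_zero]
  norm_num

lemma EulK_xlast : EulK F p m (xv F p m (Fin.last (2 * m))) = 0 := by
  rw [xv, EulK_xpow, ← zero_add (Pi.single (Fin.last (2 * m)) 1), dg_add_last, dg_zero]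
  norm_num

lemma DHK_xv (i : Fin (2 * m)) (y : TruncP F p (2 * m + 1)) :
    DHK F p m (xv F p m i.castSucc) y
      = sg F m i • Dj F p (2 * m + 1) (cj m i).castSucc y := by
  rw [DHK, Finset.sum_eq_single i]
  · rw [Dj_xv, if_pos rfl, one_mul]
  · intro j _ hj
    rw [Dj_xv, if_neg (fun h => hj (Fin.castSucc_injective _ h)),
      zero_mul (Dj F p (2 * m + 1) (cj m j).castSucc y), smul_zero]
  · simp

lemma DHK_xlast (y : TruncP F p (2 * m + 1)) :
    DHK F p m (xv F p m (Fin.last (2 * m))) y = 0 := by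
  rw [DHK]
  refine Finset.sum_eq_zero fun j _ => ?_
  rw [Dj_xv, if_neg (castSucc_ne_last' j),
    zero_mul (Dj F p (2 * m + 1) (cj m j).castSucc y), smul_zero]

lemma Kbr_one (y : TruncP F p (2 * m + 1)) :
    Kbr F p m 1 y = (2 : F) • Dj F p (2 * m + 1) (Fin.last (2 * m)) y := by
  have h : DHK F p m 1 y = 0 := by
    rw [DHK]
    refine Finset.sum_eq_zero fun j _ => ?_
    rw [Derivation.map_one_eq_zero, zero_mul (Dj F p (2 * m + 1) (cj m j).castSucc y), smul_zero]
  rw [Kbr, h, EulK_one, Derivation.map_one_eq_zero, mul_smulT]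
  simp

lemma Kbr_xv (i : Fin (2 * m)) (y : TruncP F p (2 * m + 1)) :
    Kbr F p m (xv F p m i.castSucc) y
      = sg F m i • Dj F p (2 * m + 1) (cj m i).castSucc y
        + xv F p m i.castSucc * Dj F p (2 * m + 1) (Fin.last (2 * m)) y := by
  rw [Kbr, DHK_xv, EulK_xv, Dj_xv, if_neg (castSucc_ne_last' i).symm]
  ring

lemma Kbr_xlast (y : TruncP F p (2 * m + 1)) :
    Kbr F p m (xv F p m (Fin.last (2 * m))) y = EulK F p m y := by
  rw [Kbr, DHK_xlast, EulK_xlast, Dj_xv, if_pos rfl]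
  ring

lemma Kbr_xv_mul_xv (i j : Fin (2 * m)) (y : TruncP F p (2 * m + 1)) :
    Kbr F p m (xv F p m i.castSucc * xv F p m j.castSucc) y
      = sg F m i • (xv F p m j.castSucc * Dj F p (2 * m + 1) (cj m i).castSucc y)
        + sg F m j • (xv F p m i.castSucc * Dj F p (2 * m + 1) (cj m j).castSucc y) := by
  rw [Kbr, DHK_mul_left, DHK_xv, DHK_xv, EulK_mul, EulK_xv, EulK_xv, Derivation.leibniz,
    Dj_xv, Dj_xv, if_neg (castSucc_ne_last' i).symm, if_neg (castSucc_ne_last' j).symm,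
    smul_mulT, mul_smulT, smul_zero, smul_zero,
    mul_comm (Dj F p (2 * m + 1) (cj m i).castSucc y)]
  ring

lemma Kbr_xv_mul_xlast (i : Fin (2 * m)) (y : TruncP F p (2 * m + 1)) :
    Kbr F p m (xv F p m i.castSucc * xv F p m (Fin.last (2 * m))) y
      = sg F m i • (xv F p m (Fin.last (2 * m)) * Dj F p (2 * m + 1) (cj m i).castSucc y)
        + xv F p m i.castSucc * EulK F p m y
        - xv F p m i.castSucc *
          (xv F p m (Fin.last (2 * m)) * Dj F p (2 * m + 1) (Fin.last (2 * m)) y) := by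
  rw [Kbr, DHK_mul_left, DHK_xv, DHK_xlast, EulK_mul, EulK_xv, EulK_xlast, Derivation.leibniz,
    Dj_xv, Dj_xv, if_neg (castSucc_ne_last' i).symm, if_pos rfl, smul_mulT, smul_eq_mul, smul_zero,
    mul_comm (Dj F p (2 * m + 1) (cj m i).castSucc y)]
  ring

omit [CharP F p] in
/-- When `p ∣ m + 2`, the space `K(n)` consists of the elements without `x^τ`-term. -/
lemma mem_Ksub (hp : p.Prime) (hdvd : p ∣ m + 2) {f : TruncP F p (2 * m + 1)} :
    f ∈ Ksub F p m ↔ coeffT F p (2 * m + 1) (fun _ => p - 1) f = 0 := by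
  classical
  have hτ : ∀ i : Fin (2 * m + 1), (fun _ => p - 1 : Fin (2 * m + 1) → ℕ) i < p :=
    fun _ => Nat.sub_lt hp.pos one_pos
  rw [Ksub, if_pos hdvd]
  constructor
  · intro hf
    have hle : Submodule.span F {f | ∃ a : Fin (2 * m + 1) → ℕ,
        (∀ i, a i < p) ∧ a ≠ (fun _ => p - 1) ∧ f = xpow F p (2 * m + 1) a}
        ≤ LinearMap.ker (coeffT F p (2 * m + 1) (fun _ => p - 1)) := by
      rw [Submodule.span_le]
      rintro _ ⟨a, _, ha, rfl⟩
      simp [coeffT_xpow hτ, ha]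
    exact hle hf
  · intro hf
    have h : f = ∑ a ∈ Fintype.piFinset (fun _ : Fin (2 * m + 1) => Finset.range p),
        coeffT F p (2 * m + 1) a f • xpow F p (2 * m + 1) a := by
      refine ext_coeffT fun a ha => ?_
      rw [map_sum, Finset.sum_eq_single a]
      · rw [map_smul, coeffT_xpow ha, if_pos rfl, smul_eq_mul, mul_one]
      · intro b _ hb
        rw [map_smul, coeffT_xpow ha, if_neg hb, smul_zero]
      · intro h
        exact absurd (by simpa using ha) h
    rw [h]
    refine Submodule.sum_mem _ fun a ha => ?_
    by_cases hτa : a = fun _ => p - 1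
    · rw [hτa, hf, zero_smul]
      exact Submodule.zero_mem _
    · exact Submodule.smul_mem _ _ (Submodule.subset_span ⟨a, by simpa using ha, hτa, rfl⟩)

omit [CharP F p] in
lemma xpow_mem_Ksub (hp : p.Prime) (hdvd : p ∣ m + 2) {a : Fin (2 * m + 1) → ℕ}
    (ha : a ≠ fun _ => p - 1) : xpow F p (2 * m + 1) a ∈ Ksub F p m := by
  rw [mem_Ksub hp hdvd, coeffT_xpow (fun _ => Nat.sub_lt hp.pos one_pos), if_neg ha]

omit [CharP F p] in
lemma one_mem_Ksub (hp : p.Prime) (hdvd : p ∣ m + 2) :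
    (1 : TruncP F p (2 * m + 1)) ∈ Ksub F p m := by
  rw [← xpow_zero]
  refine xpow_mem_Ksub hp hdvd fun h => ?_
  have := congrFun h 0
  have := hp.two_le
  simp at *
  omega

omit [CharP F p] in
lemma xv_mem_Ksub (hp : p.Prime) (hp5 : 5 ≤ p) (hdvd : p ∣ m + 2) (i : Fin (2 * m + 1)) :
    xv F p m i ∈ Ksub F p m := by
  refine xpow_mem_Ksub hp hdvd fun h => ?_
  have := congrFun h i
  simp at this
  omega

/-- The coefficient of `x^{τ - ε_n}` in `D_n z` vanishes exactly when `z ∈ K(n)`. -/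
lemma mem_Ksub_iff_Dn (hp : p.Prime) (hp5 : 5 ≤ p) (hdvd : p ∣ m + 2)
    (z : TruncP F p (2 * m + 1)) : z ∈ Ksub F p m ↔
      coeffT F p (2 * m + 1) ((fun _ => p - 1) - Pi.single (Fin.last (2 * m)) 1)
        (Dj F p (2 * m + 1) (Fin.last (2 * m)) z) = 0 := by
  have h0 : (fun _ => p - 1 : Fin (2 * m + 1) → ℕ) (Fin.last (2 * m)) ≠ 0 := by
    change p - 1 ≠ 0
    omega
  rw [mem_Ksub hp hdvd, coeffT_sub_Dj h0, mul_eq_zero,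
    or_iff_right (cast_ne_zero' h0 (Nat.sub_lt hp.pos one_pos))]

/-- A linear map obeying the Leibniz rule on `K(n)`, with values anywhere in `K'(n)`. -/
def LeibnizOn (F : Type*) [Field F] (p m : ℕ) [CharP F p]
    (γ : TruncP F p (2 * m + 1) →ₗ[F] TruncP F p (2 * m + 1)) : Prop :=
  ∀ x ∈ Ksub F p m, ∀ y ∈ Ksub F p m,
    γ (Kbr F p m x y) = Kbr F p m (γ x) y + Kbr F p m x (γ y)

lemma LeibnizOn.sub_adK {γ : TruncP F p (2 * m + 1) →ₗ[F] TruncP F p (2 * m + 1)}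
    (hγ : LeibnizOn F p m γ) (z : TruncP F p (2 * m + 1)) : LeibnizOn F p m (γ - adK z) := by
  intro x hx y hy
  change γ (Kbr F p m x y) - Kbr F p m z (Kbr F p m x y)
    = Kbr F p m (γ x - Kbr F p m z x) y + Kbr F p m x (γ y - Kbr F p m z y)
  rw [hγ x hx y hy, Kbr_jacobi z x y, Kbr_sub_left, Kbr_sub_right]
  ring

end LowDegree

/-! ### Normalising a derivation on `1`, on `x_i` and on `x_n` -/

section Normalisation

variable {F : Type*} [Field F] {p m : ℕ} [CharP F p]

lemma Kbr_one_xv (i : Fin (2 * m)) : Kbr F p m 1 (xv F p m i.castSucc) = 0 := by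
  rw [Kbr_one, Dj_xv, if_neg (castSucc_ne_last' i).symm, smul_zero]

lemma Kbr_one_xlast :
    Kbr F p m 1 (xv F p m (Fin.last (2 * m))) = (2 : F) • (1 : TruncP F p (2 * m + 1)) := by
  rw [Kbr_one, Dj_xv, if_pos rfl]

lemma Kbr_xv_xlast (i : Fin (2 * m)) :
    Kbr F p m (xv F p m i.castSucc) (xv F p m (Fin.last (2 * m))) = xv F p m i.castSucc := by
  rw [Kbr_antisymm, Kbr_xlast, EulK_xv, neg_neg]

omit [Field F] in
lemma two_ne_zero' (hp5 : 5 ≤ p) [Field F] [CharP F p] : (2 : F) ≠ 0 := by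
  have := cast_ne_zero' (F := F) (p := p) (k := 2) (by omega) (by omega)
  simpa using this

/-- No monomial of `γ(1)` has `x_n`-exponent `p - 1`. Such monomials do not occur in the image of
`D_n`; the relation `[1, x_i] = 0` therefore excludes those involving some `x_{i'}`, and
`[1, x_n] = 2` excludes `x_n^{p-1}` itself. -/
lemma coeffT_map_one (hp : p.Prime) (hp5 : 5 ≤ p) (hdvd : p ∣ m + 2)
    {γ : TruncP F p (2 * m + 1) →ₗ[F] TruncP F p (2 * m + 1)} (hγ : LeibnizOn F p m γ)
    {b : Fin (2 * m + 1) → ℕ} (hb : ∀ i, b i < p) (hbn : b (Fin.last (2 * m)) = p - 1) :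
    coeffT F p (2 * m + 1) b (γ 1) = 0 := by
  have h1 := one_mem_Ksub (F := F) hp hdvd
  have hx := xv_mem_Ksub (F := F) hp hp5 hdvd
  by_cases hex : ∃ k : Fin (2 * m), b k.castSucc ≠ 0
  · obtain ⟨k, hk⟩ := hex
    obtain ⟨i, rfl⟩ : ∃ i, cj m i = k := ⟨cj m k, cj_cj k⟩
    refine coeffT_eq_zero_of_Dj hb hk ?_
    set a := b - Pi.single (cj m i).castSucc 1 with ha
    have hab : ∀ j, a j < p := sub_single_lt hb _
    have han : a (Fin.last (2 * m)) = p - 1 := by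
      simp [ha, hbn]
    have key := hγ 1 h1 (xv F p m i.castSucc) (hx _)
    rw [Kbr_one_xv, map_zero, Kbr_antisymm, Kbr_xv, Kbr_one] at key
    have key2 := congrArg (coeffT F p (2 * m + 1) a) key
    have hz : coeffT F p (2 * m + 1) a (xv F p m i.castSucc
        * Dj F p (2 * m + 1) (Fin.last (2 * m)) (γ 1)) = 0 := by
      rw [coeffT_X_mul hab]
      split_ifs
      · rfl
      · refine coeffT_Dj_top hp ?_ _
        simp [han]
    rw [map_zero, map_add, map_neg, map_add, map_smul, map_smul, hz, coeffT_Dj_top hp han,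
      smul_zero, add_zero, add_zero, smul_eq_mul, zero_eq_neg] at key2
    exact (mul_eq_zero.mp key2).resolve_left (sg_ne_zero i)
  · push Not at hex
    have key := hγ 1 h1 (xv F p m (Fin.last (2 * m))) (hx _)
    rw [Kbr_one_xlast, map_smul, Kbr_antisymm, Kbr_xlast, Kbr_one] at key
    have key2 := congrArg (coeffT F p (2 * m + 1) b) key
    rw [map_add, map_neg, map_smul, map_smul, coeffT_EulK, coeffT_Dj_top hp hbn, smul_zero,
      smul_eq_mul, add_zero] at key2
    have hd : dg F b = -4 := by
      have := cast_pred_add_one (F := F) hp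
      simp only [dg, hex, hbn, Nat.cast_zero, Finset.sum_const_zero]
      linear_combination 2 * this
    rw [hd] at key2
    have h2 := two_ne_zero' (F := F) hp5
    have : (2 : F) * coeffT F p (2 * m + 1) b (γ 1) = 0 := by linear_combination -key2
    exact (mul_eq_zero.mp this).resolve_left h2

/-- If `γ(1)` has no `x^{τ - ε_n}`-term, then `γ(1) = [z, 1]` for some `z ∈ K(n)`. -/
lemma exists_normalise_one (hp : p.Prime) (hp5 : 5 ≤ p) (hdvd : p ∣ m + 2)
    {γ : TruncP F p (2 * m + 1) →ₗ[F] TruncP F p (2 * m + 1)} (hγ : LeibnizOn F p m γ)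
    (h : coeffT F p (2 * m + 1) ((fun _ => p - 1) - Pi.single (Fin.last (2 * m)) 1) (γ 1) = 0) :
    ∃ z ∈ Ksub F p m, γ 1 = Kbr F p m z 1 := by
  have h2 := two_ne_zero' (F := F) hp5
  obtain ⟨z, hz⟩ := exists_antideriv hp (Fin.last (2 * m)) ((-(2 : F)⁻¹) • γ 1)
    (fun a ha han => by rw [map_smul, coeffT_map_one hp hp5 hdvd hγ ha han, smul_zero])
  refine ⟨z, ?_, ?_⟩
  · rw [mem_Ksub_iff_Dn hp hp5 hdvd, hz, map_smul, h, smul_zero]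
  · rw [Kbr_antisymm, Kbr_one, hz, smul_smul, ← neg_smul]
    rw [mul_neg, mul_inv_cancel₀ h2, neg_neg, one_smul]

/-- If `γ(1) = 0`, then `γ` agrees with an inner derivation on `1` and on all `x_i`, `i < n`. -/
lemma exists_normalise_xv (hp : p.Prime) (hp5 : 5 ≤ p) (hdvd : p ∣ m + 2)
    {γ : TruncP F p (2 * m + 1) →ₗ[F] TruncP F p (2 * m + 1)} (hγ : LeibnizOn F p m γ)
    (h : γ 1 = 0) :
    ∃ z ∈ Ksub F p m, Kbr F p m z 1 = 0 ∧
      ∀ i : Fin (2 * m), γ (xv F p m i.castSucc) = Kbr F p m z (xv F p m i.castSucc) := by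
  have h1 := one_mem_Ksub (F := F) hp hdvd
  have hx := xv_mem_Ksub (F := F) hp hp5 hdvd
  have h2 := two_ne_zero' (F := F) hp5
  have hDn : ∀ i : Fin (2 * m),
      Dj F p (2 * m + 1) (Fin.last (2 * m)) (γ (xv F p m i.castSucc)) = 0 := by
    intro i
    have key := hγ 1 h1 (xv F p m i.castSucc) (hx _)
    rw [Kbr_one_xv, map_zero, h, Kbr_zero_left, zero_add, Kbr_one] at key
    exact (smul_eq_zero.mp key.symm).resolve_left h2
  have hDw : Dj F p (2 * m + 1) (Fin.last (2 * m)) (γ (xv F p m (Fin.last (2 * m)))) = 0 := by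
    have key := hγ 1 h1 (xv F p m (Fin.last (2 * m))) (hx _)
    rw [Kbr_one_xlast, map_smul, h, Kbr_zero_left, zero_add, Kbr_one, smul_zero] at key
    exact (smul_eq_zero.mp key.symm).resolve_left h2
  have hcl : ∀ i j : Fin (2 * m),
      sg F m i • Dj F p (2 * m + 1) (cj m i).castSucc (γ (xv F p m j.castSucc))
        = sg F m j • Dj F p (2 * m + 1) (cj m j).castSucc (γ (xv F p m i.castSucc)) := by
    intro i j
    have key := hγ (xv F p m i.castSucc) (hx _) (xv F p m j.castSucc) (hx _)
    have hconst : γ (Kbr F p m (xv F p m i.castSucc) (xv F p m j.castSucc)) = 0 := by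
      rw [Kbr_xv, Dj_xv, Dj_xv, if_neg (castSucc_ne_last' j).symm, mul_zero, add_zero, map_smul]
      split_ifs <;> simp [h]
    rw [hconst, Kbr_antisymm, Kbr_xv, Kbr_xv, hDn, hDn, mul_zero, mul_zero, add_zero,
      add_zero] at key
    linear_combination -key
  have hE : ∀ i : Fin (2 * m), γ (xv F p m i.castSucc) = - EulK F p m (γ (xv F p m i.castSucc))
      + sg F m i • Dj F p (2 * m + 1) (cj m i).castSucc (γ (xv F p m (Fin.last (2 * m)))) := by
    intro i
    have key := hγ (xv F p m i.castSucc) (hx _) (xv F p m (Fin.last (2 * m))) (hx _)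
    rwa [Kbr_xv_xlast, Kbr_antisymm, Kbr_xlast, Kbr_xv, hDw, mul_zero, add_zero] at key
  -- the exponent `p - 1` of `x_{i'}` does not occur in `γ(x_i)`
  have htop : ∀ (i : Fin (2 * m)) (a : Fin (2 * m + 1) → ℕ), (∀ k, a k < p) →
      a (cj m i).castSucc = p - 1 →
      coeffT F p (2 * m + 1) a (γ (xv F p m i.castSucc)) = 0 := by
    intro i a ha hai
    by_cases han : a (Fin.last (2 * m)) = 0
    · by_cases hex : ∃ j : Fin (2 * m), j ≠ cj m i ∧ a j.castSucc ≠ 0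
      · obtain ⟨j', hj', haj⟩ := hex
        obtain ⟨j, rfl⟩ : ∃ j, cj m j = j' := ⟨cj m j', cj_cj j'⟩
        refine coeffT_eq_zero_of_Dj ha haj ?_
        have key := congrArg (coeffT F p (2 * m + 1) (a - Pi.single (cj m j).castSucc 1))
          (hcl i j)
        rw [map_smul, map_smul, coeffT_Dj_top hp, smul_zero] at key
        · exact (smul_eq_zero.mp key.symm).resolve_left (sg_ne_zero j)
        · have : (cj m i).castSucc ≠ (cj m j).castSucc := fun e =>
            hj' (Fin.castSucc_injective _ e).symm
          simp [this, hai]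
      · push Not at hex
        have key := congrArg (coeffT F p (2 * m + 1) a) (hE i)
        have hd : dg F a = -3 := by
          have := cast_pred_add_one (F := F) hp
          have hs : ∑ j : Fin (2 * m), (a j.castSucc : F) = ((p - 1 : ℕ) : F) := by
            rw [Finset.sum_eq_single (cj m i)]
            · rw [hai]
            · intro j _ hj
              rw [hex j hj, Nat.cast_zero]
            · simp
          rw [dg, hs, han, Nat.cast_zero]
          linear_combination this
        rw [map_add, map_neg, map_smul, coeffT_EulK, coeffT_Dj_top hp hai, smul_zero, add_zero,
          hd] at key
        have : (2 : F) * coeffT F p (2 * m + 1) a (γ (xv F p m i.castSucc)) = 0 := by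
          linear_combination -key
        exact (mul_eq_zero.mp this).resolve_left h2
    · exact coeffT_eq_zero_of_Dj ha han (by rw [hDn, map_zero])
  -- the prescribed gradient of `z`
  let g : Fin (2 * m + 1) → TruncP F p (2 * m + 1) :=
    Fin.lastCases 0 fun k => sg F m k • γ (xv F p m (cj m k).castSucc)
  have gl : g (Fin.last (2 * m)) = 0 := by simp [g]
  have gc : ∀ k : Fin (2 * m), g k.castSucc = sg F m k • γ (xv F p m (cj m k).castSucc) := by
    intro k
    simp [g]
  obtain ⟨z, hz⟩ := poincare (F := F) (p := p) hp g (by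
      intro i j
      induction i using Fin.lastCases with
      | last =>
        induction j using Fin.lastCases with
        | last => rfl
        | cast j => rw [gl, gc, Dj_smul, hDn, smul_zero, map_zero]
      | cast i =>
        induction j using Fin.lastCases with
        | last => rw [gl, gc, Dj_smul, hDn, smul_zero, map_zero]
        | cast j =>
          have key := hcl (cj m i) (cj m j)
          rw [cj_cj, cj_cj, sg_cj, sg_cj, neg_smul, neg_smul, neg_inj] at key
          have key2 := congrArg (fun t => (sg F m i * sg F m j) • t) key
          simp only [smul_smul] at key2
          rw [mul_right_comm, sg_mul_sg, one_mul, mul_assoc, sg_mul_sg, mul_one] at key2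
          rw [gc, gc, Dj_smul, Dj_smul, key2])
    (by
      intro i a hai
      by_cases ha : ∀ k, a k < p
      · induction i using Fin.lastCases with
        | last => rw [gl, map_zero]
        | cast i =>
          rw [gc, map_smul, htop (cj m i) a ha (by rw [cj_cj, hai]), smul_zero]
      · exact coeffT_of_not ha _)
  refine ⟨z, ?_, ?_, ?_⟩
  · rw [mem_Ksub_iff_Dn hp hp5 hdvd, hz, gl, map_zero]
  · rw [Kbr_antisymm, Kbr_one, hz, gl, smul_zero, neg_zero]
  · intro i
    rw [Kbr_antisymm, Kbr_xv, hz, hz, gl, gc, mul_zero, add_zero, cj_cj, smul_smul, sg_cj,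
      mul_neg, sg_mul_sg, neg_smul, one_smul, neg_neg]

/-- If `γ` kills `1` and all `x_i` with `i < n`, then `γ(x_n)` is a constant, so it can be removed
by a multiple of `ad 1`. -/
lemma exists_normalise_xlast (hp : p.Prime) (hp5 : 5 ≤ p) (hdvd : p ∣ m + 2)
    {γ : TruncP F p (2 * m + 1) →ₗ[F] TruncP F p (2 * m + 1)} (hγ : LeibnizOn F p m γ)
    (h : γ 1 = 0) (hxi : ∀ i : Fin (2 * m), γ (xv F p m i.castSucc) = 0) :
    ∃ z ∈ Ksub F p m, Kbr F p m z 1 = 0 ∧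
      (∀ i : Fin (2 * m), Kbr F p m z (xv F p m i.castSucc) = 0) ∧
      γ (xv F p m (Fin.last (2 * m))) = Kbr F p m z (xv F p m (Fin.last (2 * m))) := by
  have h1 := one_mem_Ksub (F := F) hp hdvd
  have hx := xv_mem_Ksub (F := F) hp hp5 hdvd
  have h2 := two_ne_zero' (F := F) hp5
  have hDw : Dj F p (2 * m + 1) (Fin.last (2 * m)) (γ (xv F p m (Fin.last (2 * m)))) = 0 := by
    have key := hγ 1 h1 (xv F p m (Fin.last (2 * m))) (hx _)
    rw [Kbr_one_xlast, map_smul, h, Kbr_zero_left, zero_add, Kbr_one, smul_zero] at key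
    exact (smul_eq_zero.mp key.symm).resolve_left h2
  obtain ⟨c, hc⟩ := eq_const_of_Dj (f := γ (xv F p m (Fin.last (2 * m)))) (by
    intro k
    induction k using Fin.lastCases with
    | last => exact hDw
    | cast k =>
      have key := hγ (xv F p m (cj m k).castSucc) (hx _) (xv F p m (Fin.last (2 * m))) (hx _)
      rw [Kbr_xv_xlast, hxi, Kbr_zero_left, zero_add, Kbr_xv, hDw, mul_zero, add_zero,
        cj_cj] at key
      exact (smul_eq_zero.mp key.symm).resolve_left (sg_ne_zero _))
  refine ⟨(c * (2 : F)⁻¹) • 1, Submodule.smul_mem _ _ h1, ?_, ?_, ?_⟩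
  · rw [Kbr_smul_left, Kbr_one, Derivation.map_one_eq_zero, smul_zero, smul_zero]
  · intro i
    rw [Kbr_smul_left, Kbr_one_xv, smul_zero]
  · rw [Kbr_smul_left, Kbr_one_xlast, smul_smul, mul_assoc, inv_mul_cancel₀ h2, mul_one, hc]

end Normalisation

/-! ### Derivations killing `1` and all variables -/

section Vanishing

variable {F : Type*} [Field F] {p m : ℕ} [CharP F p]

/-- The weight `∑_{i<n} a_i + 2 a_n` of an exponent as a natural number; the contact degree of
`x^a` is `wt a - 2`. -/
def wt (a : Fin (2 * m + 1) → ℕ) : ℕ :=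
  ∑ j : Fin (2 * m), a j.castSucc + 2 * a (Fin.last (2 * m))

omit [CharP F p] in
lemma dg_eq_wt (a : Fin (2 * m + 1) → ℕ) : dg F a = (wt a : F) - 2 := by
  simp [dg, wt]

lemma wt_add (a b : Fin (2 * m + 1) → ℕ) : wt (a + b) = wt a + wt b := by
  simp only [wt, Pi.add_apply, Finset.sum_add_distrib]
  ring

lemma wt_castSucc (i : Fin (2 * m)) : wt (Pi.single i.castSucc 1 : Fin (2 * m + 1) → ℕ) = 1 := by
  rw [wt, Finset.sum_eq_single i]
  · simp
  · intro j _ hj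
    rw [Pi.single_eq_of_ne (fun e => hj (Fin.castSucc_injective _ e))]
  · simp

lemma wt_last : wt (Pi.single (Fin.last (2 * m)) 1 : Fin (2 * m + 1) → ℕ) = 2 := by
  simp [wt]

lemma wt_single_pos (k : Fin (2 * m + 1)) : 0 < wt (Pi.single k 1 : Fin (2 * m + 1) → ℕ) := by
  induction k using Fin.lastCases with
  | last => rw [wt_last]; norm_num
  | cast i => rw [wt_castSucc]; norm_num

lemma wt_sub_single {a : Fin (2 * m + 1) → ℕ} {k : Fin (2 * m + 1)} (h : a k ≠ 0) :
    wt (a - Pi.single k 1) + wt (Pi.single k 1 : Fin (2 * m + 1) → ℕ) = wt a := by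
  rw [← wt_add, sub_single_add h]

lemma ne_top_of_apply {a : Fin (2 * m + 1) → ℕ} (k : Fin (2 * m + 1)) (h : a k ≠ p - 1) :
    a ≠ fun _ => p - 1 := fun e => h (congrFun e k)

/-- A derivation killing `1` and all variables, together with the hypothesis that it kills all
monomials of weight less than `M`. -/
structure KillsBelow (γ : TruncP F p (2 * m + 1) →ₗ[F] TruncP F p (2 * m + 1)) (M : ℕ) :
    Prop where
  leib : LeibnizOn F p m γ
  one : γ 1 = 0
  xi : ∀ i : Fin (2 * m), γ (xv F p m i.castSucc) = 0
  xn : γ (xv F p m (Fin.last (2 * m))) = 0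
  below : ∀ b : Fin (2 * m + 1) → ℕ, wt b < M → b ≠ (fun _ => p - 1) →
    γ (xpow F p (2 * m + 1) b) = 0

variable {γ : TruncP F p (2 * m + 1) →ₗ[F] TruncP F p (2 * m + 1)}

/-- The image of a monomial of the first uncontrolled weight `M` is a constant `c` (its brackets
with `1` and `x_i` have smaller weight), and the Euler operator `ad x_n` forces `M c = 0`. -/
lemma KillsBelow.const (hp : p.Prime) (hp5 : 5 ≤ p) (hdvd : p ∣ m + 2)
    {a : Fin (2 * m + 1) → ℕ} (H : KillsBelow γ (wt a)) (hab : ∀ i, a i < p)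
    (ha : a ≠ fun _ => p - 1) :
    ∃ c : F, γ (xpow F p (2 * m + 1) a) = c • 1 ∧ (wt a : F) * c = 0 := by
  have h1 := one_mem_Ksub (F := F) hp hdvd
  have hx := xv_mem_Ksub (F := F) hp hp5 hdvd
  have h2 := two_ne_zero' (F := F) hp5
  have hm := xpow_mem_Ksub (F := F) hp hdvd ha
  have hD : ∀ k, γ (Dj F p (2 * m + 1) k (xpow F p (2 * m + 1) a)) = 0 := by
    intro k
    rw [Dj_xpow, map_smul]
    by_cases hk : a k = 0
    · rw [hk, Nat.cast_zero, zero_smul]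
    · have h3 := wt_sub_single hk
      have h4 := wt_single_pos k
      rw [H.below _ (by omega) (ne_top_of_apply k ?_), smul_zero]
      have := hab k
      simp only [Pi.sub_apply, Pi.single_eq_same]
      omega
  have hn : Dj F p (2 * m + 1) (Fin.last (2 * m)) (γ (xpow F p (2 * m + 1) a)) = 0 := by
    have key := H.leib 1 h1 _ hm
    rw [Kbr_one, map_smul, hD, H.one, Kbr_zero_left, Kbr_one, zero_add, smul_zero] at key
    exact (smul_eq_zero.mp key.symm).resolve_left h2
  have hi : ∀ i : Fin (2 * m), γ (xv F p m i.castSucc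
      * Dj F p (2 * m + 1) (Fin.last (2 * m)) (xpow F p (2 * m + 1) a)) = 0 := by
    intro i
    rw [Dj_xpow, mul_smulT, map_smul, xpow_mul]
    by_cases hk : a (Fin.last (2 * m)) = 0
    · rw [hk, Nat.cast_zero, zero_smul]
    · have h3 := wt_sub_single hk
      rw [wt_last] at h3
      rw [H.below _ (by rw [wt_add, wt_castSucc]; omega)
        (ne_top_of_apply (Fin.last (2 * m)) ?_), smul_zero]
      have := hab (Fin.last (2 * m))
      simp only [Pi.add_apply, Pi.sub_apply, Pi.single_eq_same,
        Pi.single_eq_of_ne (castSucc_ne_last' i).symm]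
      omega
  obtain ⟨c, hc⟩ := eq_const_of_Dj (f := γ (xpow F p (2 * m + 1) a)) (by
    intro k
    induction k using Fin.lastCases with
    | last => exact hn
    | cast k =>
      have key := H.leib _ (hx (cj m k).castSucc) _ hm
      rw [Kbr_xv, map_add, map_smul, hD, hi, H.xi, Kbr_zero_left, Kbr_xv, hn, mul_zero, add_zero,
        cj_cj, smul_zero, add_zero, zero_add] at key
      exact (smul_eq_zero.mp key.symm).resolve_left (sg_ne_zero _))
  refine ⟨c, hc, ?_⟩
  have key := H.leib _ (hx (Fin.last (2 * m))) _ hm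
  rw [Kbr_xlast, EulK_xpow, H.xn, Kbr_zero_left, map_smul, hc, Kbr_smul_right, Kbr_xlast, EulK_one,
    zero_add, smul_smul, smul_smul, dg_eq_wt] at key
  have key2 := congrArg (coeffT F p (2 * m + 1) 0) key
  rw [← xpow_zero, map_smul, map_smul, coeffT_xpow (a := 0) (fun _ => hp.pos), if_pos rfl, smul_eq_mul,
    smul_eq_mul] at key2
  linear_combination key2

/-- The images of the monomials of weight `wt b` are constants, and constants are killed by
`ad (x_i x_j)`; so `γ` vanishes on `[x_i x_j, x^b]`. -/
lemma KillsBelow.quad (hp : p.Prime) (hp5 : 5 ≤ p) (hdvd : p ∣ m + 2)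
    {b : Fin (2 * m + 1) → ℕ} (H : KillsBelow γ (wt b)) (hM : 5 ≤ wt b) (hbb : ∀ i, b i < p)
    (hb : b ≠ fun _ => p - 1) (i j : Fin (2 * m)) :
    sg F m i • γ (xv F p m j.castSucc
        * Dj F p (2 * m + 1) (cj m i).castSucc (xpow F p (2 * m + 1) b))
      + sg F m j • γ (xv F p m i.castSucc
        * Dj F p (2 * m + 1) (cj m j).castSucc (xpow F p (2 * m + 1) b)) = 0 := by
  have hq : (Pi.single i.castSucc 1 + Pi.single j.castSucc 1 : Fin (2 * m + 1) → ℕ)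
      ≠ fun _ => p - 1 := ne_top_of_apply (Fin.last (2 * m)) (by
        simp only [Pi.add_apply, Pi.single_eq_of_ne (castSucc_ne_last' _).symm]
        omega)
  obtain ⟨c, hc, -⟩ := H.const hp hp5 hdvd hbb hb
  have key := H.leib (xv F p m i.castSucc * xv F p m j.castSucc)
    (by rw [xpow_mul]; exact xpow_mem_Ksub hp hdvd hq) _ (xpow_mem_Ksub (F := F) hp hdvd hb)
  have h0 : γ (xv F p m i.castSucc * xv F p m j.castSucc) = 0 := by
    rw [xpow_mul]
    exact H.below _ (by rw [wt_add, wt_castSucc, wt_castSucc]; omega) hq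
  rw [h0, hc, Kbr_zero_left, Kbr_smul_right, Kbr_xv_mul_xv, Kbr_xv_mul_xv,
    Derivation.map_one_eq_zero, Derivation.map_one_eq_zero, mul_zero, mul_zero, smul_zero,
    smul_zero, add_zero, smul_zero, add_zero, map_add, map_smul, map_smul] at key
  exact key

/-- If `a_i ≥ 1` and `a_{i'} ≤ p - 2`, then `x^a` is a nonzero multiple of
`[x_i², x^{a - ε_i + ε_{i'}}]`. -/
lemma KillsBelow.unbalanced (hp : p.Prime) (hp5 : 5 ≤ p) (hdvd : p ∣ m + 2)
    {a : Fin (2 * m + 1) → ℕ} (H : KillsBelow γ (wt a)) (hM : 5 ≤ wt a) (hab : ∀ i, a i < p)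
    (i : Fin (2 * m)) (hi : a i.castSucc ≠ 0) (hi' : a (cj m i).castSucc + 1 < p) :
    γ (xpow F p (2 * m + 1) a) = 0 := by
  have hne : (cj m i).castSucc ≠ i.castSucc := fun e => cj_ne i (Fin.castSucc_injective _ e)
  set c := a - Pi.single i.castSucc 1 with hc
  have hca : Pi.single i.castSucc 1 + c = a := by
    rw [add_comm _ c, hc, sub_single_add hi]
  have hci : c (cj m i).castSucc = a (cj m i).castSucc := by
    simp [hc, Pi.single_eq_of_ne hne]
  set b := c + Pi.single (cj m i).castSucc 1 with hb
  have hwt : wt b = wt a := by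
    rw [hb, ← hca, wt_add, wt_add, wt_castSucc, wt_castSucc, add_comm]
  have hbi' : b (cj m i).castSucc = a (cj m i).castSucc + 1 := by
    simp [hb, hci]
  have hbc : b - Pi.single (cj m i).castSucc 1 = c := by rw [hb, add_tsub_cancel_right]
  have hbb : ∀ k, b k < p := by
    intro k
    by_cases hk : k = (cj m i).castSucc
    · rw [hk, hbi']; exact hi'
    · have := sub_single_lt hab i.castSucc k
      simpa [hb, Pi.single_eq_of_ne hk, hc] using this
  have hbτ : b ≠ fun _ => p - 1 := ne_top_of_apply i.castSucc (by
    have := hab i.castSucc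
    simp only [hb, hc, Pi.add_apply, Pi.sub_apply, Pi.single_eq_same,
      Pi.single_eq_of_ne hne.symm]
    omega)
  rw [← hwt] at H hM
  have key := H.quad hp hp5 hdvd hM hbb hbτ i i
  rw [Dj_xpow, hbc, hbi', mul_smulT, xpow_mul, hca, map_smul, smul_smul, ← add_smul] at key
  refine (smul_eq_zero.mp key).resolve_left ?_
  have h3 := cast_ne_zero' (F := F) (p := p) (Nat.succ_ne_zero _) hi'
  rw [← two_mul]
  exact mul_ne_zero (two_ne_zero' hp5) (mul_ne_zero (sg_ne_zero i) h3)

/-- If `a_i = a_{i'} = 0` and `a_j ≥ 1`, then modulo a monomial covered by the previous lemma,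
`x^a` is a nonzero multiple of `[x_i x_j, x^{a - ε_j + ε_{i'}}]`. -/
lemma KillsBelow.mixed (hp : p.Prime) (hp5 : 5 ≤ p) (hdvd : p ∣ m + 2)
    {a : Fin (2 * m + 1) → ℕ} (H : KillsBelow γ (wt a)) (hM : 5 ≤ wt a) (hab : ∀ i, a i < p)
    (i j : Fin (2 * m)) (hi : a i.castSucc = 0) (hi' : a (cj m i).castSucc = 0)
    (hj : a j.castSucc ≠ 0) :
    γ (xpow F p (2 * m + 1) a) = 0 := by
  have hinj : ∀ {k l : Fin (2 * m)}, k ≠ l → k.castSucc ≠ l.castSucc :=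
    fun h e => h (Fin.castSucc_injective _ e)
  have hij : i ≠ j := by rintro rfl; exact hj hi
  have hi'j : cj m i ≠ j := by rintro rfl; exact hj hi'
  have hi'j' : cj m i ≠ cj m j := fun e => hij (by rw [← cj_cj i, e, cj_cj])
  have hij' : i ≠ cj m j := fun e => hi'j (by rw [e, cj_cj])
  have hii' : cj m i ≠ i := cj_ne i
  set c := a - Pi.single j.castSucc 1 with hc
  have hca : Pi.single j.castSucc 1 + c = a := by
    rw [add_comm _ c, hc, sub_single_add hj]
  set b := c + Pi.single (cj m i).castSucc 1 with hb
  have hwt : wt b = wt a := by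
    rw [hb, ← hca, wt_add, wt_add, wt_castSucc, wt_castSucc, add_comm]
  have hbi' : b (cj m i).castSucc = 1 := by
    simp [hb, hc, hi']
  have hbi : b i.castSucc = 0 := by
    simp [hb, hc, hi, Pi.single_eq_of_ne (hinj hii'.symm)]
  have hbc : b - Pi.single (cj m i).castSucc 1 = c := by rw [hb, add_tsub_cancel_right]
  have hbb : ∀ k, b k < p := by
    intro k
    by_cases hk : k = (cj m i).castSucc
    · rw [hk, hbi']; omega
    · have := sub_single_lt hab j.castSucc k
      simpa [hb, Pi.single_eq_of_ne hk, hc] using this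
  have hbτ : b ≠ fun _ => p - 1 := ne_top_of_apply i.castSucc (by omega)
  have H' := H
  have hM' := hM
  rw [← hwt] at H' hM'
  have key := H'.quad hp hp5 hdvd hM' hbb hbτ i j
  have hz : γ (xv F p m i.castSucc
      * Dj F p (2 * m + 1) (cj m j).castSucc (xpow F p (2 * m + 1) b)) = 0 := by
    rw [Dj_xpow, mul_smulT, map_smul, xpow_mul]
    by_cases h0 : b (cj m j).castSucc = 0
    · rw [h0, Nat.cast_zero, zero_smul]
    · set d := Pi.single i.castSucc 1 + (b - Pi.single (cj m j).castSucc 1) with hd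
      have hwd : wt d = wt a := by
        have := wt_sub_single h0
        rw [wt_castSucc] at this
        rw [hd, wt_add, wt_castSucc, ← hwt, ← this, add_comm]
      have hdi : d i.castSucc = 1 := by simp [hd, hbi]
      have hdi' : d (cj m i).castSucc = 1 := by
        simp [hd, hbi', Pi.single_eq_of_ne (hinj hii'), Pi.single_eq_of_ne (hinj hi'j')]
      have hdb : ∀ k, d k < p := by
        intro k
        by_cases hk : k = i.castSucc
        · rw [hk, hdi]; omega
        · have := sub_single_lt hbb (cj m j).castSucc k
          simpa [hd, Pi.single_eq_of_ne hk] using this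
      rw [← hwd] at H hM
      rw [H.unbalanced hp hp5 hdvd hM hdb i (by omega) (by omega), smul_zero]
  rw [hz, smul_zero, add_zero, Dj_xpow, hbc, hbi', mul_smulT, xpow_mul, hca, map_smul,
    Nat.cast_one, one_smul] at key
  exact (smul_eq_zero.mp key).resolve_left (sg_ne_zero i)

/-- If `a_i = a_{i'} = p - 1` and `a_n = -2` in `F`, as for `a = τ - ε_n`, then modulo a monomial
covered by `KillsBelow.unbalanced`, `x^a` is a nonzero multiple of `[x_i x_n, x^{a - ε_i}]`. -/
lemma KillsBelow.top (hp : p.Prime) (hp5 : 5 ≤ p) (hdvd : p ∣ m + 2)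
    {a : Fin (2 * m + 1) → ℕ} (H : KillsBelow γ (wt a)) (hM : 5 ≤ wt a) (hab : ∀ i, a i < p)
    (hM0 : (wt a : F) = 0) (i : Fin (2 * m)) (hi : a i.castSucc = p - 1)
    (hi' : a (cj m i).castSucc = p - 1) (hn : (a (Fin.last (2 * m)) : F) + 2 = 0) :
    γ (xpow F p (2 * m + 1) a) = 0 := by
  have hpc := cast_pred_add_one (F := F) hp
  have hne : (cj m i).castSucc ≠ i.castSucc := fun e => cj_ne i (Fin.castSucc_injective _ e)
  have hil := castSucc_ne_last' i
  have hi'l := castSucc_ne_last' (cj m i)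
  have hi0 : a i.castSucc ≠ 0 := by omega
  have hn0 : a (Fin.last (2 * m)) ≠ 0 := by
    intro h
    rw [h, Nat.cast_zero, zero_add] at hn
    exact two_ne_zero' hp5 hn
  have hn1 : a (Fin.last (2 * m)) ≠ p - 1 := by
    intro h
    rw [h] at hn
    exact one_ne_zero (α := F) (by linear_combination hn - hpc)
  set c := a - Pi.single i.castSucc 1 with hc
  have hca : Pi.single i.castSucc 1 + c = a := by
    rw [add_comm _ c, hc, sub_single_add hi0]
  have hwc : wt c + 1 = wt a := by
    rw [← hca, wt_add, wt_castSucc, add_comm]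
  have hcn : c (Fin.last (2 * m)) = a (Fin.last (2 * m)) := by
    simp [hc]
  have hci : c i.castSucc = p - 2 := by
    simp only [hc, hi, Pi.sub_apply, Pi.single_eq_same]
    omega
  have hci' : c (cj m i).castSucc = p - 1 := by
    simp [hc, hi', Pi.single_eq_of_ne hne]
  have hcτ : c ≠ fun _ => p - 1 := ne_top_of_apply i.castSucc (by omega)
  have hq : (Pi.single i.castSucc 1 + Pi.single (Fin.last (2 * m)) 1 : Fin (2 * m + 1) → ℕ)
      ≠ fun _ => p - 1 := ne_top_of_apply (Fin.last (2 * m)) (by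
        simp only [Pi.add_apply, Pi.single_eq_of_ne hil.symm, Pi.single_eq_same]
        omega)
  have key := H.leib (xv F p m i.castSucc * xv F p m (Fin.last (2 * m)))
    (by rw [xpow_mul]; exact xpow_mem_Ksub hp hdvd hq) _ (xpow_mem_Ksub (F := F) hp hdvd hcτ)
  have h0 : γ (xv F p m i.castSucc * xv F p m (Fin.last (2 * m))) = 0 := by
    rw [xpow_mul]
    exact H.below _ (by rw [wt_add, wt_castSucc, wt_last]; omega) hq
  have hz : γ (xv F p m (Fin.last (2 * m))
      * Dj F p (2 * m + 1) (cj m i).castSucc (xpow F p (2 * m + 1) c)) = 0 := by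
    rw [Dj_xpow, mul_smulT, map_smul, xpow_mul]
    set d := Pi.single (Fin.last (2 * m)) 1 + (c - Pi.single (cj m i).castSucc 1) with hd
    have hwd : wt d = wt a := by
      have := wt_sub_single (a := c) (k := (cj m i).castSucc) (by omega)
      rw [wt_castSucc] at this
      rw [hd, wt_add, wt_last]
      omega
    have hdi : d i.castSucc = p - 2 := by
      simp [hd, hci, Pi.single_eq_of_ne hne.symm]
    have hdi' : d (cj m i).castSucc = p - 2 := by
      simp only [hd, hci', Pi.add_apply, Pi.sub_apply, Pi.single_eq_same, Pi.single_eq_of_ne hi'l]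
      omega
    have hdb : ∀ k, d k < p := by
      intro k
      by_cases hk : k = Fin.last (2 * m)
      · have := hab (Fin.last (2 * m))
        subst hk
        simp only [hd, hcn, Pi.add_apply, Pi.sub_apply, Pi.single_eq_same,
          Pi.single_eq_of_ne hi'l.symm]
        omega
      · have := sub_single_lt (sub_single_lt hab i.castSucc) (cj m i).castSucc k
        simpa [hd, hc, Pi.single_eq_of_ne hk] using this
    rw [← hwd] at H hM
    rw [H.unbalanced hp hp5 hdvd hM hdb i (by omega) (by omega), smul_zero]
  have hxx : xv F p m i.castSucc * (xv F p m (Fin.last (2 * m))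
      * Dj F p (2 * m + 1) (Fin.last (2 * m)) (xpow F p (2 * m + 1) c))
      = (a (Fin.last (2 * m)) : F) • xpow F p (2 * m + 1) a := by
    rw [Dj_xpow, mul_smulT, mul_smulT, xpow_mul, xpow_mul, hcn, add_comm (Pi.single (Fin.last _) 1),
      sub_single_add (by rwa [hcn]), hca]
  rw [h0, H.below c (by omega) hcτ, Kbr_zero_left, Kbr_zero_right, add_zero, Kbr_xv_mul_xlast,
    hxx, EulK_xpow, mul_smulT, xpow_mul, hca, map_sub, map_add, map_smul, map_smul, map_smul, hz,
    smul_zero, zero_add, ← sub_smul] at key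
  refine (smul_eq_zero.mp key).resolve_left ?_
  have hw : (wt c : F) + 1 = 0 := by
    rw [← hM0, ← hwc, Nat.cast_add, Nat.cast_one]
  -- the coefficient is `deg(x^c) - c_n = -3 + 2`
  rw [dg_eq_wt]
  intro h
  exact one_ne_zero (α := F) (by linear_combination hw - hn - h)

/-- A derivation of `K(n)` killing `1` and all variables kills every monomial of `K(n)`. -/
lemma map_xpow_eq_zero (hp : p.Prime) (hp5 : 5 ≤ p) (hm : 1 ≤ m) (hdvd : p ∣ m + 2)
    (hγ : LeibnizOn F p m γ) (h1 : γ 1 = 0) (hxi : ∀ i : Fin (2 * m), γ (xv F p m i.castSucc) = 0)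
    (hxn : γ (xv F p m (Fin.last (2 * m))) = 0) :
    ∀ (M : ℕ) (a : Fin (2 * m + 1) → ℕ), wt a = M → a ≠ (fun _ => p - 1) →
      γ (xpow F p (2 * m + 1) a) = 0 := by
  intro M
  induction M using Nat.strong_induction_on with
  | _ M ih =>
  rintro a rfl ha
  have H : KillsBelow γ (wt a) := ⟨hγ, h1, hxi, hxn, fun b hb => ih _ hb b rfl⟩
  by_cases hab : ∀ i, a i < p
  swap
  · push Not at hab
    obtain ⟨i, hi⟩ := hab
    rw [xpow_eq_zero hi, map_zero]
  have hpc := cast_pred_add_one (F := F) hp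
  obtain ⟨c, hc, hwc⟩ := H.const hp hp5 hdvd hab ha
  rcases mul_eq_zero.mp hwc with hM0 | rfl
  swap
  · rw [hc, zero_smul]
  by_cases ha0 : a = 0
  · rw [ha0, xpow_zero, h1]
  have hM : 5 ≤ wt a := by
    refine hp5.trans (Nat.le_of_dvd (Nat.pos_of_ne_zero fun h => ha0 ?_)
      ((CharP.cast_eq_zero_iff F p _).mp hM0))
    have h' : ∑ j : Fin (2 * m), a j.castSucc = 0 ∧ a (Fin.last (2 * m)) = 0 := by
      rw [wt] at h
      omega
    funext k
    induction k using Fin.lastCases with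
    | last => exact h'.2
    | cast k => exact (Finset.sum_eq_zero_iff.mp h'.1) k (Finset.mem_univ k)
  by_contra hne
  -- `unbalanced` leaves only exponents with `(a_i, a_{i'})` equal to `(0,0)` or `(p-1,p-1)`
  have hbal : ∀ i : Fin (2 * m), a i.castSucc ≠ 0 → a (cj m i).castSucc = p - 1 := by
    intro i hi
    by_contra h
    have := hab (cj m i).castSucc
    exact hne (H.unbalanced hp hp5 hdvd hM hab i hi (by omega))
  have hbal' : ∀ i : Fin (2 * m), a i.castSucc ≠ 0 → a i.castSucc = p - 1 := by
    intro i hi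
    have := hbal (cj m i) (by rw [hbal i hi]; omega)
    rwa [cj_cj] at this
  by_cases hz : ∃ i : Fin (2 * m), a i.castSucc = 0
  · obtain ⟨i, hi⟩ := hz
    have hi' : a (cj m i).castSucc = 0 := by
      by_contra h
      have := hbal _ h
      rw [cj_cj] at this
      omega
    have hall : ∀ j : Fin (2 * m), a j.castSucc = 0 := by
      intro j
      by_contra hj
      exact hne (H.mixed hp hp5 hdvd hM hab i j hi hi' hj)
    -- `x^a` is a power of `x_n` of weight divisible by `p`, hence constant
    simp only [wt, hall, Finset.sum_const_zero, zero_add, Nat.cast_mul, Nat.cast_ofNat] at hM0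
    have hn := (mul_eq_zero.mp hM0).resolve_left (two_ne_zero' hp5)
    refine ha0 (funext fun k => ?_)
    induction k using Fin.lastCases with
    | last =>
      by_contra h
      exact cast_ne_zero' (F := F) h (hab _) hn
    | cast k => exact hall k
  · push Not at hz
    have hall : ∀ j : Fin (2 * m), a j.castSucc = p - 1 := fun j => hbal' j (hz j)
    have hm2 : (m : F) + 2 = 0 := by
      have := (CharP.cast_eq_zero_iff F p (m + 2)).mpr hdvd
      simpa using this
    have hn : (a (Fin.last (2 * m)) : F) + 2 = 0 := by
      have h := hM0
      simp only [wt, hall, Finset.sum_const, Finset.card_univ, Fintype.card_fin, smul_eq_mul,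
        Nat.cast_add, Nat.cast_mul, Nat.cast_ofNat] at h
      have h' : (2 : F) * ((a (Fin.last (2 * m)) : F) + 2) = 0 := by
        linear_combination h - 2 * (m : F) * hpc + 2 * hm2
      exact (mul_eq_zero.mp h').resolve_left (two_ne_zero' hp5)
    exact hne (H.top hp hp5 hdvd hM hab hM0 ⟨0, by omega⟩ (hall _) (hall _) hn)

lemma map_eq_zero_of_mem (hp : p.Prime) (hp5 : 5 ≤ p) (hm : 1 ≤ m) (hdvd : p ∣ m + 2)
    (hγ : LeibnizOn F p m γ) (h1 : γ 1 = 0) (hxi : ∀ i : Fin (2 * m), γ (xv F p m i.castSucc) = 0)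
    (hxn : γ (xv F p m (Fin.last (2 * m))) = 0) {y : TruncP F p (2 * m + 1)}
    (hy : y ∈ Ksub F p m) : γ y = 0 := by
  suffices h : Ksub F p m ≤ LinearMap.ker γ from h hy
  rw [Ksub, if_pos hdvd, Submodule.span_le]
  rintro _ ⟨a, -, ha, rfl⟩
  exact map_xpow_eq_zero hp hp5 hm hdvd hγ h1 hxi hxn _ a rfl ha

/-- A derivation whose value at `1` has no `x^{τ - ε_n}`-term is inner. -/
lemma inner_of_coeffT_eq_zero (hp : p.Prime) (hp5 : 5 ≤ p) (hm : 1 ≤ m) (hdvd : p ∣ m + 2)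
    (hγ : LeibnizOn F p m γ)
    (h : coeffT F p (2 * m + 1) ((fun _ => p - 1) - Pi.single (Fin.last (2 * m)) 1) (γ 1) = 0) :
    IsInnerOn F (Ksub F p m) (Kbr F p m) γ := by
  obtain ⟨z₁, hz₁, e₁⟩ := exists_normalise_one hp hp5 hdvd hγ h
  have hγ₁ := hγ.sub_adK z₁
  have g₁ : (γ - adK z₁) 1 = 0 := sub_eq_zero.mpr e₁
  obtain ⟨z₂, hz₂, a₂, e₂⟩ := exists_normalise_xv hp hp5 hdvd hγ₁ g₁
  have hγ₂ := hγ₁.sub_adK z₂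
  have g₂ : (γ - adK z₁ - adK z₂) 1 = 0 := by
    change (γ - adK z₁) 1 - Kbr F p m z₂ 1 = 0
    rw [g₁, a₂, sub_zero]
  have x₂ : ∀ i : Fin (2 * m), (γ - adK z₁ - adK z₂) (xv F p m i.castSucc) = 0 :=
    fun i => sub_eq_zero.mpr (e₂ i)
  obtain ⟨z₃, hz₃, a₃, b₃, e₃⟩ := exists_normalise_xlast hp hp5 hdvd hγ₂ g₂ x₂
  have hγ₃ := hγ₂.sub_adK z₃
  refine ⟨z₁ + z₂ + z₃, Submodule.add_mem _ (Submodule.add_mem _ hz₁ hz₂) hz₃, fun y hy => ?_⟩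
  have h0 := map_eq_zero_of_mem hp hp5 hm hdvd hγ₃ (y := y)
    (by
      change (γ - adK z₁ - adK z₂) 1 - Kbr F p m z₃ 1 = 0
      rw [g₂, a₃, sub_zero])
    (fun i => by
      change (γ - adK z₁ - adK z₂) (xv F p m i.castSucc) - Kbr F p m z₃ (xv F p m i.castSucc) = 0
      rw [x₂, b₃, sub_zero])
    (sub_eq_zero.mpr e₃) hy
  change γ y - Kbr F p m z₁ y - Kbr F p m z₂ y - Kbr F p m z₃ y = 0 at h0
  rw [Kbr_add_left, Kbr_add_left]
  linear_combination h0

/-- The value of `ad z`, `z ∈ K(n)`, at `1` is `-2 D_n(z)`, and `z` has no `x^τ`-term. -/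
lemma coeffT_eq_zero_of_inner (hp : p.Prime) (hp5 : 5 ≤ p) (hdvd : p ∣ m + 2)
    (h : IsInnerOn F (Ksub F p m) (Kbr F p m) γ) :
    coeffT F p (2 * m + 1) ((fun _ => p - 1) - Pi.single (Fin.last (2 * m)) 1) (γ 1) = 0 := by
  obtain ⟨z, hz, e⟩ := h
  rw [e 1 (one_mem_Ksub hp hdvd), Kbr_antisymm, Kbr_one, map_neg, map_smul,
    (mem_Ksub_iff_Dn hp hp5 hdvd z).mp hz, smul_zero, neg_zero]

end Vanishing

end ContactAux

/-- Lemma 5.2: if `p ∣ (m+2)`, a derivation `γ : K(n) → K(n)` of the contact algebra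
is inner if and only if the coefficient of the monomial `x^{τ−ε_n}` in `γ(1)` is zero. -/
theorem contact_derivation_inner_criterion
    (p m : ℕ) (hp : p.Prime) (hp5 : 5 ≤ p) (hm : 1 ≤ m) (hdvd : p ∣ (m + 2))
    (F : Type*) [Field F] [IsAlgClosed F] [CharP F p]
    (γ : TruncP F p (2 * m + 1) →ₗ[F] TruncP F p (2 * m + 1))
    (hγ : IsDerivationOn F (Ksub F p m) (Kbr F p m) γ) :
    IsInnerOn F (Ksub F p m) (Kbr F p m) γ ↔
      coeffT F p (2 * m + 1)
        ((fun _ => p - 1) - Pi.single (Fin.last (2 * m)) 1)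
        (γ (1 : TruncP F p (2 * m + 1))) = 0 := by
  constructor
  · exact ContactAux.coeffT_eq_zero_of_inner hp hp5 hdvd
  · exact ContactAux.inner_of_coeffT_eq_zero hp hp5 hm hdvd hγ.2
end
end

section
/- Let n = 2m ≥ 2. An F-linear derivation γ : H(n) → H(n) of the Hamiltonian algebra is inner (i.e. γ = ad z for some z ∈ H(n)) if and only if all three of the following hold, all coefficients being taken with respect to the monomial basis {x^a : x^a ≠ 1, x^τ} of H(n): (i) there exists an index 1 ≤ i ≤ n such that the coefficient of x^{τ−ε_{i'}} in γ(x_i) is zero; (ii) for every index 1 ≤ i ≤ n, the coefficient of x^{τ−ε_{i'}} in γ(x^{τ−(p−1)ε_i}) is zero; (iii) there exists an index 1 ≤ i ≤ n such that (coefficient of x_i in γ(x_i)) + (coefficient of x_{i'} in γ(x_{i'})) = 0. -/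
/-!
For a derivation the three conditions only concern the values on the coordinates `x_k`, and they
decide whether these values come from a Hamiltonian.

A derivation `γ` with `γ(x_k) = {z, x_k}` for all `k` satisfies `D_k z = σ(k) γ(x_{k'})`, so one
looks for a potential of the 1-form `∑ σ(k) γ(x_{k'}) dx_k`. Applying `γ` to the constants
`{x_i, x_j}` shows that `{γx_i, x_j} + {x_i, γx_j}` is a constant for all `i, j`. These constants
form an alternating bilinear form (`defect`) which is invariant under the quadratic elements of
`H(n)`, that is, under the symplectic Lie algebra; hence it is a multiple of the symplectic form
(`defect_eq_zero`), and condition (iii) says that the multiple is zero. Then the 1-form is closed.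
A closed form on the truncated polynomial algebra is exact unless one of the classes
`x_k^{p-1} dx_k` occurs in it (`exists_potential`). Condition (ii) excludes these classes: since
`x_{i'}` commutes with `x^{τ-(p-1)ε_i}`, the coefficient in (ii) is up to sign that of `x_i^{p-1}`
in `γ(x_{i'})` (`coeff_top_eq`). Finally condition (i) says that the potential `z` has no `x^τ`
term, so that it lies in `H(n)`. Conversely, an inner derivation visibly satisfies the conditions.

After subtracting `ad z` the derivation kills all coordinates, and it remains to see that it is
`ad ℓ` for a linear form `ℓ` (brackets with `ℓ` are constant on coordinates, so `ℓ` is invisible in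
the previous step). Differentiating shows inductively that the values on monomials are linear forms
(`linear_of_kills`). The values on the torus elements `h_k = x_k x_{k'}` determine `ℓ`; once
`ad ℓ` is subtracted, the derivation preserves weights (`weight_eq`), so it can be nonzero only on
monomials whose weight is that of a coordinate. Such a monomial is a nonzero multiple of a bracket
of monomials already known to be killed (`kills_of_raise`, `kills_all_of_torus`).

All computations are done with the Poisson bracket `pb` on `A(n)` modulo the subspace `constS` of
constants, for maps satisfying `IsDerMod`.
-/


set_option maxHeartbeats 1000000
set_option synthInstance.maxHeartbeats 400000

open scoped BigOperators
noncomputable section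

variable (F : Type*) [Field F] (p n : ℕ)

section Hamiltonian

variable (F : Type*) [Field F] (p m : ℕ) [CharP F p]

/-- The Poisson operator `D_H(f)(g) = ∑_{j=1}^{2m} σ(j)·D_j(f)·D_{j'}(g)` on `A(2m)`. -/
def DHH (f g : TruncP F p (2 * m)) : TruncP F p (2 * m) :=
  ∑ j : Fin (2 * m), sg F m j • (Dj F p (2 * m) j f * Dj F p (2 * m) (cj m j) g)

/-- The bracket of the Hamiltonian algebra: the Poisson bracket `D_H(f)(g)` with its
constant term removed (realizing the quotient by the central element `1` on the span
of the non-constant monomials). -/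
def Hbr (f g : TruncP F p (2 * m)) : TruncP F p (2 * m) :=
  DHH F p m f g - coeffT F p (2 * m) (fun _ => 0) (DHH F p m f g) • (1 : TruncP F p (2 * m))

/-- The Hamiltonian algebra `H(n)`, `n = 2m`: the span of the monomials `x^a` with
`x^a ≠ 1, x^τ`. -/
def Hsub : Submodule F (TruncP F p (2 * m)) :=
  Submodule.span F
    {f | ∃ a : Fin (2 * m) → ℕ,
      (∀ i, a i < p) ∧ a ≠ (fun _ => 0) ∧ a ≠ (fun _ => p - 1) ∧ f = xpow F p (2 * m) a}

open scoped Classical in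
/-- The `[p]`-th power of the monomial `x^a` in `H(n)`: `x^a` itself if
`x^a = x_i x_{i'}` for some `1 ≤ i ≤ m`, and `0` otherwise. -/
noncomputable def HpPow (a : Fin (2 * m) → ℕ) : TruncP F p (2 * m) :=
  if ∃ i : Fin (2 * m), (i : ℕ) < m ∧ a = Pi.single i 1 + Pi.single (cj m i) 1
  then xpow F p (2 * m) a else 0

/-- The characterization of the cocycle `Φ` of `H(n)`: the alternating bilinear map
with `Φ(x^a, x^b) = ∑_{|δ|=3, δ≤a, δ̂≤b} binom(a,δ)·binom(b,δ̂)·σ(δ)·δ!·x^{a+b−δ−δ̂}`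
on monomials. -/
def IsPhiH (Φ : TruncP F p (2 * m) → TruncP F p (2 * m) → TruncP F p (2 * m)) : Prop :=
  IsBilinear F Φ ∧ (∀ x, Φ x x = 0) ∧
    ∀ a b : Fin (2 * m) → ℕ, (∀ i, a i < p) → (∀ i, b i < p) →
      Φ (xpow F p (2 * m) a) (xpow F p (2 * m) b) =
        ∑ d : Fin (2 * m) → Fin 4,
          if (∑ i, (d i : ℕ)) = 3 ∧ (∀ i, (d i : ℕ) ≤ a i) ∧ (∀ i, (d (cj m i) : ℕ) ≤ b i)
          then ((∏ i, (((a i).choose (d i) : ℕ) : F)) *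
                (∏ i, (((b i).choose (d (cj m i)) : ℕ) : F)) *
                (∏ i, sg F m i ^ (d i : ℕ)) *
                (∏ i, (((d i : ℕ).factorial : ℕ) : F))) •
              xpow F p (2 * m)
                (a + b - (fun i => (d i : ℕ)) - (fun i => (d (cj m i) : ℕ)))
          else 0

end Hamiltonian

/-! ### The truncated polynomial algebra -/

section Truncated

variable {F : Type*} [Field F] {p n : ℕ}

lemma coeffT_mk {a : Fin n → ℕ} (h : ∀ i, a i < p) (f : MvPolynomial (Fin n) F) :
    coeffT F p n a (Ideal.Quotient.mk _ f) = f.coeff (Finsupp.equivFunOnFinite.symm a) := by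
  rw [coeffT, dif_pos h, liftF_mk]
  rfl

lemma coeffT_of_not_box {a : Fin n → ℕ} (h : ¬ ∀ i, a i < p) (f : TruncP F p n) :
    coeffT F p n a f = 0 := by
  rw [coeffT, dif_neg h]
  rfl

lemma coeffT_xpow {a : Fin n → ℕ} (h : ∀ i, a i < p) (b : Fin n → ℕ) :
    coeffT F p n a (xpow F p n b) = if b = a then 1 else 0 := by
  classical
  rw [xpow, coeffT_mk h, MvPolynomial.coeff_monomial]
  simp only [EmbeddingLike.apply_eq_iff_eq]

lemma xpow_mul (a b : Fin n → ℕ) :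
    xpow F p n a * xpow F p n b = xpow F p n (a + b) := by
  rw [xpow, xpow, xpow, ← map_mul, MvPolynomial.monomial_mul, one_mul]
  have h : Finsupp.equivFunOnFinite.symm a + Finsupp.equivFunOnFinite.symm b =
      Finsupp.equivFunOnFinite.symm (a + b) := by
    ext i
    simp
  rw [h]

lemma xpow_zero : xpow F p n 0 = 1 := by
  have h : Finsupp.equivFunOnFinite.symm (0 : Fin n → ℕ) = 0 := by
    ext i
    simp
  rw [xpow, h, MvPolynomial.monomial_zero', map_one, map_one]

lemma monomial_mem_truncIdeal {d : Fin n →₀ ℕ} (c : F) {i : Fin n} (h : p ≤ d i) :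
    MvPolynomial.monomial d c ∈ truncIdeal F p n := by
  classical
  have h1 : d = (d - Finsupp.single i p) + Finsupp.single i p := by
    rw [tsub_add_cancel_of_le]
    rw [Finsupp.single_le_iff]
    exact h
  rw [h1, ← mul_one c, ← MvPolynomial.monomial_mul, ← MvPolynomial.X_pow_eq_monomial]
  exact Ideal.mul_mem_left _ _ (Ideal.subset_span ⟨i, rfl⟩)

lemma xpow_of_le {a : Fin n → ℕ} {i : Fin n} (h : p ≤ a i) : xpow F p n a = 0 :=
  Ideal.Quotient.eq_zero_iff_mem.mpr (monomial_mem_truncIdeal (i := i) 1 h)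

/-- An element of `A(n)` is determined by its coefficients in the box `{0,…,p-1}^n`. -/
lemma trunc_ext {f g : TruncP F p n}
    (h : ∀ a : Fin n → ℕ, (∀ i, a i < p) → coeffT F p n a f = coeffT F p n a g) : f = g := by
  rw [← sub_eq_zero]
  obtain ⟨P, hP⟩ := Ideal.Quotient.mk_surjective (f - g)
  rw [← hP, Ideal.Quotient.eq_zero_iff_mem, P.as_sum]
  refine Ideal.sum_mem _ fun d hd => ?_
  by_cases hb : ∀ i, d i < p
  · exfalso
    have h1 := h d hb
    rw [← sub_eq_zero, ← map_sub, ← hP, coeffT_mk hb] at h1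
    rw [MvPolynomial.mem_support_iff] at hd
    apply hd
    convert h1 using 2
    ext i
    rfl
  · push Not at hb
    obtain ⟨i, hi⟩ := hb
    exact monomial_mem_truncIdeal _ hi

/-- Any family of coefficients on the box is realized by an element of `A(n)`. -/
lemma exists_coeffT (φ : (Fin n → ℕ) → F) :
    ∃ f : TruncP F p n, ∀ a : Fin n → ℕ, (∀ i, a i < p) → coeffT F p n a f = φ a := by
  classical
  refine ⟨∑ a ∈ Fintype.piFinset (fun _ : Fin n => Finset.range p), φ a • xpow F p n a, ?_⟩
  intro a ha
  simp only [map_sum, map_smul, coeffT_xpow ha, smul_eq_mul, mul_ite, mul_one, mul_zero]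
  rw [Finset.sum_ite_eq' _ a, if_pos]
  simpa using ha

lemma eq_sum_xpow (f : TruncP F p n) :
    f = ∑ a ∈ Fintype.piFinset (fun _ : Fin n => Finset.range p),
      coeffT F p n a f • xpow F p n a := by
  classical
  apply trunc_ext
  intro a ha
  simp only [map_sum, map_smul, coeffT_xpow ha, smul_eq_mul, mul_ite, mul_one, mul_zero]
  rw [Finset.sum_ite_eq' _ a, if_pos]
  simpa using ha

/-- Linear maps on `A(n)` that agree on the monomials are equal. -/
lemma lin_ext {M : Type*} [AddCommGroup M] [Module F M] {φ ψ : TruncP F p n →ₗ[F] M}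
    (h : ∀ a, φ (xpow F p n a) = ψ (xpow F p n a)) (f : TruncP F p n) : φ f = ψ f := by
  rw [eq_sum_xpow f]
  simp only [map_sum, map_smul, h]

variable [CharP F p]

lemma Dj_mk (j : Fin n) (f : MvPolynomial (Fin n) F) :
    Dj F p n j (Ideal.Quotient.mk _ f) = Ideal.Quotient.mk _ (MvPolynomial.pderiv j f) :=
  DjL_mk F p n j f

lemma Dj_xpow (j : Fin n) (a : Fin n → ℕ) :
    Dj F p n j (xpow F p n a) = (a j : F) • xpow F p n (a - Pi.single j 1) := by
  classical
  rw [xpow, Dj_mk, MvPolynomial.pderiv_monomial, xpow, ← Ideal.Quotient.mkₐ_eq_mk F,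
    ← map_smul, MvPolynomial.smul_monomial]
  have h : Finsupp.equivFunOnFinite.symm a - Finsupp.single j 1 =
      Finsupp.equivFunOnFinite.symm (a - Pi.single j 1) := by
    ext i
    simp [Finsupp.single_apply, Pi.single_apply, eq_comm]
  rw [h]
  simp

/-- Differentiation on coefficients. The formula needs no restriction on `a`: for `a j = p - 1`
the factor `a j + 1` vanishes, and outside the box both coefficients are `0`. -/
lemma coeffT_Dj (j : Fin n) (a : Fin n → ℕ) (f : TruncP F p n) :
    coeffT F p n a (Dj F p n j f) = ((a j : F) + 1) * coeffT F p n (a + Pi.single j 1) f := by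
  classical
  by_cases ha : ∀ i, a i < p
  swap
  · rw [coeffT_of_not_box ha, coeffT_of_not_box, mul_zero]
    intro h
    exact ha fun i => lt_of_le_of_lt (by simp) (h i)
  by_cases hj : a j + 1 < p
  swap
  · have h1 : a j + 1 = p := by have := ha j; omega
    have h2 : (a j : F) + 1 = 0 := by
      have := CharP.cast_eq_zero F p
      rw [← h1] at this
      simpa using this
    rw [h2, zero_mul]
    refine lin_ext (φ := (coeffT F p n a) ∘ₗ (Dj F p n j).toLinearMap) (ψ := 0) ?_ f
    intro b
    simp only [LinearMap.comp_apply, Derivation.coeFn_coe,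
      Dj_xpow, map_smul, coeffT_xpow ha, LinearMap.zero_apply]
    split_ifs with h
    · by_cases hb : b j = 0
      · simp [hb]
      have h3 : b j = p := by
        have := congrFun h j
        simp at this
        omega
      simp [h3]
    · simp
  have ha' : ∀ i, (a + Pi.single j 1 : Fin n → ℕ) i < p := by
    intro i
    by_cases hi : i = j
    · subst hi; simpa using hj
    · simpa [hi] using ha i
  refine lin_ext (φ := (coeffT F p n a) ∘ₗ (Dj F p n j).toLinearMap)
    (ψ := ((a j : F) + 1) • coeffT F p n (a + Pi.single j 1)) ?_ f
  intro b
  simp only [LinearMap.comp_apply, Derivation.coeFn_coe,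
      Dj_xpow, map_smul, coeffT_xpow ha, coeffT_xpow ha', LinearMap.smul_apply]
  by_cases hb : b j = 0
  · have : b ≠ a + Pi.single j 1 := by
      intro h
      simp [h] at hb
    simp [hb, this]
  have key : b - Pi.single j 1 = a ↔ b = a + Pi.single j 1 := by
    have hle : Pi.single j 1 ≤ b := by
      intro i
      by_cases hi : i = j
      · subst hi; simp; omega
      · simp [hi]
    constructor
    · rintro rfl
      rw [tsub_add_cancel_of_le hle]
    · rintro rfl
      simp
  by_cases h : b = a + Pi.single j 1
  · rw [if_pos (key.mpr h), if_pos h, h]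
    simp
  · rw [if_neg (mt key.mp h), if_neg h]
    simp

lemma Dj_comm (i j : Fin n) (f : TruncP F p n) :
    Dj F p n i (Dj F p n j f) = Dj F p n j (Dj F p n i f) := by
  apply trunc_ext
  intro a _
  simp only [coeffT_Dj, Pi.add_apply]
  rw [add_right_comm a]
  by_cases h : i = j
  · subst h; rfl
  · simp [h, Ne.symm h]
    ring

lemma Dj_gen (i j : Fin n) :
    Dj F p n i (xpow F p n (Pi.single j 1)) = if i = j then 1 else 0 := by
  rw [Dj_xpow]
  split_ifs with h
  · subst h
    simp [← xpow_zero (F := F) (p := p)]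
  · simp [h]

lemma gen_mul_Dj (i : Fin n) (a : Fin n → ℕ) :
    xpow F p n (Pi.single i 1) * Dj F p n i (xpow F p n a) = (a i : F) • xpow F p n a := by
  rw [Dj_xpow, mul_smul_comm, xpow_mul]
  by_cases h : a i = 0
  · simp [h]
  congr 2
  apply add_tsub_cancel_of_le
  intro k
  by_cases hk : k = i
  · subst hk; simp; omega
  · simp [hk]

lemma coeffT_gen_mul_Dj (i : Fin n) (a : Fin n → ℕ) (f : TruncP F p n) :
    coeffT F p n a (xpow F p n (Pi.single i 1) * Dj F p n i f) =
      (a i : F) * coeffT F p n a f := by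
  by_cases ha : ∀ i, a i < p
  swap
  · simp [coeffT_of_not_box ha]
  refine lin_ext (φ := (coeffT F p n a) ∘ₗ (LinearMap.mulLeft F (xpow F p n (Pi.single i 1))) ∘ₗ
    (Dj F p n i).toLinearMap) (ψ := (a i : F) • coeffT F p n a) ?_ f
  intro b
  simp only [LinearMap.comp_apply, Derivation.coeFn_coe,
    LinearMap.mulLeft_apply, gen_mul_Dj, map_smul, LinearMap.smul_apply, coeffT_xpow ha]
  split_ifs with h
  · rw [h]
  · simp

end Truncated

/-! ### The Poisson bracket -/

section Poisson

variable {F : Type*} [Field F] {p m : ℕ}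

lemma cj_cj (k : Fin (2 * m)) : cj m (cj m k) = k := by
  have := k.isLt
  apply Fin.ext
  by_cases h : (k : ℕ) < m
  · simp [cj, h]
  · have h2 : (k : ℕ) - m < m := by omega
    simp only [cj, h, dite_false, h2, dite_true]
    omega

lemma cj_ne (k : Fin (2 * m)) : cj m k ≠ k := by
  have := k.isLt
  intro h
  have h := congrArg Fin.val h
  unfold cj at h
  split_ifs at h <;> simp at h <;> omega

lemma cj_eq_iff {k l : Fin (2 * m)} : cj m k = l ↔ k = cj m l := by
  constructor
  · rintro rfl; rw [cj_cj]
  · rintro rfl; rw [cj_cj]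

lemma sg_cj (k : Fin (2 * m)) : sg F m (cj m k) = - sg F m k := by
  have := k.isLt
  unfold sg cj
  split_ifs <;> simp_all <;> omega

lemma sg_mul_self (k : Fin (2 * m)) : sg F m k * sg F m k = 1 := by
  unfold sg
  split_ifs <;> simp

lemma sg_ne_zero (k : Fin (2 * m)) : sg F m k ≠ 0 := by
  unfold sg
  split_ifs <;> simp

lemma sum_cj {M : Type*} [AddCommMonoid M] (φ : Fin (2 * m) → M) :
    ∑ j, φ (cj m j) = ∑ j, φ j :=
  Equiv.sum_comp (Function.Involutive.toPerm (cj m) cj_cj) φ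

variable [CharP F p]

lemma smul_eq_algebraMap_mul {n : ℕ} (c : F) (f : TruncP F p n) :
    c • f = algebraMap F (TruncP F p n) c * f := Algebra.smul_def c f

lemma Dj_smul {n : ℕ} (j : Fin n) (c : F) (f : TruncP F p n) :
    Dj F p n j (c • f) = c • Dj F p n j f := (Dj F p n j).map_smul c f

variable (F p m) in
/-- The Poisson bracket `DHH` of `A(2m)` as a bilinear map. -/
def pb : TruncP F p (2 * m) →ₗ[F] TruncP F p (2 * m) →ₗ[F] TruncP F p (2 * m) :=
  LinearMap.mk₂ F (DHH F p m)
    (by intro f g h; simp only [DHH, map_add, add_mul, smul_add, Finset.sum_add_distrib])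
    (by
      intro c f g
      simp only [DHH, Dj_smul, Finset.smul_sum, smul_mul_assoc]
      exact Finset.sum_congr rfl fun j _ => smul_comm _ _ _)
    (by intro f g h; simp only [DHH, map_add, mul_add, smul_add, Finset.sum_add_distrib])
    (by
      intro c f g
      simp only [DHH, Dj_smul, Finset.smul_sum, mul_smul_comm]
      exact Finset.sum_congr rfl fun j _ => smul_comm _ _ _)

lemma pb_apply (f g : TruncP F p (2 * m)) : pb F p m f g =
    ∑ j, sg F m j • (Dj F p (2 * m) j f * Dj F p (2 * m) (cj m j) g) := rfl

variable (F p m) in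
/-- The coordinate `x_k` of `A(2m)`. -/
abbrev gen (k : Fin (2 * m)) : TruncP F p (2 * m) := xpow F p (2 * m) (Pi.single k 1)

lemma pb_skew (f g : TruncP F p (2 * m)) : pb F p m f g = - pb F p m g f := by
  rw [pb_apply, pb_apply, ← sum_cj, ← Finset.sum_neg_distrib]
  refine Finset.sum_congr rfl fun j _ => ?_
  rw [cj_cj, sg_cj, neg_smul, mul_comm (Dj F p (2 * m) (cj m j) f)]

lemma pb_mul_right (f g h : TruncP F p (2 * m)) :
    pb F p m f (g * h) = g * pb F p m f h + h * pb F p m f g := by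
  simp only [pb_apply, Finset.mul_sum, ← Finset.sum_add_distrib]
  refine Finset.sum_congr rfl fun j _ => ?_
  rw [Derivation.leibniz]
  simp only [smul_eq_mul, smul_eq_algebraMap_mul]
  ring

lemma pb_mul_left (f g h : TruncP F p (2 * m)) :
    pb F p m (f * g) h = f * pb F p m g h + g * pb F p m f h := by
  rw [pb_skew, pb_mul_right, pb_skew g, pb_skew f]
  ring

lemma pb_gen_left (k : Fin (2 * m)) (f : TruncP F p (2 * m)) :
    pb F p m (gen F p m k) f = sg F m k • Dj F p (2 * m) (cj m k) f := by
  rw [pb_apply, Finset.sum_eq_single k]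
  · rw [Dj_gen, if_pos rfl, one_mul]
  · intro j _ hj
    rw [Dj_gen, if_neg hj, zero_mul, smul_zero]
  · simp

lemma pb_gen_right (k : Fin (2 * m)) (f : TruncP F p (2 * m)) :
    pb F p m f (gen F p m k) = - (sg F m k • Dj F p (2 * m) (cj m k) f) := by
  rw [pb_skew, pb_gen_left]

lemma Dj_pb (k : Fin (2 * m)) (f g : TruncP F p (2 * m)) :
    Dj F p (2 * m) k (pb F p m f g) =
      pb F p m (Dj F p (2 * m) k f) g + pb F p m f (Dj F p (2 * m) k g) := by
  simp only [pb_apply, map_sum, ← Finset.sum_add_distrib]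
  refine Finset.sum_congr rfl fun j _ => ?_
  rw [Dj_smul, Derivation.leibniz, Dj_comm k j, Dj_comm k (cj m j), ← smul_add]
  simp only [smul_eq_mul]
  rw [add_comm, mul_comm (Dj F p (2 * m) (cj m j) g)]

/-- A derivation of `A(n)` is determined by its values on the coordinates. -/
lemma witt_ext {n : ℕ} {D E : Witt F p n}
    (h : ∀ k, D (xpow F p n (Pi.single k 1)) = E (xpow F p n (Pi.single k 1))) : D = E := by
  ext f
  obtain ⟨P, rfl⟩ := Ideal.Quotient.mk_surjective f
  induction P using MvPolynomial.induction_on with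
  | C c =>
    have : (Ideal.Quotient.mk (truncIdeal F p n)) (MvPolynomial.C c) =
      algebraMap F (TruncP F p n) c := rfl
    rw [this, Derivation.map_algebraMap, Derivation.map_algebraMap]
  | add P Q hP hQ => rw [map_add, map_add, map_add, hP, hQ]
  | mul_X P k hP =>
    have : (Ideal.Quotient.mk (truncIdeal F p n)) (MvPolynomial.X k) =
        xpow F p n (Pi.single k 1) := by
      rw [xpow, MvPolynomial.X]
      congr 2
      ext i
      simp [Finsupp.single_apply, Pi.single_apply, eq_comm]
    rw [map_mul, Derivation.leibniz, Derivation.leibniz, hP, this, h]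

variable (F p m) in
/-- The Hamiltonian vector field `{f, ·}`. -/
def hamD (f : TruncP F p (2 * m)) : Witt F p (2 * m) :=
  ∑ j, (sg F m j • Dj F p (2 * m) j f) • Dj F p (2 * m) (cj m j)

lemma hamD_apply (f g : TruncP F p (2 * m)) : hamD F p m f g = pb F p m f g := by
  simp only [hamD, pb_apply]
  rw [← Derivation.coeFnAddMonoidHom_apply, map_sum, Finset.sum_apply]
  refine Finset.sum_congr rfl fun j _ => ?_
  simp

/-- The Jacobi identity. Both sides are derivations in `h`, so it is enough to take `h = x_k`,
where it says that `D_{k'}` is a derivation of the bracket. -/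
lemma pb_jacobi (f g h : TruncP F p (2 * m)) :
    pb F p m f (pb F p m g h) = pb F p m (pb F p m f g) h + pb F p m g (pb F p m f h) := by
  have key : ⁅hamD F p m f, hamD F p m g⁆ = hamD F p m (pb F p m f g) := by
    apply witt_ext
    intro k
    simp only [Derivation.commutator_apply, hamD_apply]
    change pb F p m f (pb F p m g (gen F p m k)) - pb F p m g (pb F p m f (gen F p m k)) =
      pb F p m (pb F p m f g) (gen F p m k)
    simp only [pb_gen_right, map_neg, map_smul, Dj_smul, Dj_pb, smul_add]
    rw [pb_skew _ g, smul_neg]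
    abel
  have := congrArg (fun D => D h) key
  simp only [Derivation.commutator_apply, hamD_apply] at this
  rw [← this]
  abel

variable (F p m) in
/-- The subspace `F · 1` of constants, described by coefficients. -/
def constS : Submodule F (TruncP F p (2 * m)) where
  carrier := {f | ∀ b : Fin (2 * m) → ℕ, b ≠ 0 → coeffT F p (2 * m) b f = 0}
  add_mem' := by
    intro f g hf hg b hb
    rw [map_add, hf b hb, hg b hb, add_zero]
  zero_mem' := by intro b _; rw [map_zero]
  smul_mem' := by
    intro c f hf b hb
    rw [map_smul, hf b hb, smul_zero]

lemma mem_constS {f : TruncP F p (2 * m)} :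
    f ∈ constS F p m ↔ ∀ b, b ≠ 0 → coeffT F p (2 * m) b f = 0 := Iff.rfl

lemma Dj_of_const {f : TruncP F p (2 * m)} (hf : f ∈ constS F p m) (j : Fin (2 * m)) :
    Dj F p (2 * m) j f = 0 := by
  apply trunc_ext
  intro a _
  rw [coeffT_Dj, hf, mul_zero, map_zero]
  intro h
  have := congrFun h j
  simp at this

lemma pb_const_left {f : TruncP F p (2 * m)} (hf : f ∈ constS F p m)
    (g : TruncP F p (2 * m)) : pb F p m f g = 0 := by
  simp [pb_apply, Dj_of_const hf]

lemma pb_const_right {f : TruncP F p (2 * m)} (hf : f ∈ constS F p m)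
    (g : TruncP F p (2 * m)) : pb F p m g f = 0 := by
  rw [pb_skew, pb_const_left hf, neg_zero]

lemma pb_congr_left {f f' : TruncP F p (2 * m)} (hf : f - f' ∈ constS F p m)
    (g : TruncP F p (2 * m)) : pb F p m f g = pb F p m f' g := by
  have := pb_const_left hf g
  rwa [map_sub, LinearMap.sub_apply, sub_eq_zero] at this

lemma pb_congr_right {f f' : TruncP F p (2 * m)} (hf : f - f' ∈ constS F p m)
    (g : TruncP F p (2 * m)) : pb F p m g f = pb F p m g f' := by
  have := pb_const_right hf g
  rwa [map_sub, sub_eq_zero] at this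

/-- The bracket of two coordinates: `{x_k, x_{k'}} = σ(k)`, all others vanish. -/
lemma pb_gen_gen (k l : Fin (2 * m)) :
    pb F p m (gen F p m k) (gen F p m l) = if cj m k = l then sg F m k • 1 else 0 := by
  rw [pb_gen_left, Dj_gen]
  split_ifs <;> simp

lemma coeffT_zero_one (hp : 0 < p) (b : Fin (2 * m) → ℕ) :
    coeffT F p (2 * m) b 1 = if b = 0 then 1 else 0 := by
  rw [← xpow_zero]
  by_cases hb : ∀ i, b i < p
  · rw [coeffT_xpow hb]
    simp only [eq_comm]
  · rw [coeffT_of_not_box hb, if_neg]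
    rintro rfl
    exact hb fun _ => hp

lemma one_mem_constS (hp : 0 < p) : (1 : TruncP F p (2 * m)) ∈ constS F p m := by
  intro b hb
  rw [coeffT_zero_one hp, if_neg hb]

end Poisson

/-! ### Closed forms and the values on coordinates -/

section Closed

variable {F : Type*} [Field F] {p n : ℕ} [CharP F p]

lemma natCast_ne_zero_of_lt {k : ℕ} (h0 : k ≠ 0) (hk : k < p) : (k : F) ≠ 0 := by
  rw [Ne, CharP.cast_eq_zero_iff F p]
  exact fun h => absurd (Nat.le_of_dvd (Nat.pos_of_ne_zero h0) h) (by omega)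

variable (F) in
lemma natCast_pred (hp : 0 < p) : ((p - 1 : ℕ) : F) = -1 := by
  rw [Nat.cast_sub (by omega), CharP.cast_eq_zero F p]
  simp

/-- The truncated Poincaré lemma: a closed 1-form `∑ f_k dx_k` is exact as soon as the classes
`x_k^{p-1} dx_k` do not occur in it. -/
lemma exists_potential (hp : 0 < p) (f : Fin n → TruncP F p n)
    (hf : ∀ k l, Dj F p n k (f l) = Dj F p n l (f k))
    (h0 : ∀ k, coeffT F p n (Pi.single k (p - 1)) (f k) = 0) :
    ∃ z : TruncP F p n, coeffT F p n 0 z = 0 ∧ ∀ k, Dj F p n k z = f k := by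
  classical
  have R : ∀ (a : Fin n → ℕ) (k l : Fin n),
      ((a k : F) + 1) * coeffT F p n (a + Pi.single k 1) (f l) =
        ((a l : F) + 1) * coeffT F p n (a + Pi.single l 1) (f k) := by
    intro a k l
    rw [← coeffT_Dj, ← coeffT_Dj, hf]
  -- `R` with the exponent written as `a - ε_l`.
  have R' : ∀ (a : Fin n → ℕ) (k l : Fin n), k ≠ l → a l ≠ 0 →
      ((a k : F) + 1) * coeffT F p n (a + Pi.single k 1 - Pi.single l 1) (f l) =
        (a l : F) * coeffT F p n a (f k) := by
    intro a k l hkl hl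
    have hle : Pi.single l 1 ≤ a := by
      intro i
      by_cases hi : i = l
      · subst hi; simp; omega
      · simp [hi]
    have h1 : a = (a - Pi.single l 1) + Pi.single l 1 := (tsub_add_cancel_of_le hle).symm
    have h2 := R (a - Pi.single l 1) k l
    rw [← h1] at h2
    have h3 : a - Pi.single l 1 + Pi.single k 1 = a + Pi.single k 1 - Pi.single l 1 := by
      rw [tsub_add_eq_add_tsub hle]
    rw [h3] at h2
    have h4 : (((a - Pi.single l 1 : Fin n → ℕ) l : ℕ) : F) + 1 = a l := by
      have : (a - Pi.single l 1 : Fin n → ℕ) l + 1 = a l := by simp; omega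
      exact_mod_cast congrArg (Nat.cast (R := F)) this
    have h5 : (a - Pi.single l 1 : Fin n → ℕ) k = a k := by simp [hkl]
    rw [h4, h5] at h2
    exact h2
  let φ : (Fin n → ℕ) → F := fun a =>
    if h : ∃ k, a k ≠ 0 then
      coeffT F p n (a - Pi.single h.choose 1) (f h.choose) / (a h.choose : F) else 0
  obtain ⟨z, hz⟩ := exists_coeffT (F := F) (p := p) φ
  refine ⟨z, ?_, ?_⟩
  · rw [hz 0 (fun _ => hp)]
    simp [φ]
  intro k
  apply trunc_ext
  intro a ha
  rw [coeffT_Dj]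
  by_cases hk : a k + 1 < p
  · have hb : ∀ i, (a + Pi.single k 1 : Fin n → ℕ) i < p := by
      intro i
      by_cases hi : i = k
      · subst hi; simpa using hk
      · simpa [hi] using ha i
    have hex : ∃ l, (a + Pi.single k 1 : Fin n → ℕ) l ≠ 0 := ⟨k, by simp⟩
    rw [hz _ hb]
    simp only [φ, dif_pos hex]
    have hl := hex.choose_spec
    set l := hex.choose
    have hne : (((a + Pi.single k 1 : Fin n → ℕ) l : ℕ) : F) ≠ 0 :=
      natCast_ne_zero_of_lt hl (hb l)
    rw [← mul_div_assoc, div_eq_iff hne]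
    by_cases hkl : k = l
    · rw [← hkl]
      simp
      ring
    · have hal : (a + Pi.single k 1 : Fin n → ℕ) l = a l := by
        simp [Ne.symm hkl]
      rw [hal] at hl ⊢
      rw [R' a k l hkl hl, mul_comm]
  · have hk1 : a k = p - 1 := by have := ha k; omega
    have hk2 : (a k : F) + 1 = 0 := by rw [hk1, natCast_pred F hp]; ring
    rw [hk2, zero_mul]
    by_cases hex : ∃ l, k ≠ l ∧ a l ≠ 0
    · obtain ⟨l, hkl, hl⟩ := hex
      have h := R' a k l hkl hl
      rw [hk2, zero_mul] at h
      exact ((mul_eq_zero.mp h.symm).resolve_left (natCast_ne_zero_of_lt hl (ha l))).symm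
    · push Not at hex
      have : a = Pi.single k (p - 1) := by
        ext i
        by_cases hi : i = k
        · subst hi; simpa using hk1
        · simpa [hi] using hex i (Ne.symm hi)
      rw [this, h0]

end Closed

section DerMod

variable {F : Type*} [Field F] {p m : ℕ} [CharP F p]

variable (F p m) in
/-- A linear map on `A(2m)` that kills `1` and satisfies the Leibniz rule for the Poisson bracket
on the monomials other than `x^τ`, both modulo constants. A derivation of `H(2m)` is turned into
such a map by letting it vanish on `1`. -/
structure IsDerMod (δ : TruncP F p (2 * m) →ₗ[F] TruncP F p (2 * m)) : Prop where
  one : δ 1 ∈ constS F p m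
  rule : ∀ a c : Fin (2 * m) → ℕ, a ≠ (fun _ => p - 1) → c ≠ (fun _ => p - 1) →
    δ (pb F p m (xpow F p (2 * m) a) (xpow F p (2 * m) c)) -
      (pb F p m (δ (xpow F p (2 * m) a)) (xpow F p (2 * m) c) +
        pb F p m (xpow F p (2 * m) a) (δ (xpow F p (2 * m) c))) ∈ constS F p m

lemma isDerMod_pb (z : TruncP F p (2 * m)) : IsDerMod F p m (pb F p m z) where
  one := by
    have : pb F p m z 1 = 0 := by simp [pb_apply]
    rw [this]
    exact zero_mem _
  rule := by
    intro a c _ _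
    rw [pb_jacobi, sub_self]
    exact zero_mem _

lemma IsDerMod.sub {δ δ' : TruncP F p (2 * m) →ₗ[F] TruncP F p (2 * m)}
    (h : IsDerMod F p m δ) (h' : IsDerMod F p m δ') : IsDerMod F p m (δ - δ') where
  one := sub_mem h.one h'.one
  rule := by
    intro a c ha hc
    convert sub_mem (h.rule a c ha hc) (h'.rule a c ha hc) using 1
    simp only [LinearMap.sub_apply, map_sub]
    abel

lemma ne_top_of_apply {a : Fin (2 * m) → ℕ} (k : Fin (2 * m)) (h : a k ≠ p - 1) :
    a ≠ (fun _ => p - 1) := fun h' => h (congrFun h' k)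

lemma single_ne_top (hp5 : 5 ≤ p) (k : Fin (2 * m)) :
    (Pi.single k 1 : Fin (2 * m) → ℕ) ≠ (fun _ => p - 1) :=
  ne_top_of_apply k (by simp; omega)

lemma quad_ne_top (hp5 : 5 ≤ p) (k l : Fin (2 * m)) :
    (Pi.single k 1 + Pi.single l 1 : Fin (2 * m) → ℕ) ≠ (fun _ => p - 1) := by
  refine ne_top_of_apply k ?_
  by_cases h : k = l
  · subst h; simp; omega
  · simp [h]; omega

lemma pb_gen_gen_mem (hp : 0 < p) (i j : Fin (2 * m)) :
    pb F p m (gen F p m i) (gen F p m j) ∈ constS F p m := by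
  rw [pb_gen_gen]
  split_ifs
  · exact Submodule.smul_mem _ _ (one_mem_constS hp)
  · exact zero_mem _

variable (δ : TruncP F p (2 * m) →ₗ[F] TruncP F p (2 * m))

/-- `{δx_i, x_j} + {x_i, δx_j}`. For a derivation this is a constant, and it measures how far the
degree-zero part of `δ` is from being symplectic. -/
def defect (i j : Fin (2 * m)) : TruncP F p (2 * m) :=
  pb F p m (δ (gen F p m i)) (gen F p m j) + pb F p m (gen F p m i) (δ (gen F p m j))

variable {δ}

lemma defect_skew (i j : Fin (2 * m)) : defect δ i j = - defect δ j i := by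
  rw [defect, defect, pb_skew, pb_skew (gen F p m i)]
  abel

lemma defect_mem (hp5 : 5 ≤ p) (h : IsDerMod F p m δ) (i j : Fin (2 * m)) :
    defect δ i j ∈ constS F p m := by
  have h1 := h.rule _ _ (single_ne_top hp5 i) (single_ne_top hp5 j)
  have h2 : δ (pb F p m (gen F p m i) (gen F p m j)) ∈ constS F p m := by
    rw [pb_gen_gen]
    split_ifs
    · rw [map_smul]; exact Submodule.smul_mem _ _ h.one
    · rw [map_zero]; exact zero_mem _
  have h3 := sub_mem h2 h1
  rwa [sub_sub_cancel] at h3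

/-- The form `defect δ` is invariant under `ad x^e`; for quadratic `x^e` this is invariance under
a root vector or a torus element of the symplectic Lie algebra. -/
lemma defect_inv (hp5 : 5 ≤ p) (h : IsDerMod F p m δ) {e : Fin (2 * m) → ℕ}
    (he : e ≠ (fun _ => p - 1)) (i j : Fin (2 * m)) :
    pb F p m (δ (pb F p m (xpow F p (2 * m) e) (gen F p m i))) (gen F p m j) +
      pb F p m (pb F p m (xpow F p (2 * m) e) (gen F p m i)) (δ (gen F p m j)) +
    (pb F p m (δ (gen F p m i)) (pb F p m (xpow F p (2 * m) e) (gen F p m j)) +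
      pb F p m (gen F p m i) (δ (pb F p m (xpow F p (2 * m) e) (gen F p m j)))) = 0 := by
  rw [pb_congr_left (h.rule _ _ he (single_ne_top hp5 i)),
    pb_congr_right (h.rule _ _ he (single_ne_top hp5 j))]
  set q := xpow F p (2 * m) e
  have h1 := pb_jacobi (δ q) (gen F p m i) (gen F p m j)
  have h2 := pb_jacobi q (δ (gen F p m i)) (gen F p m j)
  have h3 := pb_jacobi q (gen F p m i) (δ (gen F p m j))
  have h4 := pb_const_right (pb_gen_gen_mem (by omega) i j) (δ q)
  have h5 := pb_const_right (defect_mem hp5 h i j) q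
  rw [defect, map_add] at h5
  simp only [map_add, LinearMap.add_apply]
  linear_combination h4 + h5 - h1 - h2 - h3

/-- If `defect δ` vanishes on one conjugate pair, it vanishes identically: up to scalars the
symplectic form is the only invariant alternating form. -/
lemma defect_eq_zero (hp5 : 5 ≤ p) (h : IsDerMod F p m δ) {i : Fin (2 * m)}
    (hi : defect δ i (cj m i) = 0) (k l : Fin (2 * m)) : defect δ k l = 0 := by
  have hself : ∀ k, defect δ k k = 0 := by
    intro k
    rw [defect, pb_skew (gen F p m k), add_neg_cancel]
  have hxx : ∀ k l : Fin (2 * m), xpow F p (2 * m) (Pi.single k 1 + Pi.single l 1) =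
      gen F p m k * gen F p m l := fun k l => (xpow_mul _ _).symm
  have hoff : ∀ k l, cj m k ≠ l → defect δ k l = 0 := by
    intro k l hkl
    by_cases hkl' : k = l
    · subst hkl'; exact hself k
    have h1 := defect_inv hp5 h (quad_ne_top hp5 k (cj m k)) k l
    rw [hxx, pb_mul_left, pb_mul_left] at h1
    simp only [pb_gen_gen, cj_cj, if_true, if_neg hkl, if_neg hkl', if_neg (cj_ne k),
      mul_smul_comm, mul_one, mul_zero, add_zero, map_zero, map_smul, LinearMap.smul_apply,
      ← smul_add] at h1
    exact (smul_eq_zero.mp h1).resolve_left (sg_ne_zero _)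
  have hpair : ∀ k l, k ≠ l → cj m k ≠ l → defect δ l (cj m l) = 0 → defect δ k (cj m k) = 0 := by
    intro k l hkl hkl' hl
    have h1 := defect_inv hp5 h (quad_ne_top hp5 k (cj m l)) (cj m k) l
    have e1 : cj m k ≠ cj m l := fun e => hkl (by rw [← cj_cj k, e, cj_cj])
    have e2 : l ≠ cj m k := fun e => hkl' e.symm
    rw [hxx, pb_mul_left, pb_mul_left] at h1
    simp only [pb_gen_gen, cj_cj, if_true, if_neg e2, if_neg hkl', mul_smul_comm, mul_one,
      mul_zero, zero_add, add_zero, map_smul, LinearMap.smul_apply, ← smul_add] at h1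
    change sg F m k • defect δ (cj m l) l + sg F m (cj m l) • defect δ (cj m k) k = 0 at h1
    rw [defect_skew _ l, hl, neg_zero, smul_zero, zero_add] at h1
    rw [defect_skew, (smul_eq_zero.mp h1).resolve_left (sg_ne_zero _), neg_zero]
  have hall : ∀ k, defect δ k (cj m k) = 0 := by
    intro k
    by_cases hk : k = i
    · rw [hk, hi]
    by_cases hk' : cj m k = i
    · have : k = cj m i := cj_eq_iff.mp hk'
      rw [this, cj_cj, defect_skew, hi, neg_zero]
    · exact hpair k i hk hk' hi
  by_cases hkl : cj m k = l
  · rw [← hkl, hall]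
  · exact hoff k l hkl

lemma defect_pair (i : Fin (2 * m)) :
    coeffT F p (2 * m) 0 (defect δ i (cj m i)) = sg F m i *
      (coeffT F p (2 * m) (Pi.single i 1) (δ (gen F p m i)) +
        coeffT F p (2 * m) (Pi.single (cj m i) 1) (δ (gen F p m (cj m i)))) := by
  rw [defect, pb_gen_left, pb_gen_right, cj_cj, sg_cj, neg_smul, neg_neg, map_add, map_smul,
    map_smul, coeffT_Dj, coeffT_Dj]
  simp
  ring

lemma eq_zero_of_mem_constS {f : TruncP F p (2 * m)} (hf : f ∈ constS F p m)
    (h0 : coeffT F p (2 * m) 0 f = 0) : f = 0 := by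
  apply trunc_ext
  intro a _
  rw [map_zero]
  by_cases ha : a = 0
  · rw [ha, h0]
  · exact hf a ha

/-- The coefficient in condition (ii) is, up to sign, the coefficient of `x_i^{p-1}` in
`δ(x_{i'})`, because `x_{i'}` and `x^{τ-(p-1)ε_i}` commute. -/
lemma coeff_top_eq (hp5 : 5 ≤ p) (h : IsDerMod F p m δ) (i : Fin (2 * m)) :
    coeffT F p (2 * m) ((fun _ => p - 1) - Pi.single (cj m i) 1)
      (δ (xpow F p (2 * m) ((fun _ => p - 1) - Pi.single i (p - 1)))) =
    - coeffT F p (2 * m) (Pi.single i (p - 1)) (δ (gen F p m (cj m i))) := by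
  classical
  set y : Fin (2 * m) → ℕ := (fun _ => p - 1) - Pi.single i (p - 1) with hy
  set t : Fin (2 * m) → ℕ := (fun _ => p - 1) - Pi.single i 1 - Pi.single (cj m i) 1 with ht
  have hci := cj_ne i
  have yi : y i = 0 := by simp [hy]
  have yo : ∀ j, j ≠ i → y j = p - 1 := by intro j hj; simp [hy, hj]
  have ti : t i = p - 2 := by simp [ht, hci.symm]; omega
  have ti' : t (cj m i) = p - 2 := by simp [ht, hci]; omega
  have tot : ∀ j, j ≠ i → j ≠ cj m i → t j = p - 1 := by intro j hj hj'; simp [ht, hj, hj']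
  have tbox : ∀ j, t j < p := by
    intro j; simp [ht]; omega
  have hcomm : pb F p m (gen F p m (cj m i)) (xpow F p (2 * m) y) = 0 := by
    rw [pb_gen_left, cj_cj, Dj_xpow, yi]
    simp
  have hrule := h.rule _ _ (single_ne_top hp5 (cj m i))
    (ne_top_of_apply (a := y) i (by rw [yi]; omega))
  rw [hcomm, map_zero, zero_sub, neg_mem_iff] at hrule
  have hct := hrule t (fun e => by have := congrFun e i; simp [ti] at this; omega)
  rw [map_add, pb_gen_left, cj_cj, map_smul, coeffT_Dj, ti] at hct
  have hadd : t + Pi.single i 1 = (fun _ => p - 1) - Pi.single (cj m i) 1 := by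
    ext j
    by_cases hj : j = i
    · subst hj; simp [ti, hci.symm]; omega
    · by_cases hj' : j = cj m i
      · subst hj'; simp [ti', hci]; omega
      · simp [tot j hj hj', hj, hj']
  rw [hadd] at hct
  have hfirst : ∀ f : TruncP F p (2 * m), coeffT F p (2 * m) t (pb F p m f (xpow F p (2 * m) y)) =
      sg F m i * coeffT F p (2 * m) (Pi.single i (p - 1)) f := by
    intro f
    refine lin_ext (φ := coeffT F p (2 * m) t ∘ₗ (pb F p m).flip (xpow F p (2 * m) y))
      (ψ := sg F m i • coeffT F p (2 * m) (Pi.single i (p - 1))) ?_ f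
    intro b
    have sbox : ∀ j, (Pi.single i (p - 1) : Fin (2 * m) → ℕ) j < p := by
      intro j
      by_cases hj : j = i
      · subst hj; simp; omega
      · simp [hj]; omega
    simp only [LinearMap.comp_apply, LinearMap.flip_apply, LinearMap.smul_apply, smul_eq_mul,
      coeffT_xpow sbox, pb_apply, map_sum, map_smul, Dj_xpow, smul_mul_smul_comm, xpow_mul,
      coeffT_xpow tbox]
    rw [Finset.sum_eq_single i]
    · rw [yo _ hci, natCast_pred F (by omega)]
      by_cases hb : b = Pi.single i (p - 1)
      · rw [if_pos hb, if_pos, hb]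
        · simp [natCast_pred F (show 0 < p by omega)]
        · ext j
          by_cases hj : j = i
          · subst hj; simp [ti, yi, hb]; omega
          · by_cases hj' : j = cj m i
            · subst hj'; simp [ti', hb, yo _ hci, hci]; omega
            · simp [tot j hj hj', hb, yo j hj, hj, hj']
      · rw [if_neg hb]
        by_cases hbi : b i = 0
        · simp [hbi]
        rw [if_neg]
        · simp
        intro e
        apply hb
        ext j
        have ej := congrFun e j
        by_cases hj : j = i
        · subst hj; simp [ti, yi] at ej; simp; omega
        · by_cases hj' : j = cj m i
          · subst hj'; simp [ti', yo _ hci, hci] at ej; simp [hci]; omega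
          · simp [tot j hj hj', yo j hj, hj, hj'] at ej; simp [hj, ej]
    · intro j _ hj
      by_cases hj' : j = cj m i
      · subst hj'; simp [cj_cj, yi]
      · have hjj : cj m j ≠ cj m i := fun e => hj (by rw [← cj_cj j, e, cj_cj])
        rw [if_neg]
        · simp
        intro e
        have ej := congrFun e (cj m i)
        simp [ti', yo _ hci, Ne.symm hj', Ne.symm hjj] at ej
        omega
    · simp
  have hcast : ((p - 2 : ℕ) : F) + 1 = -1 := by
    rw [← natCast_pred F (show 0 < p by omega), ← Nat.cast_succ]
    congr 1
    omega
  rw [hfirst, hcast, smul_eq_mul, sg_cj] at hct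
  have : sg F m i * (coeffT F p (2 * m) (Pi.single i (p - 1)) (δ (gen F p m (cj m i))) +
      coeffT F p (2 * m) ((fun _ => p - 1) - Pi.single (cj m i) 1)
      (δ (xpow F p (2 * m) y))) = 0 := by
    rw [← hct]; ring
  have := (mul_eq_zero.mp this).resolve_left (sg_ne_zero _)
  linear_combination this

end DerMod

/-! ### Derivations vanishing on the coordinates -/

section Vanishing

variable {F : Type*} [Field F] {p m : ℕ} [CharP F p]

lemma natCast_inj_of_lt {x y : ℕ} (hx : x < p) (hy : y < p) (h : (x : F) = y) : x = y := by
  rw [CharP.natCast_eq_natCast F p] at h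
  exact Nat.ModEq.eq_of_lt_of_lt h hx hy

lemma natCast_sub_eq_one {x y : ℕ} (hx : x < p) (hy : y < p) (h : (x : F) - y = 1) :
    x = y + 1 ∨ (x = 0 ∧ y = p - 1) := by
  have h1 : (x : F) = ((y + 1 : ℕ) : F) := by push_cast; linear_combination h
  by_cases hy1 : y + 1 < p
  · exact Or.inl (natCast_inj_of_lt hx hy1 h1)
  · right
    have : y + 1 = p := by omega
    rw [this, CharP.cast_eq_zero F p] at h1
    exact ⟨natCast_inj_of_lt hx (by omega) (by simpa using h1), by omega⟩

/-- The exponent of `h_k = x_k x_{k'}`. -/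
abbrev tor (m : ℕ) (k : Fin (2 * m)) : Fin (2 * m) → ℕ := Pi.single k 1 + Pi.single (cj m k) 1

lemma tor_cj (k : Fin (2 * m)) : tor m (cj m k) = tor m k := by
  rw [tor, cj_cj, add_comm]

lemma tor_apply_cj (j k : Fin (2 * m)) : tor m j (cj m k) = tor m j k := by
  simp only [tor, Pi.add_apply, Pi.single_apply]
  have h1 : (cj m k = j) ↔ (k = cj m j) := cj_eq_iff
  have h2 : (cj m k = cj m j) ↔ (k = j) := by rw [cj_eq_iff, cj_cj]
  simp only [h1, h2]
  omega

/-- `h_k = x_k x_{k'}` acts diagonally on monomials. -/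
lemma coeffT_pb_tor (k : Fin (2 * m)) (b : Fin (2 * m) → ℕ) (f : TruncP F p (2 * m)) :
    coeffT F p (2 * m) b (pb F p m (xpow F p (2 * m) (tor m k)) f) =
      sg F m k * ((b (cj m k) : F) - b k) * coeffT F p (2 * m) b f := by
  rw [tor, ← xpow_mul, pb_mul_left, pb_gen_left, pb_gen_left, cj_cj, sg_cj, mul_smul_comm,
    mul_smul_comm, map_add, map_smul, map_smul, coeffT_gen_mul_Dj, coeffT_gen_mul_Dj]
  simp only [smul_eq_mul]
  ring

lemma pb_tor_xpow (k : Fin (2 * m)) (a : Fin (2 * m) → ℕ) :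
    pb F p m (xpow F p (2 * m) (tor m k)) (xpow F p (2 * m) a) =
      (sg F m k * ((a (cj m k) : F) - a k)) • xpow F p (2 * m) a := by
  rw [tor, ← xpow_mul, pb_mul_left, pb_gen_left, pb_gen_left, cj_cj, sg_cj, mul_smul_comm,
    mul_smul_comm, gen_mul_Dj, gen_mul_Dj]
  module

lemma pb_quad_xpow (k l : Fin (2 * m)) (b : Fin (2 * m) → ℕ) :
    pb F p m (xpow F p (2 * m) (Pi.single k 1 + Pi.single l 1)) (xpow F p (2 * m) b) =
      (sg F m l * b (cj m l)) • xpow F p (2 * m) (Pi.single k 1 + (b - Pi.single (cj m l) 1)) +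
      (sg F m k * b (cj m k)) •
        xpow F p (2 * m) (Pi.single l 1 + (b - Pi.single (cj m k) 1)) := by
  rw [← xpow_mul, pb_mul_left, pb_gen_left, pb_gen_left, Dj_xpow, Dj_xpow, ← xpow_mul, ← xpow_mul]
  simp only [mul_smul_comm, smul_smul]

variable {δ : TruncP F p (2 * m) →ₗ[F] TruncP F p (2 * m)}

variable (δ) in
/-- `δ` kills `x^a` modulo constants. -/
def Kills (a : Fin (2 * m) → ℕ) : Prop := δ (xpow F p (2 * m) a) ∈ constS F p m

lemma kills_of_smul {a : Fin (2 * m) → ℕ} {c : F} (hc : c ≠ 0)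
    (h : δ (c • xpow F p (2 * m) a) ∈ constS F p m) : Kills δ a := by
  rw [map_smul] at h
  exact (Submodule.smul_mem_iff _ hc).mp h

lemma kills_pb (h : IsDerMod F p m δ) {a c : Fin (2 * m) → ℕ} (ha : a ≠ fun _ => p - 1)
    (hc : c ≠ fun _ => p - 1) (ka : Kills δ a) (kc : Kills δ c) :
    δ (pb F p m (xpow F p (2 * m) a) (xpow F p (2 * m) c)) ∈ constS F p m := by
  have := h.rule a c ha hc
  rwa [pb_const_left ka, pb_const_right kc, add_zero, sub_zero] at this

/-- If `δ` kills the coordinates and all monomials of degree less than `d`, then it maps monomials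
of degree at most `d` to linear forms: differentiation lowers the degree. -/
lemma linear_of_kills (hp5 : 5 ≤ p) (h : IsDerMod F p m δ)
    (h1 : ∀ k, Kills δ (Pi.single k 1)) {d : ℕ}
    (hd : ∀ c : Fin (2 * m) → ℕ, c ≠ (fun _ => p - 1) → ∑ i, c i < d → Kills δ c)
    {a : Fin (2 * m) → ℕ} (ha : a ≠ fun _ => p - 1) (had : ∑ i, a i ≤ d)
    {b : Fin (2 * m) → ℕ} (hb0 : b ≠ 0) (hb1 : ∀ l, b ≠ Pi.single l 1) :
    coeffT F p (2 * m) b (δ (xpow F p (2 * m) a)) = 0 := by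
  by_cases hbox : ∀ i, b i < p
  swap
  · rw [coeffT_of_not_box hbox]
  by_cases habox : ∀ i, a i < p
  swap
  · push Not at habox
    obtain ⟨i, hi⟩ := habox
    rw [xpow_of_le hi, map_zero, map_zero]
  obtain ⟨l, hl⟩ : ∃ l, b l ≠ 0 := by
    by_contra hcon
    push Not at hcon
    exact hb0 (funext hcon)
  have hle : Pi.single l 1 ≤ b := by
    intro i
    by_cases hi : i = l
    · subst hi; simp; omega
    · simp [hi]
  have hbl : b - Pi.single l 1 + Pi.single l 1 = b := tsub_add_cancel_of_le hle
  have hne : b - Pi.single l 1 ≠ 0 := by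
    intro e
    rw [e, zero_add] at hbl
    exact hb1 l hbl.symm
  have hr := h.rule _ _ (single_ne_top hp5 (cj m l)) ha
  rw [pb_const_left (h1 (cj m l)), zero_add, pb_gen_left, pb_gen_left, cj_cj, Dj_xpow] at hr
  have hlow : δ (sg F m (cj m l) • (a l : F) • xpow F p (2 * m) (a - Pi.single l 1)) ∈
      constS F p m := by
    rw [map_smul, map_smul]
    by_cases hal : a l = 0
    · rw [hal, Nat.cast_zero, zero_smul, smul_zero]; exact zero_mem _
    · refine Submodule.smul_mem _ _ (Submodule.smul_mem _ _ (hd _ ?_ ?_))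
      · refine ne_top_of_apply l ?_
        have := habox l
        simp
        omega
      · refine lt_of_lt_of_le (Finset.sum_lt_sum (fun i _ => ?_) ⟨l, Finset.mem_univ _, ?_⟩) had
        · simp
        · simp; omega
  have h3 := sub_mem hlow hr
  rw [sub_sub_cancel] at h3
  have h4 := h3 _ hne
  rw [map_smul, coeffT_Dj, hbl] at h4
  have h5 := (smul_eq_zero.mp h4).resolve_left (sg_ne_zero _)
  refine (mul_eq_zero.mp h5).resolve_left ?_
  have : (((b - Pi.single l 1 : Fin (2 * m) → ℕ) l : ℕ) : F) + 1 = b l := by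
    have : (b - Pi.single l 1 : Fin (2 * m) → ℕ) l + 1 = b l := by simp; omega
    exact_mod_cast congrArg (Nat.cast (R := F)) this
  rw [this]
  exact natCast_ne_zero_of_lt hl (hbox l)

lemma tor_ne_top (hp5 : 5 ≤ p) (k : Fin (2 * m)) : tor m k ≠ fun _ => p - 1 :=
  quad_ne_top hp5 k (cj m k)

/-- If `δ` kills the torus elements `h_k`, it preserves weights. -/
lemma weight_eq (hp5 : 5 ≤ p) (h : IsDerMod F p m δ) (hT : ∀ k, Kills δ (tor m k))
    {a b : Fin (2 * m) → ℕ} (ha : a ≠ fun _ => p - 1) (hb : b ≠ 0)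
    (hab : coeffT F p (2 * m) b (δ (xpow F p (2 * m) a)) ≠ 0) (k : Fin (2 * m)) :
    (a (cj m k) : F) - a k = b (cj m k) - b k := by
  have hr := h.rule _ _ (tor_ne_top hp5 k) ha
  rw [pb_const_left (hT k), zero_add, pb_tor_xpow, map_smul] at hr
  have := hr b hb
  rw [map_sub, map_smul, coeffT_pb_tor, smul_eq_mul, ← sub_mul] at this
  have h2 := (mul_eq_zero.mp this).resolve_right hab
  rw [← mul_sub] at h2
  exact sub_eq_zero.mp ((mul_eq_zero.mp h2).resolve_left (sg_ne_zero _))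

/-- Weights that do not occur among the coordinates are killed. -/
lemma kills_of_weight (hp5 : 5 ≤ p) (h : IsDerMod F p m δ)
    (h1 : ∀ k, Kills δ (Pi.single k 1)) (hT : ∀ k, Kills δ (tor m k)) {d : ℕ}
    (hd : ∀ c : Fin (2 * m) → ℕ, c ≠ (fun _ => p - 1) → ∑ i, c i < d → Kills δ c)
    {a : Fin (2 * m) → ℕ} (ha : a ≠ fun _ => p - 1) (had : ∑ i, a i ≤ d)
    (hw : ∀ l, (a l : F) - a (cj m l) = 1 →
      (∀ j, j ≠ l → j ≠ cj m l → (a j : F) = a (cj m j)) → Kills δ a) : Kills δ a := by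
  intro b hb0
  by_contra hne
  by_cases hb1 : ∃ l, b = Pi.single l 1
  · obtain ⟨l, rfl⟩ := hb1
    have hwt := weight_eq hp5 h hT ha hb0 hne
    have hk : Kills δ a := by
      refine hw l ?_ ?_
      · have := hwt l
        simp only [Pi.single_eq_same, Pi.single_eq_of_ne (cj_ne l)] at this
        push_cast at this
        linear_combination -this
      · intro j hj hj'
        have := hwt j
        have e : cj m j ≠ l := fun e => hj' (cj_eq_iff.mp e)
        simp only [Pi.single_eq_of_ne hj, Pi.single_eq_of_ne e] at this
        push_cast at this
        linear_combination -this
    exact hne (hk _ hb0)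
  · push Not at hb1
    exact hne (linear_of_kills hp5 h h1 hd ha had hb0 hb1)

lemma kills_of_pair (hp5 : 5 ≤ p) (h : IsDerMod F p m δ)
    (h1 : ∀ k, Kills δ (Pi.single k 1)) (hT : ∀ k, Kills δ (tor m k)) {d : ℕ}
    (hd : ∀ c : Fin (2 * m) → ℕ, c ≠ (fun _ => p - 1) → ∑ i, c i < d → Kills δ c)
    {a : Fin (2 * m) → ℕ} (ha : a ≠ fun _ => p - 1) (had : ∑ i, a i ≤ d) (j : Fin (2 * m))
    (w0 : (a j : F) - a (cj m j) ≠ 0) (w1 : (a j : F) - a (cj m j) ≠ 1)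
    (w2 : (a j : F) - a (cj m j) ≠ -1) : Kills δ a := by
  refine kills_of_weight hp5 h h1 hT hd ha had fun l hl ho => ?_
  exfalso
  by_cases e : j = l
  · subst e; exact w1 hl
  by_cases e' : j = cj m l
  · apply w2
    rw [e', cj_cj]
    linear_combination -hl
  · exact w0 (by rw [ho j e e', sub_self])

lemma sum_single (k : Fin (2 * m)) : ∑ i, (Pi.single k 1 : Fin (2 * m) → ℕ) i = 1 := by
  simp

lemma sum_quad (k l : Fin (2 * m)) :
    ∑ i, (Pi.single k 1 + Pi.single l 1 : Fin (2 * m) → ℕ) i = 2 := by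
  simp [Finset.sum_add_distrib]

/-- `x^a` is a nonzero multiple of `{x_{j'}^2, x^b}` with `b = a + ε_j - ε_{j'}`, so it is killed as
soon as the weight of `x^b` at `j` is none of `0, ±1`. -/
lemma kills_of_raise (hp5 : 5 ≤ p) (h : IsDerMod F p m δ)
    (h1 : ∀ k, Kills δ (Pi.single k 1)) (hT : ∀ k, Kills δ (tor m k)) {d : ℕ} (hd3 : 3 ≤ d)
    (hd : ∀ c : Fin (2 * m) → ℕ, c ≠ (fun _ => p - 1) → ∑ i, c i < d → Kills δ c)
    {a : Fin (2 * m) → ℕ} (had : ∑ i, a i ≤ d) (j : Fin (2 * m))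
    (hj : a j + 1 < p) (hj' : a (cj m j) ≠ 0)
    (w0 : (a j : F) - a (cj m j) + 2 ≠ 0) (w1 : (a j : F) - a (cj m j) + 2 ≠ 1)
    (w2 : (a j : F) - a (cj m j) + 2 ≠ -1) : Kills δ a := by
  have hcj := cj_ne j
  by_cases hjp : a (cj m j) < p
  swap
  · rw [Kills, xpow_of_le (not_lt.mp hjp), map_zero]; exact zero_mem _
  have hle : Pi.single (cj m j) 1 ≤ a := by
    intro i
    by_cases hi : i = cj m j
    · subst hi; simp; omega
    · simp [hi]
  obtain ⟨r, rfl⟩ : ∃ r : Fin (2 * m) → ℕ, a = Pi.single (cj m j) 1 + r := ⟨_, (add_tsub_cancel_of_le hle).symm⟩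
  have hj0 : (Pi.single (cj m j) 1 + r : Fin (2 * m) → ℕ) j = r j := by simp [hcj.symm]
  have hj1 : (Pi.single (cj m j) 1 + r : Fin (2 * m) → ℕ) (cj m j) = r (cj m j) + 1 := by
    simp [add_comm]
  rw [hj0] at hj w0 w1 w2
  rw [hj1] at hjp w0 w1 w2
  push_cast at w0 w1 w2
  set b : Fin (2 * m) → ℕ := r + Pi.single j 1 with hb
  have bj : b j = r j + 1 := by simp [hb]
  have bj' : b (cj m j) = r (cj m j) := by simp [hb, hcj]
  have hbt : b ≠ fun _ => p - 1 := ne_top_of_apply (cj m j) (by rw [bj']; omega)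
  have hbs : ∑ i, b i ≤ d := by
    rw [← sum_single (cj m j)] at had
    simp only [hb, Pi.add_apply, Finset.sum_add_distrib, sum_single] at had ⊢
    omega
  have kb : Kills δ b := by
    refine kills_of_pair hp5 h h1 hT hd hbt hbs j ?_ ?_ ?_ <;> rw [bj, bj'] <;> push_cast
    · intro e; apply w0; linear_combination e
    · intro e; apply w1; linear_combination e
    · intro e; apply w2; linear_combination e
  have kq : Kills δ (Pi.single (cj m j) 1 + Pi.single (cj m j) 1) :=
    hd _ (quad_ne_top hp5 _ _) (by rw [sum_quad]; omega)
  have hk := kills_pb h (quad_ne_top hp5 _ _) hbt kq kb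
  have hbr : b - Pi.single j 1 = r := by rw [hb, add_tsub_cancel_right]
  rw [pb_quad_xpow, cj_cj, hbr, ← add_smul, bj] at hk
  refine kills_of_smul ?_ hk
  rw [← two_mul]
  have h2 : ((2 : ℕ) : F) ≠ 0 := natCast_ne_zero_of_lt (p := p) (by omega) (by omega)
  refine mul_ne_zero (by exact_mod_cast h2) (mul_ne_zero (sg_ne_zero _) ?_)
  exact natCast_ne_zero_of_lt (p := p) (by omega) (by omega)

/-- A derivation killing the coordinates and the torus elements kills everything. A monomial that
survives has the weight of some `x_l`; it is written as a bracket of monomials already known to be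
killed. -/
lemma kills_all_of_torus (hp5 : 5 ≤ p) (h : IsDerMod F p m δ)
    (h1 : ∀ k, Kills δ (Pi.single k 1)) (hT : ∀ k, Kills δ (tor m k)) (d : ℕ) :
    ∀ a : Fin (2 * m) → ℕ, a ≠ (fun _ => p - 1) → ∑ i, a i < d → Kills δ a := by
  have c2 : (2 : F) ≠ 0 := by
    exact_mod_cast natCast_ne_zero_of_lt (F := F) (p := p) (k := 2) (by omega) (by omega)
  have c3 : (3 : F) ≠ 0 := by
    exact_mod_cast natCast_ne_zero_of_lt (F := F) (p := p) (k := 3) (by omega) (by omega)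
  have c4 : (4 : F) ≠ 0 := by
    exact_mod_cast natCast_ne_zero_of_lt (F := F) (p := p) (k := 4) (by omega) (by omega)
  induction d with
  | zero => intro a _ h0; omega
  | succ d hd =>
  intro a ha had
  rw [Nat.lt_succ_iff] at had
  by_cases habox : ∀ i, a i < p
  swap
  · push Not at habox
    obtain ⟨i, hi⟩ := habox
    rw [Kills, xpow_of_le hi, map_zero]
    exact zero_mem _
  refine kills_of_weight hp5 h h1 hT hd ha had fun l hl ho => ?_
  have hcl := cj_ne l
  have hsum : a l + a (cj m l) ≤ ∑ i, a i := by
    rw [← Finset.sum_pair hcl.symm]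
    exact Finset.sum_le_sum_of_subset (Finset.subset_univ _)
  by_cases hl' : a (cj m l) = 0
  · have hl1 : a l = 1 := by
      rcases natCast_sub_eq_one (habox _) (habox _) hl with e | e <;> omega
    by_cases hex : ∃ j, j ≠ l ∧ a j ≠ 0
    swap
    · push Not at hex
      have : a = Pi.single l 1 := by
        ext i
        by_cases hi : i = l
        · subst hi; simpa using hl1
        · simpa [hi] using hex i hi
      rw [this]
      exact h1 l
    obtain ⟨j, hjl, hj0⟩ := hex
    have hjl' : j ≠ cj m l := by rintro rfl; exact hj0 hl'
    have hcj := cj_ne j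
    have e1 : cj m j ≠ l := fun e => hjl' (cj_eq_iff.mp e)
    have e2 : cj m j ≠ cj m l := fun e => hjl (by rw [← cj_cj j, e, cj_cj])
    have hjj : a (cj m j) = a j := (natCast_inj_of_lt (habox _) (habox _) (ho j hjl hjl')).symm
    have hd3 : 3 ≤ d := by
      have h3 : ∑ i ∈ ({l, j, cj m j} : Finset (Fin (2 * m))), a i ≤ ∑ i, a i :=
        Finset.sum_le_sum_of_subset (Finset.subset_univ _)
      rw [Finset.sum_insert (by simp [hjl.symm, e1.symm]), Finset.sum_pair hcj.symm] at h3
      omega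
    by_cases hjp : a j + 1 < p
    · refine kills_of_raise hp5 h h1 hT hd3 hd had j hjp (by omega) ?_ ?_ ?_ <;>
        rw [hjj, sub_self, zero_add]
      · exact c2
      · intro e; exact one_ne_zero (α := F) (by linear_combination e)
      · intro e; exact c3 (by linear_combination e)
    -- Now `a_j = a_{j'} = p - 1`; use `{x_{j'} x_l, x^b}` with `b = a - ε_{j'} + ε_{l'}`.
    have hjp' : a j = p - 1 := by have := habox j; omega
    have hle : Pi.single (cj m j) 1 ≤ a := by
      intro i
      by_cases hi : i = cj m j
      · subst hi; simp; omega
      · simp [hi]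
    obtain ⟨r, hr⟩ : ∃ r : Fin (2 * m) → ℕ, a = Pi.single (cj m j) 1 + r :=
      ⟨_, (add_tsub_cancel_of_le hle).symm⟩
    have rj : r j = p - 1 := by
      have := congrFun hr j
      simp [hcj.symm] at this; omega
    have rj' : r (cj m j) = p - 2 := by
      have := congrFun hr (cj m j)
      simp at this; omega
    have rl : r l = 1 := by
      have := congrFun hr l
      simp [e1.symm] at this; omega
    have rl' : r (cj m l) = 0 := by
      have := congrFun hr (cj m l)
      simp [e2.symm] at this; omega
    have rs : 1 + ∑ i, r i = ∑ i, a i := by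
      rw [hr]
      simp only [Pi.add_apply, Finset.sum_add_distrib, sum_single]
    set b : Fin (2 * m) → ℕ := r + Pi.single (cj m l) 1 with hb
    have bl : b l = 1 := by simp [hb, hcl.symm, rl]
    have bl' : b (cj m l) = 1 := by simp [hb, rl']
    have bj : b j = p - 1 := by simp [hb, hjl', rj]
    have bs : ∑ i, b i = ∑ i, a i := by
      rw [← rs]
      simp only [hb, Pi.add_apply, Finset.sum_add_distrib, sum_single, add_comm]
    have hbt : b ≠ fun _ => p - 1 := ne_top_of_apply l (by rw [bl]; omega)
    have kb : Kills δ b := by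
      refine kills_of_raise hp5 h h1 hT hd3 hd (by omega) l (by omega) (by omega) ?_ ?_ ?_ <;>
        rw [bl, bl', sub_self, zero_add]
      · exact c2
      · intro e; exact one_ne_zero (α := F) (by linear_combination e)
      · intro e; exact c3 (by linear_combination e)
    set e : Fin (2 * m) → ℕ := Pi.single l 1 + (b - Pi.single j 1) with he
    have el : e l = 2 := by simp [he, bl, hjl.symm]
    have el' : e (cj m l) = 1 := by simp [he, bl', hjl'.symm, hcl]
    have es : ∑ i, e i = ∑ i, a i := by
      have hle' : Pi.single j 1 ≤ b := by
        intro i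
        by_cases hi : i = j
        · subst hi; simp; omega
        · simp [hi]
      have h2 : b - Pi.single j 1 + Pi.single j 1 = b := tsub_add_cancel_of_le hle'
      rw [← bs, ← h2, he]
      simp only [Pi.add_apply, Finset.sum_add_distrib, sum_single, add_comm]
    have ke : Kills δ e := by
      refine kills_of_raise hp5 h h1 hT hd3 hd (by omega) l (by omega) (by omega) ?_ ?_ ?_ <;>
        rw [el, el'] <;> push_cast
      · intro e; exact c3 (by linear_combination e)
      · intro e; exact c2 (by linear_combination e)
      · intro e; exact c4 (by linear_combination e)
    have kq : Kills δ (Pi.single (cj m j) 1 + Pi.single l 1) :=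
      hd _ (quad_ne_top hp5 _ _) (by rw [sum_quad]; omega)
    have hk := kills_pb h (quad_ne_top hp5 _ _) hbt kq kb
    have hbr : b - Pi.single (cj m l) 1 = r := by rw [hb, add_tsub_cancel_right]
    rw [pb_quad_xpow, cj_cj, hbr, ← hr, ← he, map_add, bl'] at hk
    have hk2 : δ ((sg F m (cj m j) * (b j : F)) • xpow F p (2 * m) e) ∈ constS F p m := by
      rw [map_smul]; exact Submodule.smul_mem _ _ ke
    have hk3 := sub_mem hk hk2
    rw [add_sub_cancel_right] at hk3
    refine kills_of_smul ?_ hk3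
    rw [Nat.cast_one, mul_one]
    exact sg_ne_zero _
  · have hd3 : 3 ≤ d := by
      rcases natCast_sub_eq_one (habox _) (habox _) hl with e | e <;> omega
    by_cases hlp : a l + 1 < p
    · refine kills_of_raise hp5 h h1 hT hd3 hd had l hlp hl' ?_ ?_ ?_ <;>
        rw [hl]
      · intro e; exact c3 (by linear_combination e)
      · intro e; exact c2 (by linear_combination e)
      · intro e; exact c4 (by linear_combination e)
    -- Now `a_l = p - 1` and `a_{l'} = p - 2`; use `{x_l^2 x_{l'}, x^{a - ε_l}}`.
    have hlp' : a l = p - 1 := by have := habox l; omega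
    have hl2 : a (cj m l) = p - 2 := by
      rcases natCast_sub_eq_one (habox _) (habox _) hl with e | e <;> omega
    have hle : Pi.single l 1 ≤ a := by
      intro i
      by_cases hi : i = l
      · subst hi; simp; omega
      · simp [hi]
    obtain ⟨r, hr⟩ : ∃ r : Fin (2 * m) → ℕ, a = Pi.single l 1 + r :=
      ⟨_, (add_tsub_cancel_of_le hle).symm⟩
    have rl : r l = p - 2 := by
      have := congrFun hr l
      simp at this; omega
    have rl' : r (cj m l) = p - 2 := by
      have := congrFun hr (cj m l)
      simp [hcl] at this; omega
    have rs : 1 + ∑ i, r i = ∑ i, a i := by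
      rw [hr]
      simp only [Pi.add_apply, Finset.sum_add_distrib, sum_single]
    have hrt : r ≠ fun _ => p - 1 := ne_top_of_apply l (by rw [rl]; omega)
    have kr : Kills δ r := hd _ hrt (by omega)
    have hct : (Pi.single l 1 + tor m l : Fin (2 * m) → ℕ) ≠ fun _ => p - 1 := by
      refine ne_top_of_apply (cj m l) ?_
      simp [hcl]
      omega
    have kc : Kills δ (Pi.single l 1 + tor m l) := by
      refine hd _ hct ?_
      have : ∑ i, (Pi.single l 1 + tor m l : Fin (2 * m) → ℕ) i = 3 := by
        simp [Finset.sum_add_distrib]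
      omega
    have hk := kills_pb h hct hrt kc kr
    have hrle : Pi.single (cj m l) 1 ≤ r := by
      intro i
      by_cases hi : i = cj m l
      · subst hi; simp; omega
      · simp [hi]
    have hexp : tor m l + (r - Pi.single (cj m l) 1) = a := by
      rw [tor, add_assoc, add_tsub_cancel_of_le hrle, hr]
    rw [← xpow_mul, pb_mul_left, pb_tor_xpow, rl, rl', sub_self, mul_zero, zero_smul, mul_zero,
      zero_add, pb_gen_left, Dj_xpow, rl', mul_smul_comm, mul_smul_comm, xpow_mul, hexp,
      smul_smul] at hk
    refine kills_of_smul (mul_ne_zero (sg_ne_zero _) ?_) hk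
    exact natCast_ne_zero_of_lt (p := p) (by omega) (by omega)

lemma coeffT_gen_sum (hp5 : 5 ≤ p) (c : Fin (2 * m) → F) (b : Fin (2 * m) → ℕ) :
    coeffT F p (2 * m) b (∑ k, c k • gen F p m k) =
      ∑ k, if b = Pi.single k 1 then c k else 0 := by
  have hbox : ∀ k i, (Pi.single k 1 : Fin (2 * m) → ℕ) i < p := by
    intro k i
    by_cases hi : i = k
    · subst hi; simp; omega
    · simp [hi]; omega
  by_cases hb : ∀ i, b i < p
  · rw [map_sum]
    refine Finset.sum_congr rfl fun k _ => ?_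
    rw [map_smul, coeffT_xpow hb, smul_eq_mul, mul_ite, mul_one, mul_zero]
    simp only [eq_comm]
  · rw [coeffT_of_not_box hb]
    symm
    refine Finset.sum_eq_zero fun k _ => if_neg ?_
    rintro rfl
    exact hb (hbox k)

/-- A derivation killing the coordinates is `ad ℓ` for a linear form `ℓ`, modulo constants. The
form is read off from the linear forms `δ(h_k)`. -/
lemma exists_linear (hp5 : 5 ≤ p) (h : IsDerMod F p m δ) (h1 : ∀ k, Kills δ (Pi.single k 1)) :
    ∃ c : Fin (2 * m) → F, ∀ a : Fin (2 * m) → ℕ, a ≠ (fun _ => p - 1) →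
      Kills (δ - pb F p m (∑ k, c k • gen F p m k)) a := by
  set c : Fin (2 * m) → F := fun k =>
    sg F m k * coeffT F p (2 * m) (Pi.single k 1) (δ (xpow F p (2 * m) (tor m k))) with hc
  refine ⟨c, ?_⟩
  set ℓ := ∑ k, c k • gen F p m k with hℓ
  have hco : ∀ k, coeffT F p (2 * m) (Pi.single k 1) ℓ = c k := by
    intro k
    rw [hℓ, coeffT_gen_sum hp5, Finset.sum_eq_single k]
    · simp
    · intro j _ hj
      rw [if_neg]
      intro e
      have := congrFun e k
      simp [hj.symm] at this
    · simp
  set δ' := δ - pb F p m ℓ with hδ'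
  have h' : IsDerMod F p m δ' := h.sub (isDerMod_pb ℓ)
  have h1' : ∀ k, Kills δ' (Pi.single k 1) := by
    intro k
    rw [Kills, hδ', LinearMap.sub_apply]
    refine sub_mem (h1 k) ?_
    rw [hℓ, map_sum, LinearMap.sum_apply]
    refine Submodule.sum_mem _ fun j _ => ?_
    rw [map_smul, LinearMap.smul_apply]
    exact Submodule.smul_mem _ _ (pb_gen_gen_mem (by omega) j k)
  have hlow : ∀ a : Fin (2 * m) → ℕ, a ≠ (fun _ => p - 1) → ∑ i, a i < 2 → Kills δ' a := by
    intro a _ ha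
    by_cases h0 : ∃ l, a l ≠ 0
    · obtain ⟨l, hl⟩ := h0
      have : a = Pi.single l 1 := by
        have hs := Finset.add_sum_erase Finset.univ a (Finset.mem_univ l)
        have hz : ∑ i ∈ Finset.univ.erase l, a i = 0 := by omega
        rw [Finset.sum_eq_zero_iff] at hz
        ext i
        by_cases hi : i = l
        · subst hi; simp; omega
        · simpa [hi] using hz i (by simp [hi])
      rw [this]
      exact h1' l
    · push Not at h0
      have : a = 0 := funext h0
      rw [Kills, this, xpow_zero]
      exact h'.one
  -- By the choice of `ℓ`, the coefficients of `δ'(h_k)` at `x_k` and `x_{k'}` vanish.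
  have hdiag : ∀ k, coeffT F p (2 * m) (Pi.single k 1) (δ' (xpow F p (2 * m) (tor m k))) = 0 := by
    intro k
    rw [hδ', LinearMap.sub_apply, pb_skew, map_sub, map_neg, coeffT_pb_tor, hco]
    simp only [hc, Pi.single_eq_same, Pi.single_eq_of_ne (cj_ne k)]
    push_cast
    linear_combination (-coeffT F p (2 * m) (Pi.single k 1) (δ (xpow F p (2 * m) (tor m k)))) *
      (sg_mul_self (F := F) k)
  have hT : ∀ j, Kills δ' (tor m j) := by
    intro j b hb0
    by_cases hb1 : ∃ k, b = Pi.single k 1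
    · obtain ⟨k, rfl⟩ := hb1
      by_cases hkj : k = j
      · subst hkj; exact hdiag k
      by_cases hkj' : k = cj m j
      · have := hdiag k
        rwa [hkj', tor_cj, ← hkj'] at this
      have hr := h'.rule _ _ (tor_ne_top hp5 k) (tor_ne_top hp5 j)
      rw [pb_tor_xpow, tor_apply_cj, sub_self, mul_zero, zero_smul, map_zero, zero_sub,
        neg_mem_iff] at hr
      have := hr _ hb0
      rw [map_add, pb_skew, map_neg, coeffT_pb_tor, coeffT_pb_tor, hdiag] at this
      simp only [mul_zero, neg_zero, zero_add, Pi.single_eq_same,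
        Pi.single_eq_of_ne (cj_ne k)] at this
      refine (mul_eq_zero.mp this).resolve_left (mul_ne_zero (sg_ne_zero _) ?_)
      push_cast
      simp
    · push Not at hb1
      exact linear_of_kills hp5 h' h1' hlow (tor_ne_top hp5 j) (sum_quad _ _).le hb0 hb1
  intro a ha
  exact kills_all_of_torus hp5 h' h1' hT _ a ha (Nat.lt_succ_self _)

end Vanishing

/-! ### The criterion -/

section Criterion

variable {F : Type*} [Field F] {p m : ℕ} [CharP F p]

lemma mem_Hsub (hp : 0 < p) {f : TruncP F p (2 * m)} : f ∈ Hsub F p m ↔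
    coeffT F p (2 * m) 0 f = 0 ∧ coeffT F p (2 * m) (fun _ => p - 1) f = 0 := by
  constructor
  · intro hf
    have hle : Hsub F p m ≤ LinearMap.ker (coeffT F p (2 * m) 0) ⊓
        LinearMap.ker (coeffT F p (2 * m) (fun _ => p - 1)) := by
      rw [Hsub, Submodule.span_le]
      rintro _ ⟨a, ha, h0, ht, rfl⟩
      refine ⟨?_, ?_⟩
      · rw [SetLike.mem_coe, LinearMap.mem_ker, coeffT_xpow (a := 0) (fun _ => hp)]
        exact if_neg h0
      · rw [SetLike.mem_coe, LinearMap.mem_ker, coeffT_xpow (fun _ => Nat.sub_lt hp one_pos),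
          if_neg ht]
    exact hle hf
  · rintro ⟨h0, ht⟩
    rw [eq_sum_xpow f]
    refine Submodule.sum_mem _ fun a ha => ?_
    by_cases ha0 : a = 0
    · rw [ha0, h0, zero_smul]; exact zero_mem _
    by_cases hat : a = fun _ => p - 1
    · rw [hat, ht, zero_smul]; exact zero_mem _
    refine Submodule.smul_mem _ _ (Submodule.subset_span ⟨a, ?_, ha0, hat, rfl⟩)
    intro i
    simpa using Fintype.mem_piFinset.mp ha i

lemma xpow_mem_Hsub {a : Fin (2 * m) → ℕ} (ha : ∀ i, a i < p) (h0 : a ≠ 0)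
    (ht : a ≠ fun _ => p - 1) : xpow F p (2 * m) a ∈ Hsub F p m :=
  Submodule.subset_span ⟨a, ha, h0, ht, rfl⟩

lemma Hbr_eq (f g : TruncP F p (2 * m)) : Hbr F p m f g =
    pb F p m f g - coeffT F p (2 * m) 0 (pb F p m f g) • (1 : TruncP F p (2 * m)) := rfl

lemma Hbr_sub_pb (hp : 0 < p) (f g : TruncP F p (2 * m)) :
    Hbr F p m f g - pb F p m f g ∈ constS F p m := by
  rw [Hbr_eq, sub_sub_cancel_left, neg_mem_iff]
  exact Submodule.smul_mem _ _ (one_mem_constS hp)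

variable (F p m) in
/-- The projection of `A(2m)` removing the constant term. -/
def dropConst : TruncP F p (2 * m) →ₗ[F] TruncP F p (2 * m) :=
  LinearMap.id - (coeffT F p (2 * m) 0).smulRight 1

lemma dropConst_apply (f : TruncP F p (2 * m)) :
    dropConst F p m f = f - coeffT F p (2 * m) 0 f • 1 := rfl

lemma dropConst_pb (f g : TruncP F p (2 * m)) :
    dropConst F p m (pb F p m f g) = Hbr F p m f g := rfl

lemma dropConst_one (hp : 0 < p) : dropConst F p m 1 = 0 := by
  rw [dropConst_apply, coeffT_zero_one hp, if_pos rfl, one_smul, sub_self]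

lemma dropConst_xpow (hp : 0 < p) {a : Fin (2 * m) → ℕ} (h0 : a ≠ 0) :
    dropConst F p m (xpow F p (2 * m) a) = xpow F p (2 * m) a := by
  rw [dropConst_apply, coeffT_xpow (a := 0) (fun _ => hp), if_neg h0, zero_smul, sub_zero]

variable {γ : TruncP F p (2 * m) →ₗ[F] TruncP F p (2 * m)}

/-- A derivation of `H(2m)`, precomposed with the removal of the constant term, is a derivation of
`A(2m)` modulo constants in the sense of `IsDerMod`. -/
lemma isDerMod_of_isDerivationOn (hp : 0 < p)
    (hγ : IsDerivationOn F (Hsub F p m) (Hbr F p m) γ) :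
    IsDerMod F p m (γ ∘ₗ dropConst F p m) where
  one := by
    rw [LinearMap.comp_apply, dropConst_one hp, map_zero]
    exact zero_mem _
  rule := by
    intro a c ha hc
    by_cases ha0 : a = 0
    · subst ha0
      rw [xpow_zero, LinearMap.comp_apply, LinearMap.comp_apply, dropConst_one hp, map_zero,
        pb_const_left (one_mem_constS hp), pb_const_left (one_mem_constS hp)]
      simp
    by_cases hc0 : c = 0
    · subst hc0
      rw [xpow_zero, LinearMap.comp_apply, LinearMap.comp_apply, LinearMap.comp_apply,
        dropConst_one hp, map_zero,
        pb_const_right (one_mem_constS hp), pb_const_right (one_mem_constS hp)]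
      simp
    by_cases hab : ∀ i, a i < p
    swap
    · push Not at hab
      obtain ⟨i, hi⟩ := hab
      simp [xpow_of_le hi]
    by_cases hcb : ∀ i, c i < p
    swap
    · push Not at hcb
      obtain ⟨i, hi⟩ := hcb
      simp [xpow_of_le hi]
    simp only [LinearMap.comp_apply, dropConst_pb, dropConst_xpow hp ha0, dropConst_xpow hp hc0]
    rw [hγ.2 _ (xpow_mem_Hsub hab ha0 ha) _ (xpow_mem_Hsub hcb hc0 hc), add_sub_add_comm]
    exact add_mem (Hbr_sub_pb hp _ _) (Hbr_sub_pb hp _ _)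

lemma single_one_ne_zero (k : Fin (2 * m)) : (Pi.single k 1 : Fin (2 * m) → ℕ) ≠ 0 := by
  intro e
  have := congrFun e k
  simp at this

lemma single_box (hp5 : 5 ≤ p) (k i : Fin (2 * m)) :
    (Pi.single k 1 : Fin (2 * m) → ℕ) i < p := by
  by_cases hi : i = k
  · subst hi; simp; omega
  · simp [hi]; omega

lemma top_sub_add (hp5 : 5 ≤ p) (k : Fin (2 * m)) :
    ((fun _ => p - 1) - Pi.single k 1 + Pi.single k 1 : Fin (2 * m) → ℕ) = fun _ => p - 1 := by
  ext i
  by_cases hi : i = k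
  · subst hi; simp; omega
  · simp [hi]

lemma coeffT_top_sub_Dj (hp5 : 5 ≤ p) (k : Fin (2 * m)) (z : TruncP F p (2 * m)) :
    coeffT F p (2 * m) ((fun _ => p - 1) - Pi.single k 1) (Dj F p (2 * m) k z) =
      - coeffT F p (2 * m) (fun _ => p - 1) z := by
  rw [coeffT_Dj, top_sub_add hp5]
  have h1 : ((fun _ => p - 1) - Pi.single k 1 : Fin (2 * m) → ℕ) k + 1 = p - 1 := by
    simp; omega
  have h2 := congrArg (Nat.cast (R := F)) h1
  rw [natCast_pred F (by omega), Nat.cast_succ] at h2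
  rw [h2, neg_one_mul]

/-- If `γ` agrees with `ad z` on the coordinates modulo constants and `z` has no `x^τ` term, then
conditions (i) and (iii) hold for every `i`, and so does (ii) in the form given to it by
`coeff_top_eq`. -/
lemma inner_conditions (hp5 : 5 ≤ p) {γ : TruncP F p (2 * m) →ₗ[F] TruncP F p (2 * m)}
    {z : TruncP F p (2 * m)} (hz : coeffT F p (2 * m) (fun _ => p - 1) z = 0)
    (h : ∀ k, γ (gen F p m k) - pb F p m z (gen F p m k) ∈ constS F p m) (i : Fin (2 * m)) :
    coeffT F p (2 * m) ((fun _ => p - 1) - Pi.single (cj m i) 1) (γ (gen F p m i)) = 0 ∧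
      coeffT F p (2 * m) (Pi.single i (p - 1)) (γ (gen F p m (cj m i))) = 0 ∧
      coeffT F p (2 * m) (Pi.single i 1) (γ (gen F p m i)) +
        coeffT F p (2 * m) (Pi.single (cj m i) 1) (γ (gen F p m (cj m i))) = 0 := by
  have hco : ∀ k b, b ≠ 0 → coeffT F p (2 * m) b (γ (gen F p m k)) =
      -(sg F m k * coeffT F p (2 * m) b (Dj F p (2 * m) (cj m k) z)) := by
    intro k b hb
    have := h k b hb
    rw [map_sub, sub_eq_zero] at this
    rw [this, pb_gen_right, map_neg, map_smul, smul_eq_mul]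
  have hci := cj_ne i
  refine ⟨?_, ?_, ?_⟩
  · rw [hco, coeffT_top_sub_Dj hp5, hz]
    · simp
    · intro e
      have := congrFun e i
      simp [hci.symm] at this
      omega
  · rw [hco, cj_cj, coeffT_Dj, Pi.single_eq_same, natCast_pred F (by omega)]
    · simp
    · intro e
      have := congrFun e i
      simp at this
      omega
  · rw [hco _ _ (single_one_ne_zero _), hco _ _ (single_one_ne_zero _), cj_cj, coeffT_Dj,
      coeffT_Dj, sg_cj, add_comm (Pi.single (cj m i) 1)]
    simp [hci.symm]

/-- Under the three conditions, `δ` agrees on the coordinates with `{z, ·}` for some `z ∈ H(2m)`.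
Such a `z` is a potential of the 1-form `∑ σ(k) δ(x_{k'}) dx_k`: condition (iii) makes this form
closed, (ii) makes it exact, and (i) removes the `x^τ` term from `z`. -/
lemma exists_inner_on_gen (hp5 : 5 ≤ p) {δ : TruncP F p (2 * m) →ₗ[F] TruncP F p (2 * m)}
    (h : IsDerMod F p m δ)
    (hi : ∃ i, coeffT F p (2 * m) ((fun _ => p - 1) - Pi.single (cj m i) 1)
      (δ (gen F p m i)) = 0)
    (hii : ∀ i, coeffT F p (2 * m) (Pi.single i (p - 1)) (δ (gen F p m (cj m i))) = 0)
    (hiii : ∃ i, coeffT F p (2 * m) (Pi.single i 1) (δ (gen F p m i)) +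
        coeffT F p (2 * m) (Pi.single (cj m i) 1) (δ (gen F p m (cj m i))) = 0) :
    ∃ z ∈ Hsub F p m, ∀ k, pb F p m z (gen F p m k) = δ (gen F p m k) := by
  obtain ⟨i, hi⟩ := hi
  obtain ⟨j, hj⟩ := hiii
  have hdj : defect δ j (cj m j) = 0 := by
    apply eq_zero_of_mem_constS (defect_mem hp5 h _ _)
    rw [defect_pair, hj, mul_zero]
  have hd := defect_eq_zero hp5 h hdj
  obtain ⟨z, hz0, hz⟩ := exists_potential (by omega) (fun k => sg F m k • δ (gen F p m (cj m k)))
    (by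
      intro k l
      have h1 := hd (cj m k) (cj m l)
      rw [defect, pb_gen_right, pb_gen_left, cj_cj, cj_cj, sg_cj, sg_cj] at h1
      have hk := sg_mul_self (F := F) k
      have hl := sg_mul_self (F := F) l
      simp only [Dj_smul]
      have h2 : sg F m l • Dj F p (2 * m) l (δ (gen F p m (cj m k))) =
          sg F m k • Dj F p (2 * m) k (δ (gen F p m (cj m l))) := by
        rw [neg_smul, neg_smul, neg_neg, ← sub_eq_add_neg, sub_eq_zero] at h1
        exact h1
      calc sg F m l • Dj F p (2 * m) k (δ (gen F p m (cj m l)))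
          = (sg F m l * sg F m k) • (sg F m k • Dj F p (2 * m) k (δ (gen F p m (cj m l)))) := by
            rw [smul_smul, mul_assoc, hk, mul_one]
        _ = sg F m k • Dj F p (2 * m) l (δ (gen F p m (cj m k))) := by
            rw [← h2, smul_smul, mul_right_comm, hl, one_mul])
    (by intro k; rw [map_smul, hii, smul_zero])
  have hzk : ∀ k, pb F p m z (gen F p m k) = δ (gen F p m k) := by
    intro k
    rw [pb_gen_right, hz, cj_cj, sg_cj, smul_smul, mul_neg, sg_mul_self, neg_smul, one_smul,
      neg_neg]
  refine ⟨z, (mem_Hsub (by omega)).mpr ⟨hz0, ?_⟩, hzk⟩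
  rw [← hzk, pb_gen_right, map_neg, map_smul, coeffT_top_sub_Dj hp5, smul_neg, neg_neg,
    smul_eq_mul] at hi
  exact (mul_eq_zero.mp hi).resolve_left (sg_ne_zero _)

end Criterion

/-- Lemma 6.2: a derivation `γ : H(n) → H(n)` of the Hamiltonian algebra is inner if
and only if (i) the coefficient of `x^{τ−ε_{i'}}` in `γ(x_i)` vanishes for some `i`,
(ii) the coefficient of `x^{τ−ε_{i'}}` in `γ(x^{τ−(p−1)ε_i})` vanishes for every `i`,
and (iii) the coefficient of `x_i` in `γ(x_i)` plus the coefficient of `x_{i'}` in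
`γ(x_{i'})` vanishes for some `i`. -/
theorem hamiltonian_derivation_inner_criterion
    (p m : ℕ) (hp : p.Prime) (hp5 : 5 ≤ p) (hm : 1 ≤ m)
    (F : Type*) [Field F] [IsAlgClosed F] [CharP F p]
    (γ : TruncP F p (2 * m) →ₗ[F] TruncP F p (2 * m))
    (hγ : IsDerivationOn F (Hsub F p m) (Hbr F p m) γ) :
    IsInnerOn F (Hsub F p m) (Hbr F p m) γ ↔
      ((∃ i : Fin (2 * m),
          coeffT F p (2 * m) ((fun _ => p - 1) - Pi.single (cj m i) 1)
            (γ (xpow F p (2 * m) (Pi.single i 1))) = 0)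
        ∧ (∀ i : Fin (2 * m),
            coeffT F p (2 * m) ((fun _ => p - 1) - Pi.single (cj m i) 1)
              (γ (xpow F p (2 * m) ((fun _ => p - 1) - Pi.single i (p - 1)))) = 0)
        ∧ ∃ i : Fin (2 * m),
            coeffT F p (2 * m) (Pi.single i 1)
              (γ (xpow F p (2 * m) (Pi.single i 1)))
            + coeffT F p (2 * m) (Pi.single (cj m i) 1)
                (γ (xpow F p (2 * m) (Pi.single (cj m i) 1))) = 0) := by
  classical
  have hp0 : 0 < p := by omega
  have hD := isDerMod_of_isDerivationOn hp0 hγ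
  have hgen : ∀ k, (γ ∘ₗ dropConst F p m) (gen F p m k) = γ (gen F p m k) := fun k => by
    rw [LinearMap.comp_apply, dropConst_xpow hp0 (single_one_ne_zero k)]
  have htop : ∀ i, coeffT F p (2 * m) ((fun _ => p - 1) - Pi.single (cj m i) 1)
      (γ (xpow F p (2 * m) ((fun _ => p - 1) - Pi.single i (p - 1)))) =
      - coeffT F p (2 * m) (Pi.single i (p - 1)) (γ (gen F p m (cj m i))) := by
    intro i
    have := coeff_top_eq hp5 hD i
    rwa [hgen, LinearMap.comp_apply, dropConst_xpow hp0] at this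
    intro e
    have := congrFun e (cj m i)
    simp [cj_ne i] at this
    omega
  constructor
  · rintro ⟨z, hz, hzy⟩
    have hc := inner_conditions hp5 (γ := γ) (z := z) ((mem_Hsub hp0).mp hz).2 (by
      intro k
      rw [hzy _ (xpow_mem_Hsub (single_box hp5 k) (single_one_ne_zero k) (single_ne_top hp5 k))]
      exact Hbr_sub_pb hp0 _ _)
    refine ⟨⟨⟨0, by omega⟩, (hc _).1⟩, fun i => ?_, ⟨⟨0, by omega⟩, (hc _).2.2⟩⟩
    rw [htop, (hc i).2.1, neg_zero]
  · rintro ⟨hi, hii, hiii⟩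
    obtain ⟨z, hz, hzk⟩ := exists_inner_on_gen hp5 hD
      (by simpa only [hgen] using hi)
      (by
        intro i
        have := hii i
        rw [htop, neg_eq_zero] at this
        rw [hgen, this])
      (by simpa only [hgen] using hiii)
    obtain ⟨c, hc⟩ := exists_linear hp5 (hD.sub (isDerMod_pb z)) (by
      intro k
      rw [Kills, LinearMap.sub_apply, ← hzk, sub_self]
      exact zero_mem _)
    refine ⟨z + ∑ k, c k • gen F p m k, add_mem hz (Submodule.sum_mem _ fun k _ =>
      Submodule.smul_mem _ _ (xpow_mem_Hsub (single_box hp5 k) (single_one_ne_zero k)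
        (single_ne_top hp5 k))), ?_⟩
    set w := z + ∑ k, c k • gen F p m k with hw
    -- Both sides are linear, so it is enough to compare them on monomials.
    have key : Set.EqOn γ (dropConst F p m ∘ₗ pb F p m w) (Hsub F p m) := by
      refine LinearMap.eqOn_span ?_
      rintro _ ⟨a, ha, h0, ht, rfl⟩
      have h1 := hc a ht
      rw [Kills, LinearMap.sub_apply, LinearMap.sub_apply, sub_sub, ← LinearMap.add_apply,
        ← map_add, ← hw, LinearMap.comp_apply, dropConst_xpow hp0 h0] at h1
      have h2 := sub_mem h1 (Hbr_sub_pb hp0 w (xpow F p (2 * m) a))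
      rw [sub_sub_sub_cancel_right] at h2
      rw [LinearMap.comp_apply, dropConst_pb, ← sub_eq_zero]
      refine eq_zero_of_mem_constS h2 ?_
      rw [map_sub, ((mem_Hsub hp0).mp (hγ.1 _ (xpow_mem_Hsub ha h0 ht))).1, Hbr_eq, map_sub,
        map_smul, coeffT_zero_one hp0, if_pos rfl, smul_eq_mul, mul_one, sub_self, sub_self]
    intro y hy
    exact key hy
end
end
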